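/- arXiv:2401.00531 — 6 statements merged into one kernel-verified Lean document; each statement's English description precedes it below -/
import Mathlib

section
/- Let p be a prime, let G be a group that is pseudo finite at p, and let C be a nonempty collection of nontrivial finite p-subgroups of G that is closed under G-conjugation and under passage to overgroups in G that are finite p-groups. Then the quotient of the geometric realization of the order complex of the poset C (ordered by inclusion) by the conjugation action of G is a contractible topological space. -/
open scoped Pointwise

/-- The conjugate subgroup `g⁻¹ P g`. -/
def conjSub {G : Type*} [Group G] (g : G) (P : Subgroup G) : Subgroup G :=
  P.map (MulAut.conj g⁻¹).toMonoidHom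

/-- `S` is a Sylow `p`-subgroup of the (possibly infinite) group `G`:
a finite `p`-subgroup such that every finite `p`-subgroup of `G` is conjugate
in `G` to a subgroup of `S`. -/
def IsSylow (p : ℕ) {G : Type*} [Group G] (S : Subgroup G) : Prop :=
  Finite S ∧ IsPGroup p S ∧
    ∀ Q : Subgroup G, Finite Q → IsPGroup p Q → ∃ g : G, conjSub g Q ≤ S

/-- `S` is a Sylow `p`-subgroup of the subgroup `N` of `G`:
`S` is a finite `p`-subgroup contained in `N` such that every finite `p`-subgroup
of `G` contained in `N` is conjugate by an element of `N` to a subgroup of `S`. -/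
def IsSylowIn (p : ℕ) {G : Type*} [Group G] (N S : Subgroup G) : Prop :=
  S ≤ N ∧ Finite S ∧ IsPGroup p S ∧
    ∀ Q : Subgroup G, Q ≤ N → Finite Q → IsPGroup p Q → ∃ g ∈ N, conjSub g Q ≤ S

/-- The normalizer of a chain of subgroups: the intersection of the normalizers
of the members of the chain. -/
def chainNorm {G : Type*} [Group G] {n : ℕ} (γ : Fin (n + 1) → Subgroup G) : Subgroup G :=
  ⨅ i, Subgroup.normalizer (γ i : Set G)

/-- `G` is pseudo finite at `p` if for every chain of finite `p`-subgroups of `G`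
(the trivial subgroup allowed in the chain), the normalizer of the chain has a
Sylow `p`-subgroup. -/
def PseudoFiniteAt (p : ℕ) (G : Type*) [Group G] : Prop :=
  ∀ (n : ℕ) (γ : Fin (n + 1) → Subgroup G), Monotone γ →
    (∀ i, Finite (γ i)) → (∀ i, IsPGroup p (γ i)) →
      ∃ S : Subgroup G, IsSylowIn p (chainNorm γ) S

/-- The member of the chain preceding position `i`, with the convention that the
member preceding position `0` is the trivial subgroup. -/
def chainPrev {G : Type*} [Group G] {n : ℕ} (γ : Fin (n + 1) → Subgroup G)
    (i : Fin (n + 1)) : Subgroup G :=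
  match i with
  | ⟨0, _⟩ => ⊥
  | ⟨j + 1, h⟩ => γ ⟨j, by omega⟩

/-- A strictly increasing chain `γ = (P_0 < ⋯ < P_n)` of nontrivial finite
`p`-subgroups is redundant if for every Sylow `p`-subgroup `Q` of `N_G(γ)` and
every `0 ≤ i ≤ n`, `P_i ≠ Q·P_{i-1}` (with `P_{-1} = 1`). -/
def IsRedundant (p : ℕ) {G : Type*} [Group G] {n : ℕ} (γ : Fin (n + 1) → Subgroup G) : Prop :=
  ∀ Q : Subgroup G, IsSylowIn p (chainNorm γ) Q →
    ∀ i : Fin (n + 1), (γ i : Set G) ≠ (Q : Set G) * (chainPrev γ i : Set G)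

/-- The chain obtained from `γ` by inserting the subgroup `H` immediately after
position `i`. -/
def insertChain {G : Type*} [Group G] {n : ℕ} (γ : Fin (n + 1) → Subgroup G)
    (i : Fin (n + 1)) (H : Subgroup G) : Fin (n + 2) → Subgroup G :=
  fun j =>
    if h : (j : ℕ) ≤ (i : ℕ) then γ ⟨j, by have := i.isLt; omega⟩
    else if h2 : (j : ℕ) = (i : ℕ) + 1 then H
    else γ ⟨(j : ℕ) - 1, by have := j.isLt; omega⟩

/-- The chain obtained from `σ` by deleting the member at position `i`. -/
def deleteChain {G : Type*} [Group G] {n : ℕ} (σ : Fin (n + 2) → Subgroup G)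
    (i : Fin (n + 2)) : Fin (n + 1) → Subgroup G :=
  fun j =>
    if h : (j : ℕ) < (i : ℕ) then σ ⟨j, by have := j.isLt; omega⟩
    else σ ⟨(j : ℕ) + 1, by have := j.isLt; omega⟩

open CategoryTheory

/-- The conjugation action of `g ∈ G` on a collection `C` of subgroups of `G`
that is closed under conjugation: `P ↦ g⁻¹Pg`. -/
def conjFun {G : Type} [Group G] (C : Set (Subgroup G))
    (hconj : ∀ P ∈ C, ∀ g : G, conjSub g P ∈ C) (g : G) : C → C :=
  fun P => ⟨conjSub g P.1, hconj P.1 P.2 g⟩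

/-- Conjugation is inclusion preserving, hence a map of posets. -/
lemma conjFun_monotone {G : Type} [Group G] (C : Set (Subgroup G))
    (hconj : ∀ P ∈ C, ∀ g : G, conjSub g P ∈ C) (g : G) :
    Monotone (conjFun C hconj g) := by
  intro P Q h
  exact Subgroup.map_mono h

namespace OrbC
open scoped Pointwise unitInterval

lemma map_succAbove_apply {n : ℕ} (j : Fin (n+2)) (x : stdSimplex ℝ (Fin (n+1))) (k : Fin (n+1)) :
    stdSimplex.map j.succAbove x (j.succAbove k) = x k := by
  rw [stdSimplex.map_coe, FunOnFinite.linearMap_apply_apply]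
  simp [Finset.sum_filter]

lemma map_succAbove_self {n : ℕ} (j : Fin (n+2)) (x : stdSimplex ℝ (Fin (n+1))) :
    stdSimplex.map j.succAbove x j = 0 := by
  rw [stdSimplex.map_coe, FunOnFinite.linearMap_apply_apply]
  simp

lemma exists_face {n : ℕ} (j : Fin (n+2)) (z : stdSimplex ℝ (Fin (n+2))) (hz : z j = 0) :
    ∃ x : stdSimplex ℝ (Fin (n+1)), stdSimplex.map j.succAbove x = z := by
  refine ⟨⟨fun k => z (j.succAbove k), fun k => z.2.1 _, ?_⟩, ?_⟩
  · have := stdSimplex.sum_eq_one z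
    rw [Fin.sum_univ_succAbove _ j, hz, zero_add] at this
    exact this
  · apply stdSimplex.ext
    funext k
    rcases Fin.eq_self_or_eq_succAbove j k with rfl | ⟨k, rfl⟩
    · rw [map_succAbove_self, hz]
    · rw [map_succAbove_apply]; rfl

/-- coordinate horn -/
abbrev HornSet {n : ℕ} (i : Fin (n+2)) : Type :=
  {z : stdSimplex ℝ (Fin (n+2)) // ∃ j, j ≠ i ∧ z j = 0}

noncomputable def hornCover {n : ℕ} (i : Fin (n+2))
    (t : Σ _j : {j : Fin (n+2) // j ≠ i}, stdSimplex ℝ (Fin (n+1))) : HornSet i :=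
  ⟨stdSimplex.map t.1.1.succAbove t.2, t.1.1, t.1.2, map_succAbove_self t.1.1 t.2⟩

lemma continuous_hornCover {n : ℕ} (i : Fin (n+2)) : Continuous (hornCover i) := by
  rw [continuous_sigma_iff]
  intro j
  rw [continuous_induced_rng]
  exact stdSimplex.continuous_map (S := ℝ) j.1.succAbove

lemma glue_horn {n : ℕ} (i : Fin (n+2)) {E : Type*} [TopologicalSpace E]
    (e : ∀ j, j ≠ i → C(stdSimplex ℝ (Fin (n+1)), E))
    (hc : ∀ j k hj hk x y, stdSimplex.map j.succAbove x = stdSimplex.map k.succAbove y →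
      e j hj x = e k hk y) :
    ∃ ψ : C(HornSet i, E), ∀ j (hj : j ≠ i) x (hx),
      ψ ⟨stdSimplex.map j.succAbove x, hx⟩ = e j hj x := by
  let T := Σ _j : {j : Fin (n+2) // j ≠ i}, stdSimplex ℝ (Fin (n+1))
  let q : C(T, HornSet i) := ⟨hornCover i, continuous_hornCover i⟩
  have hs : Function.Surjective q := by
    rintro ⟨z, j, hj, hz⟩
    obtain ⟨x, hx⟩ := exists_face j z hz
    exact ⟨⟨⟨j, hj⟩, x⟩, Subtype.ext hx⟩
  have hq : Topology.IsQuotientMap q := Topology.IsQuotientMap.of_surjective_continuous hs q.continuous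
  let g : C(T, E) := ⟨fun t => e t.1.1 t.1.2 t.2, by
    refine continuous_sigma fun j => ?_
    exact (e j.1 j.2).continuous⟩
  have hf : Function.FactorsThrough g q := by
    intro a b hab
    exact hc _ _ _ _ _ _ (congrArg Subtype.val hab)
  refine ⟨hq.lift g hf, fun j hj x hx => ?_⟩
  have := DFunLike.congr_fun (hq.lift_comp g hf) (⟨⟨j, hj⟩, x⟩ : T)
  exact this

noncomputable def mn {n : ℕ} (i : Fin (n+2)) (x : stdSimplex ℝ (Fin (n+2))) : ℝ :=
  (Finset.univ.erase i).inf' (by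
    obtain ⟨j, hj⟩ := exists_ne i
    exact ⟨j, by simpa using hj⟩) (fun j => x j)

lemma continuous_coord {n : ℕ} (j : Fin n) :
    Continuous (fun x : stdSimplex ℝ (Fin n) => x j) :=
  (continuous_apply j).comp continuous_subtype_val

lemma mn_continuous {n : ℕ} (i : Fin (n+2)) : Continuous (mn i) := by
  unfold mn
  exact Continuous.finset_inf'_apply _ (fun j _ => continuous_coord j)

lemma mn_le {n : ℕ} (i j : Fin (n+2)) (h : j ≠ i) (x) : mn i x ≤ x j :=
  Finset.inf'_le _ (by simpa using h)

lemma mn_nonneg {n : ℕ} (i : Fin (n+2)) (x) : 0 ≤ mn i x := by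
  unfold mn
  simp

lemma mn_le_one {n : ℕ} (i : Fin (n+2)) (x) : mn i x ≤ 1 := by
  obtain ⟨j, hj⟩ := exists_ne i
  exact (mn_le i j hj x).trans (stdSimplex.le_one _ _)

lemma mn_attained {n : ℕ} (i : Fin (n+2)) (x) : ∃ j, j ≠ i ∧ x j = mn i x := by
  obtain ⟨j, hj, h⟩ := Finset.exists_mem_eq_inf' (s := Finset.univ.erase i) (by
    obtain ⟨j, hj⟩ := exists_ne i
    exact ⟨j, by simpa using hj⟩) (fun j => x j)
  exact ⟨j, by simpa using hj, h.symm⟩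

/-- shift towards the horn -/
noncomputable def shift {n : ℕ} (i : Fin (n+2)) (x : stdSimplex ℝ (Fin (n+2))) (s : ℝ)
    (hs0 : 0 ≤ s) (hs : s ≤ mn i x) : stdSimplex ℝ (Fin (n+2)) :=
  ⟨fun j => if j = i then x i + (n+1) * s else x j - s, by
    intro j
    dsimp only
    split_ifs with h
    · have := stdSimplex.zero_le x i
      positivity
    · have := mn_le i j h x
      linarith, by
    rw [Fin.sum_univ_succAbove _ i]
    have := stdSimplex.sum_eq_one x
    rw [Fin.sum_univ_succAbove _ i] at this
    simp
    linarith⟩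

theorem topo_fill (n : ℕ) (i : Fin (n+2)) {Y : Type*} [TopologicalSpace Y] (y0 : Y)
    (u : C(stdSimplex ℝ (Fin (n+2)), Y))
    (e : ∀ j, j ≠ i → C(stdSimplex ℝ (Fin (n+1)), {γ : C(I, Y) // γ 1 = y0}))
    (hu : ∀ j hj x, (e j hj x).1 0 = u (stdSimplex.map j.succAbove x))
    (hc : ∀ j k hj hk x y, stdSimplex.map j.succAbove x = stdSimplex.map k.succAbove y →
      e j hj x = e k hk y) :
    ∃ w : C(stdSimplex ℝ (Fin (n+2)), {γ : C(I, Y) // γ 1 = y0}),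
      (∀ j hj x, w (stdSimplex.map j.succAbove x) = e j hj x) ∧ ∀ x, (w x).1 0 = u x := by
  obtain ⟨ψ, hψ⟩ := glue_horn i e hc
  have hψu : ∀ z : HornSet i, (ψ z).1 0 = u z.1 := by
    rintro ⟨z, j, hj, hz⟩
    obtain ⟨x, rfl⟩ := exists_face j z hz
    rw [hψ j hj, hu]
  let r : stdSimplex ℝ (Fin (n+2)) → HornSet i := fun x =>
    ⟨shift i x (mn i x) (mn_nonneg i x) le_rfl, by
      obtain ⟨j, hj, h⟩ := mn_attained i x
      refine ⟨j, hj, ?_⟩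
      change (if j = i then _ else _) = _
      rw [if_neg hj, h, sub_self]⟩
  have hcs : Continuous (fun q : stdSimplex ℝ (Fin (n+2)) × I =>
      shift i q.1 (min (2 * (q.2 : ℝ)) (mn i q.1)) (by
        have := q.2.2.1
        exact le_min (by positivity) (mn_nonneg _ _)) (min_le_right _ _)) := by
    refine Continuous.subtype_mk (continuous_pi fun j => ?_) _
    have h1 := (mn_continuous i)
    have h2 := continuous_coord (n := n+2) j
    have h3 := continuous_coord (n := n+2) i
    have h4 : Continuous fun q : stdSimplex ℝ (Fin (n+2)) × I =>
        min (2 * (q.2 : ℝ)) (mn i q.1) :=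
      Continuous.min (by fun_prop) (h1.comp continuous_fst)
    by_cases h : j = i
    · simp only [h, if_true]
      exact (h3.comp continuous_fst).add (continuous_const.mul h4)
    · simp only [h, if_false]
      exact (h2.comp continuous_fst).sub h4
  have hr : Continuous r := by
    refine Continuous.subtype_mk ?_ _
    refine Continuous.subtype_mk (continuous_pi fun j => ?_) _
    have h1 := (mn_continuous i)
    have h2 := continuous_coord (n := n+2) j
    have h3 := continuous_coord (n := n+2) i
    by_cases h : j = i
    · simp only [h, if_true]
      exact h3.add (continuous_const.mul h1)
    · simp only [h, if_false]
      exact h2.sub h1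
  let τ : stdSimplex ℝ (Fin (n+2)) × I → I := fun q =>
    Set.projIcc 0 1 zero_le_one (((q.2 : ℝ) - mn i q.1 / 2) / (1 - mn i q.1 / 2))
  have hτ : Continuous τ := by
    refine continuous_projIcc.comp ?_
    have h1 := (mn_continuous i)
    refine Continuous.div (by fun_prop) (by fun_prop) ?_
    intro q
    have := mn_le_one i q.1
    linarith
  let K : stdSimplex ℝ (Fin (n+2)) × I → Y := fun q =>
    if (q.2 : ℝ) ≤ mn i q.1 / 2 then
      u (shift i q.1 (min (2 * (q.2 : ℝ)) (mn i q.1)) (by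
        have := q.2.2.1
        exact le_min (by positivity) (mn_nonneg _ _)) (min_le_right _ _))
    else (ψ (r q.1)).1 (τ q)
  have hK : Continuous K := by
    refine Continuous.if_le (u.continuous.comp hcs) ?_ (by fun_prop)
      ((mn_continuous i).comp continuous_fst |>.div_const 2) ?_
    · have h1 : Continuous fun q : stdSimplex ℝ (Fin (n+2)) × I => (ψ (r q.1)).1 := by fun_prop
      fun_prop
    · intro q hq
      have h0 : τ q = 0 := by
        simp only [τ, hq, sub_self, zero_div]
        simp
      rw [h0, hψu]
      congr 1
      apply Subtype.ext
      have : min (2 * (q.2 : ℝ)) (mn i q.1) = mn i q.1 := by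
        rw [hq]; rw [mul_div_cancel₀ _ two_ne_zero, min_self]
      simp only [shift, r, this]
  have hK1 : ∀ x, K (x, 1) = y0 := by
    intro x
    have h := mn_le_one i x
    have h' : ¬ (((1 : I) : ℝ) ≤ mn i x / 2) := by
      simp; linarith
    simp only [K, if_neg h']
    have : τ (x, 1) = 1 := by
      simp only [τ]
      rw [show (((1:I) : ℝ) - mn i x / 2) / (1 - mn i x / 2) = 1 from div_self (by linarith)]
      simp
    rw [this]
    exact (ψ (r x)).2
  let w0 : C(stdSimplex ℝ (Fin (n+2)), C(I, Y)) := ContinuousMap.curry ⟨K, hK⟩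
  refine ⟨⟨fun x => ⟨w0 x, hK1 x⟩, Continuous.subtype_mk w0.continuous _⟩, ?_, ?_⟩
  · intro j hj x
    apply Subtype.ext
    ext t
    change K (stdSimplex.map j.succAbove x, t) = _
    set z := stdSimplex.map j.succAbove x with hz
    have hm : mn i z = 0 := le_antisymm ((mn_le i j hj z).trans (map_succAbove_self j x).le)
      (mn_nonneg i z)
    have hsh : ∀ s h0 h1, shift i z s h0 h1 = z := by
      intro s h0 h1
      have : s = 0 := le_antisymm (h1.trans hm.le) h0
      apply stdSimplex.ext
      funext k
      change (if k = i then _ else _) = _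
      split_ifs with h
      · rw [this, h]; simp
      · rw [this]; simp
    have hrz : r z = ⟨z, j, hj, map_succAbove_self j x⟩ := Subtype.ext (hsh _ (mn_nonneg i z) le_rfl)
    simp only [K]
    split_ifs with h
    · rw [hsh]
      rw [hm] at h
      have : t = 0 := Subtype.ext (le_antisymm (by simpa using h) t.2.1)
      rw [this, hu]
    · rw [hrz, hψ j hj]
      congr 1
      simp only [τ, hm]
      simp
  · intro x
    change K (x, 0) = _
    have : ((0:I):ℝ) ≤ mn i x / 2 := by
      have := mn_nonneg i x
      simpa using by linarith
    simp only [K, if_pos this]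
    congr 1
    apply stdSimplex.ext
    funext k
    have h0 : min (2 * ((0:I):ℝ)) (mn i x) = 0 := by
      simp [mn_nonneg]
    change (if k = i then _ else _) = _
    rw [h0]
    split_ifs with h
    · rw [h]; simp
    · simp

end OrbC

namespace OrbC
open scoped Pointwise unitInterval Simplicial

lemma sing_map (X : TopCat.{0}) {n m : SimplexCategory} (f : n ⟶ m)
    (s : (TopCat.toSSet.obj X).obj (.op m)) (x) :
    X.toSSetObjEquiv _ ((TopCat.toSSet.obj X).map f.op s) x =
      X.toSSetObjEquiv _ s (stdSimplex.map f x) := rfl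

lemma sing_naturality {X Y : TopCat.{0}} (f : X ⟶ Y) {n : SimplexCategoryᵒᵖ}
    (s : (TopCat.toSSet.obj X).obj n) (x) :
    Y.toSSetObjEquiv _ ((TopCat.toSSet.map f).app n s) x = f (X.toSSetObjEquiv _ s x) := rfl

lemma map_succAbove_injective {n : ℕ} (j : Fin (n+2)) :
    Function.Injective (stdSimplex.map (S := ℝ) (j.succAbove)) := by
  intro x y h
  apply stdSimplex.ext
  funext k
  rw [← map_succAbove_apply j x, h, map_succAbove_apply]

/-- Path space. -/
abbrev PathTo (Y : Type) [TopologicalSpace Y] (y0 : Y) : Type := {γ : C(I, Y) // γ 1 = y0}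

def ev0 (Y : Type) [TopologicalSpace Y] (y0 : Y) : TopCat.of (PathTo Y y0) ⟶ TopCat.of Y :=
  TopCat.ofHom ⟨fun γ => γ.1 0, by fun_prop⟩

lemma horn_compat_aux {m : ℕ} (i : Fin (m+3)) (E : TopCat.{0})
    (Φ : (Λ[m+2, i] : SSet.{0}) ⟶ TopCat.toSSet.obj E)
    (a b : Fin (m+2)) (hab : a ≤ b) (ha : a.castSucc ≠ i) (hb : b.succ ≠ i) 
    (x y : stdSimplex ℝ (Fin (m+2))) 
    (h : stdSimplex.map a.castSucc.succAbove x = stdSimplex.map b.succ.succAbove y) :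
    E.toSSetObjEquiv _ (Φ.app _ (SSet.horn.face i a.castSucc ha)) x =
    E.toSSetObjEquiv _ (Φ.app _ (SSet.horn.face i b.succ hb)) y := by
  have hs : ∀ t : Fin (m+1), a.castSucc.succAbove (b.succAbove t) = 
      b.succ.succAbove (a.succAbove t) := by
    intro t
    have := SimplexCategory.δ_comp_δ hab
    exact (congrArg (fun f => f.toOrderHom t) this).symm
  have hx : x b = 0 := by
    have h1 : a.castSucc.succAbove b = b.succ := Fin.succAbove_of_le_castSucc _ _ (by simpa using hab)
    rw [← map_succAbove_apply a.castSucc x, h1, h, map_succAbove_self]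
  obtain ⟨x', rfl⟩ := exists_face b x hx
  have hy : y = stdSimplex.map a.succAbove x' := by
    apply map_succAbove_injective b.succ
    rw [← h, stdSimplex.map_comp_apply, stdSimplex.map_comp_apply]
    have : a.castSucc.succAbove ∘ b.succAbove = b.succ.succAbove ∘ a.succAbove := funext hs
    rw [this]
  subst hy
  have e1 := sing_map E (SimplexCategory.δ b) (Φ.app _ (SSet.horn.face i a.castSucc ha)) x'
  have e2 := sing_map E (SimplexCategory.δ a) (Φ.app _ (SSet.horn.face i b.succ hb)) x'
  refine e1.symm.trans (Eq.trans ?_ e2)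
  congr 2
  rw [← NatTrans.naturality_apply, ← NatTrans.naturality_apply]
  congr 1
  apply Subtype.ext
  apply SSet.stdSimplex.objEquiv.injective
  exact (SimplexCategory.δ_comp_δ hab).symm

lemma horn_compat {n : ℕ} (i : Fin (n+2)) (E : TopCat.{0})
    (Φ : (Λ[n+1, i] : SSet.{0}) ⟶ TopCat.toSSet.obj E)
    (j k : Fin (n+2)) (hj : j ≠ i) (hk : k ≠ i)
    (x y : stdSimplex ℝ (Fin (n+1))) 
    (h : stdSimplex.map j.succAbove x = stdSimplex.map k.succAbove y) :
    E.toSSetObjEquiv _ (Φ.app _ (SSet.horn.face i j hj)) x =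
    E.toSSetObjEquiv _ (Φ.app _ (SSet.horn.face i k hk)) y := by
  wlog hjk : j ≤ k generalizing j k x y
  · exact (this k j hk hj y x h.symm (le_of_not_ge hjk)).symm
  rcases hjk.eq_or_lt with rfl | hjk
  · rw [map_succAbove_injective _ h]
  obtain _ | m := n
  · omega
  obtain ⟨a, rfl⟩ : ∃ a : Fin (m+2), a.castSucc = j :=
    ⟨⟨j.1, by have := k.2; have : j.1 < k.1 := hjk; omega⟩, rfl⟩
  obtain ⟨b, rfl⟩ : ∃ b : Fin (m+2), b.succ = k :=
    ⟨⟨k.1 - 1, by have := k.2; omega⟩, Fin.ext (by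
      have : a.1 < k.1 := hjk
      simp; omega)⟩
  exact horn_compat_aux i E Φ a b (Nat.lt_succ_iff.1 hjk) hj hk x y h

open SSet.modelCategoryQuillen in
theorem ev0_fib (V : Type) [TopologicalSpace V] (y0 : V) :
    J.rlp (TopCat.toSSet.map (ev0 V y0)) := by
  intro A B f hf
  simp only [J, MorphismProperty.iSup_iff] at hf
  obtain ⟨n, ⟨i⟩⟩ := hf
  refine ⟨fun {Φ u} sq => ?_⟩
  let u' := (TopCat.of V).toSSetObjEquiv _ (SSet.yonedaEquiv u)
  let e : ∀ j, j ≠ i → C(stdSimplex ℝ (Fin (n+1)), PathTo V y0) := fun j hj => 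
    (TopCat.of (PathTo V y0)).toSSetObjEquiv _ (Φ.app _ (SSet.horn.face i j hj))
  obtain ⟨w, hw1, hw2⟩ := topo_fill n i y0 u' e (by
    intro j hj x
    have h1 := sing_naturality (ev0 V y0) (Φ.app _ (SSet.horn.face i j hj)) x
    refine h1.symm.trans ?_
    have h2 := congrArg (fun F => F.app _ (SSet.horn.face i j hj)) sq.w
    have h3 : u.app _ (Λ[n+1,i].ι.app _ (SSet.horn.face i j hj)) = 
       (TopCat.toSSet.obj (TopCat.of V)).map (SimplexCategory.δ j).op (SSet.yonedaEquiv u) := by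
      change _ = (TopCat.toSSet.obj (TopCat.of V)).map (SimplexCategory.δ j).op
        (u.app _ (SSet.yonedaEquiv (𝟙 _)))
      rw [← NatTrans.naturality_apply]
      congr 1
    refine (congrArg (fun s => (TopCat.of V).toSSetObjEquiv _ s x) (h2.trans h3)).trans ?_
    exact sing_map _ (SimplexCategory.δ j) _ x)
    (fun j k hj hk x y h => horn_compat i (TopCat.of (PathTo V y0)) Φ j k hj hk x y h)
  let W : (TopCat.toSSet.obj (TopCat.of (PathTo V y0))).obj (.op ⦋n+1⦌) :=
    ((TopCat.of (PathTo V y0)).toSSetObjEquiv (.op ⦋n+1⦌)).symm w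
  refine ⟨⟨⟨SSet.yonedaEquiv.symm W, ?_, ?_⟩⟩⟩
  · apply SSet.horn.hom_ext
    intro j hj
    apply ((TopCat.of (PathTo V y0)).toSSetObjEquiv _).injective
    ext1 x
    exact (hw1 j hj x)
  · apply SSet.yonedaEquiv.injective
    apply ((TopCat.of V).toSSetObjEquiv _).injective
    ext1 x
    have h4 : SSet.yonedaEquiv (SSet.yonedaEquiv.symm W ≫ TopCat.toSSet.map (ev0 V y0)) =
        (TopCat.toSSet.map (ev0 V y0)).app _ W := by
      rw [SSet.yonedaEquiv_comp, Equiv.apply_symm_apply]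
    rw [h4]
    exact hw2 x

end OrbC

namespace OrbC
open scoped Pointwise unitInterval Simplicial

/-- descend a morphism along a levelwise surjection -/
lemma exists_desc {X Z T : SSet.{0}} (π : X ⟶ Z)
    (hs : ∀ n, Function.Surjective (π.app n)) (f : X ⟶ T)
    (hf : ∀ n (x y : X.obj n), π.app n x = π.app n y → f.app n x = f.app n y) :
    ∃ a : Z ⟶ T, π ≫ a = f := by
  have key : ∀ n x, f.app n (Function.surjInv (hs n) (π.app n x)) = f.app n x := fun n x =>
    hf n _ _ (Function.surjInv_eq (hs n) _)
  refine ⟨{ app := fun n => ↾fun z => f.app n (Function.surjInv (hs n) z), naturality := ?_ }, ?_⟩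
  · intro n m φ
    ext z
    obtain ⟨x, rfl⟩ := hs n z
    change f.app m (Function.surjInv (hs m) (Z.map φ (π.app n x))) =
      T.map φ (f.app n (Function.surjInv (hs n) (π.app n x)))
    rw [key, ← NatTrans.naturality_apply, key, NatTrans.naturality_apply]
  · ext n x
    exact key n x

theorem quot_contractible {Γ : Type} (X Z : SSet.{0}) (c : Γ → (X ⟶ X)) (π : X ⟶ Z)
    (hs : ∀ n, Function.Surjective (π.app n))
    (hc : ∀ g, c g ≫ π = π)
    (hπ : ∀ n (x y : X.obj n), π.app n x = π.app n y → ∃ g, (c g).app n x = y)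
    (v : Z.obj (.op ⦋0⦌))
    (hA : SSet.anodyneExtensions (SSet.Subcomplex.ofSimplex v).ι) :
    ContractibleSpace (Quot (fun x y : SSet.toTop.obj X => ∃ g, SSet.toTop.map (c g) x = y)) := by
  set r := (fun x y : SSet.toTop.obj X => ∃ g, SSet.toTop.map (c g) x = y) with hr
  let q : SSet.toTop.obj X ⟶ TopCat.of (Quot r) := TopCat.ofHom ⟨Quot.mk r, continuous_quot_mk⟩
  have hq : ∀ g, SSet.toTop.map (c g) ≫ q = q := by
    intro g
    ext x
    exact (Quot.sound ⟨g, rfl⟩).symm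
  let f : X ⟶ TopCat.toSSet.obj (TopCat.of (Quot r)) := sSetTopAdj.homEquiv _ _ q
  have hf : ∀ g, c g ≫ f = f := by
    intro g
    rw [← sSetTopAdj.homEquiv_naturality_left, hq]
  obtain ⟨a, ha⟩ := exists_desc π hs f (by
    intro n x y h
    obtain ⟨g, rfl⟩ := hπ n x y h
    exact congrArg (fun F => F.app n x) (hf g).symm)
  let y0 : Quot r := TopCat.toSSetObj₀Equiv (a.app _ v)
  let E := TopCat.of (PathTo (Quot r) y0)
  let e0 : E := ⟨ContinuousMap.const _ y0, rfl⟩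
  let t : (SSet.Subcomplex.ofSimplex v : SSet.{0}) ⟶ TopCat.toSSet.obj E :=
    SSet.const (TopCat.toSSetObj₀Equiv.symm e0)
  have hlift : HasLiftingProperty (SSet.Subcomplex.ofSimplex v).ι
      (TopCat.toSSet.map (ev0 (Quot r) y0)) := hA _ (ev0_fib _ _)
  have sq : CommSq t (SSet.Subcomplex.ofSimplex v).ι (TopCat.toSSet.map (ev0 (Quot r) y0)) a := by
    constructor
    ext n ⟨x, φ, hx⟩
    have hx' : x = Z.map φ v := hx.symm
    subst hx'
    change _ = a.app n (Z.map φ v)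
    rw [NatTrans.naturality_apply]
    change (TopCat.toSSet.map (ev0 (Quot r) y0)).app n
      ((TopCat.toSSet.obj E).map _ (TopCat.toSSetObj₀Equiv.symm e0)) = _
    rw [NatTrans.naturality_apply]
    have h1 : (n.unop.const ⦋0⦌ 0).op = φ := Quiver.Hom.unop_inj (Subsingleton.elim _ _)
    rw [h1]
    congr 1
    apply TopCat.toSSetObj₀Equiv.injective
    rfl
  let L := sq.lift
  let ℓ : SSet.toTop.obj X ⟶ E := (sSetTopAdj.homEquiv _ _).symm (π ≫ L)
  have hℓ : ∀ g, SSet.toTop.map (c g) ≫ ℓ = ℓ := by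
    intro g
    rw [← sSetTopAdj.homEquiv_naturality_left_symm, ← Category.assoc, hc]
  have hℓ0 : ℓ ≫ ev0 (Quot r) y0 = q := by
    rw [← sSetTopAdj.homEquiv_naturality_right_symm, Category.assoc, sq.fac_right, ha,
      Equiv.symm_apply_apply]
  let s : Quot r → PathTo (Quot r) y0 := Quot.lift ℓ (by
    rintro x y ⟨g, rfl⟩
    exact congrArg (fun F => F x) (hℓ g).symm)
  have hsc : Continuous s := continuous_quot_lift _ (ConcreteCategory.hom ℓ).continuous
  have hs0 : ∀ y, (s y).1 0 = y := by
    rintro ⟨x⟩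
    exact congrArg (fun F => F x) hℓ0
  rw [contractible_iff_id_nullhomotopic]
  refine ⟨y0, ⟨⟨⟨fun z => (s z.2).1 z.1, ?_⟩, ?_, ?_⟩⟩⟩
  · have : Continuous fun z : I × Quot r => (s z.2).1 :=
      continuous_subtype_val.comp (hsc.comp continuous_snd)
    fun_prop
  · intro x
    exact hs0 x
  · intro x
    exact (s x).2

end OrbC

namespace OrbC
open scoped Pointwise
section grp
variable {G : Type} [Group G]

lemma mem_conjSub {g x : G} {P : Subgroup G} : x ∈ conjSub g P ↔ g * x * g⁻¹ ∈ P := by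
  constructor
  · rintro ⟨y, hy, rfl⟩
    have : g * (g⁻¹ * y * g⁻¹⁻¹) * g⁻¹ = y := by group
    change g * (g⁻¹ * y * g⁻¹⁻¹) * g⁻¹ ∈ P
    rw [this]; exact hy
  · intro h
    exact ⟨_, h, by simp [MulAut.conj_apply]; group⟩

lemma conjSub_one (P : Subgroup G) : conjSub 1 P = P := by
  ext x; simp [mem_conjSub]

lemma conjSub_conjSub (g h : G) (P : Subgroup G) : conjSub h (conjSub g P) = conjSub (g * h) P := by
  ext x; simp [mem_conjSub, mul_assoc]

lemma conjSub_inv_cancel (g : G) (P : Subgroup G) : conjSub g⁻¹ (conjSub g P) = P := by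
  rw [conjSub_conjSub, mul_inv_cancel, conjSub_one]

lemma conjSub_cancel_inv (g : G) (P : Subgroup G) : conjSub g (conjSub g⁻¹ P) = P := by
  rw [conjSub_conjSub, inv_mul_cancel, conjSub_one]

lemma conjSub_mono (g : G) {P Q : Subgroup G} (h : P ≤ Q) : conjSub g P ≤ conjSub g Q :=
  Subgroup.map_mono h

lemma conjSub_le_iff (g : G) {P Q : Subgroup G} : conjSub g P ≤ conjSub g Q ↔ P ≤ Q :=
  ⟨fun h => by simpa [conjSub_inv_cancel] using conjSub_mono g⁻¹ h, conjSub_mono g⟩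

lemma conjSub_inj (g : G) {P Q : Subgroup G} (h : conjSub g P = conjSub g Q) : P = Q :=
  le_antisymm ((conjSub_le_iff g).1 h.le) ((conjSub_le_iff g).1 h.ge)

lemma conjSub_lt_iff (g : G) {P Q : Subgroup G} : conjSub g P < conjSub g Q ↔ P < Q := by
  rw [lt_iff_le_not_ge, lt_iff_le_not_ge, conjSub_le_iff, conjSub_le_iff]

lemma conjSub_sup (g : G) (P Q : Subgroup G) : conjSub g (P ⊔ Q) = conjSub g P ⊔ conjSub g Q :=
  Subgroup.map_sup _ _ _

noncomputable def conjEquiv (g : G) (P : Subgroup G) : P ≃* conjSub g P :=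
  P.equivMapOfInjective _ (MulAut.conj g⁻¹).injective

lemma conjSub_card (g : G) (P : Subgroup G) : Nat.card (conjSub g P) = Nat.card P :=
  (Nat.card_congr (conjEquiv g P).toEquiv).symm

lemma conjSub_finite (g : G) {P : Subgroup G} (h : Finite P) : Finite (conjSub g P) :=
  Finite.of_equiv P (conjEquiv g P).toEquiv

lemma conjSub_pg {p : ℕ} (g : G) {P : Subgroup G} (h : IsPGroup p P) : IsPGroup p (conjSub g P) :=
  h.of_equiv (conjEquiv g P)

lemma mem_normalizer {g : G} {P : Subgroup G} :
    g ∈ Subgroup.normalizer (P : Set G) ↔ conjSub g P = P := by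
  rw [Subgroup.mem_normalizer_iff, SetLike.ext_iff]
  simp only [mem_conjSub, SetLike.mem_coe]
  exact forall_congr' fun h => Iff.comm

lemma mem_chainNorm {n : ℕ} {f : Fin (n+1) → Subgroup G} {g : G} :
    g ∈ chainNorm f ↔ ∀ i, conjSub g (f i) = f i := by
  simp [chainNorm, Subgroup.mem_iInf, mem_normalizer]

lemma conj_chainNorm {n : ℕ} (f : Fin (n+1) → Subgroup G) (g : G) :
    conjSub g (chainNorm f) = chainNorm (fun i => conjSub g (f i)) := by
  ext x
  rw [mem_conjSub, mem_chainNorm, mem_chainNorm]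
  refine forall_congr' fun i => ?_
  rw [conjSub_conjSub]
  constructor
  · intro h
    have := congrArg (conjSub g) h
    rw [conjSub_conjSub] at this
    rw [← this]; congr 1; group
  · intro h
    have := congrArg (conjSub g⁻¹) h
    rw [conjSub_conjSub, conjSub_inv_cancel] at this
    exact this

lemma conj_self {N : Subgroup G} {g : G} (hg : g ∈ N) : conjSub g N = N := by
  ext x
  rw [mem_conjSub]
  rw [Subgroup.mul_mem_cancel_right _ (N.inv_mem hg), Subgroup.mul_mem_cancel_left _ hg]

variable {p : ℕ}

lemma syl_conj {N S : Subgroup G} (h : IsSylowIn p N S) (g : G) :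
    IsSylowIn p (conjSub g N) (conjSub g S) := by
  obtain ⟨h1, h2, h3, h4⟩ := h
  refine ⟨conjSub_mono g h1, conjSub_finite g h2, conjSub_pg g h3, fun Q hQ hf hpg => ?_⟩
  obtain ⟨x, hx, hxQ⟩ := h4 (conjSub g⁻¹ Q) (by
    have := conjSub_mono g⁻¹ hQ
    rwa [conjSub_inv_cancel] at this) (conjSub_finite _ hf) (conjSub_pg _ hpg)
  refine ⟨g⁻¹ * x * g, ?_, ?_⟩
  · rw [mem_conjSub]; convert hx using 1; group
  · rw [conjSub_conjSub] at hxQ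
    have := conjSub_mono g hxQ
    rwa [conjSub_conjSub] at this

lemma syl_card_le {N S T : Subgroup G} (h : IsSylowIn p N S) (hT : T ≤ N) (hf : Finite T)
    (hpg : IsPGroup p T) : Nat.card T ≤ Nat.card S := by
  obtain ⟨g, -, hg⟩ := h.2.2.2 T hT hf hpg
  have := h.2.1
  rw [← conjSub_card g T]
  exact Subgroup.card_le_of_le hg

lemma eq_of_le_card {A B : Subgroup G} [Finite B] (h : A ≤ B) (hc : Nat.card B ≤ Nat.card A) :
    A = B := Subgroup.eq_of_le_of_card_ge h hc

lemma syl_conj_eq {N S T : Subgroup G} (h : IsSylowIn p N S) (hT : T ≤ N) (hf : Finite T)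
    (hpg : IsPGroup p T) (hc : Nat.card S ≤ Nat.card T) : ∃ g ∈ N, conjSub g T = S := by
  obtain ⟨g, hgN, hg⟩ := h.2.2.2 T hT hf hpg
  have := h.2.1
  refine ⟨g, hgN, eq_of_le_card hg ?_⟩
  rwa [conjSub_card]

lemma syl_of_card {N S T : Subgroup G} (h : IsSylowIn p N S) (hT : T ≤ N) (hf : Finite T)
    (hpg : IsPGroup p T) (hc : Nat.card S ≤ Nat.card T) : IsSylowIn p N T := by
  obtain ⟨g, hgN, rfl⟩ := syl_conj_eq h hT hf hpg hc
  have := syl_conj h g⁻¹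
  rwa [conj_self (N.inv_mem hgN), conjSub_inv_cancel] at this

lemma syl_syl {N S T : Subgroup G} (h : IsSylowIn p N S) (hT : IsSylowIn p N T) :
    ∃ g ∈ N, conjSub g T = S :=
  syl_conj_eq h hT.1 hT.2.1 hT.2.2.1 (syl_card_le hT h.1 h.2.1 h.2.2.1)

/-- the normalizer grows -/
lemma grow (hp : p.Prime) {Q R : Subgroup G} (hf : Finite R) (hpg : IsPGroup p R) (h : Q < R) :
    ∃ x ∈ R, x ∉ Q ∧ x ∈ Subgroup.normalizer (Q : Set G) := by
  have : Fact p.Prime := ⟨hp⟩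
  have := hpg.isNilpotent
  have hlt : Q.subgroupOf R < ⊤ := by
    rw [lt_top_iff_ne_top, ne_eq, Subgroup.subgroupOf_eq_top]
    exact h.not_ge
  have h2 := Group.normalizerCondition_of_isNilpotent (Q.subgroupOf R) hlt
  obtain ⟨x, hx, hxn⟩ := SetLike.exists_of_lt h2
  refine ⟨x.1, x.2, fun hq => hxn (by simpa [Subgroup.mem_subgroupOf] using hq), ?_⟩
  rw [Subgroup.mem_normalizer_iff] at hx ⊢
  intro y
  constructor
  · intro hy
    have := (hx ⟨y, h.le hy⟩).1 (by simpa [Subgroup.mem_subgroupOf] using hy)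
    simpa [Subgroup.mem_subgroupOf] using this
  · intro hy
    have hyR : y ∈ R := by
      have := h.le hy
      rwa [Subgroup.mul_mem_cancel_right _ (R.inv_mem x.2),
        Subgroup.mul_mem_cancel_left _ x.2] at this
    have := (hx ⟨y, hyR⟩).2 (by simpa [Subgroup.mem_subgroupOf] using hy)
    simpa [Subgroup.mem_subgroupOf] using this

lemma syl_crit (hp : p.Prime) {N Q : Subgroup G} (hex : ∃ S, IsSylowIn p N S)
    (hQ : Q ≤ N) (hf : Finite Q) (hpg : IsPGroup p Q)
    (h : ∀ T ≤ N, Finite T → IsPGroup p T → Q ≤ T → T ≤ Subgroup.normalizer (Q : Set G) → T ≤ Q) :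
    IsSylowIn p N Q := by
  obtain ⟨S, hS⟩ := hex
  obtain ⟨g, hg, hgQ⟩ := hS.2.2.2 Q hQ hf hpg
  have hS1 := syl_conj hS g⁻¹
  rw [conj_self (N.inv_mem hg)] at hS1
  have hQ1 : Q ≤ conjSub g⁻¹ S := by
    have := conjSub_mono g⁻¹ hgQ
    rwa [conjSub_inv_cancel] at this
  rcases hQ1.eq_or_lt with he | hlt
  · rwa [he]
  exfalso
  have := hS1.2.1
  obtain ⟨x, hx1, hx2, hx3⟩ := grow hp hS1.2.1 hS1.2.2.1 hlt
  have h1 : conjSub g⁻¹ S ⊓ Subgroup.normalizer (Q : Set G) ≤ conjSub g⁻¹ S := inf_le_left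
  refine hx2 (h (conjSub g⁻¹ S ⊓ Subgroup.normalizer (Q : Set G)) (h1.trans hS1.1)
    (Finite.of_injective _ (Subgroup.inclusion_injective h1))
    (hS1.2.2.1.to_le h1) (le_inf hQ1 Subgroup.le_normalizer) inf_le_right ⟨hx1, hx3⟩)

lemma sup_fin {Q P : Subgroup G} (hQ : Finite Q) (hP : Finite P)
    (h : Q ≤ Subgroup.normalizer (P : Set G)) : Finite ↥(Q ⊔ P) := by
  have := Subgroup.coe_mul_of_left_le_normalizer_right Q P h
  have h2 : ((Q ⊔ P : Subgroup G) : Set G).Finite := by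
    rw [this]
    exact Set.Finite.mul (Set.toFinite (Q : Set G)) (Set.toFinite (P : Set G))
  exact h2

lemma sup_pg {Q P : Subgroup G} (hQ : IsPGroup p Q) (hP : IsPGroup p P)
    (h : Q ≤ Subgroup.normalizer (P : Set G)) : IsPGroup p ↥(Q ⊔ P) :=
  IsPGroup.to_sup_of_normal_right' hQ hP h

end grp
end OrbC

namespace OrbC
open scoped Pointwise
section chain
variable {G : Type} [Group G] {p : ℕ}

/-- conjugate chain -/
def cj (g : G) {n : ℕ} (f : Fin n → Subgroup G) : Fin n → Subgroup G := fun k => conjSub g (f k)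

lemma cj_one {n : ℕ} (f : Fin n → Subgroup G) : cj 1 f = f := funext fun _ => conjSub_one _

lemma cj_cj {n : ℕ} (f : Fin n → Subgroup G) (g h : G) : cj h (cj g f) = cj (g * h) f :=
  funext fun _ => conjSub_conjSub _ _ _

lemma cj_comp {n m : ℕ} (f : Fin n → Subgroup G) (g : G) (s : Fin m → Fin n) :
    cj g f ∘ s = cj g (f ∘ s) := rfl

structure T1 (p : ℕ) {n : ℕ} (f : Fin (n+2) → Subgroup G) (Q : Subgroup G) (i : Fin (n+1)) :
    Prop where
  sm : StrictMono f
  fin : ∀ k, Finite (f k)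
  pg : ∀ k, IsPGroup p (f k)
  syl : IsSylowIn p (chainNorm f) Q
  eq : f i.succ = Q ⊔ f i.castSucc
  nle : ¬ Q ≤ f i.castSucc

lemma T1.conj {n : ℕ} {f : Fin (n+2) → Subgroup G} {Q : Subgroup G} {i : Fin (n+1)}
    (h : T1 p f Q i) (g : G) : T1 p (cj g f) (conjSub g Q) i where
  sm := fun a b hab => (conjSub_lt_iff g).2 (h.sm hab)
  fin := fun k => conjSub_finite g (h.fin k)
  pg := fun k => conjSub_pg g (h.pg k)
  syl := by
    have := syl_conj h.syl g
    rwa [conj_chainNorm] at this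
  eq := by
    change conjSub g _ = _
    rw [h.eq, conjSub_sup]; rfl
  nle := fun hl => h.nle ((conjSub_le_iff g).1 hl)

lemma del_castSucc {n : ℕ} (i : Fin (n+1)) : (i.succ).succAbove i = i.castSucc :=
  Fin.succAbove_of_castSucc_lt _ _ (Fin.castSucc_lt_succ)

lemma sup_norm {P Q T : Subgroup G} (h1 : T ≤ Subgroup.normalizer (P : Set G))
    (h2 : T ≤ Subgroup.normalizer (Q : Set G)) :
    T ≤ Subgroup.normalizer ((P ⊔ Q : Subgroup G) : Set G) := by
  intro x hx
  have := h1 hx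
  have h4 := h2 hx
  rw [mem_normalizer] at this h4 ⊢
  rw [conjSub_sup, this, h4]

lemma le_chainNorm {n : ℕ} {f : Fin (n+1) → Subgroup G} {T : Subgroup G} :
    T ≤ chainNorm f ↔ ∀ k, T ≤ Subgroup.normalizer (f k : Set G) := le_iInf_iff

lemma T1.sylDel (hp : p.Prime) (hG : PseudoFiniteAt p G) {n : ℕ}
    {f : Fin (n+2) → Subgroup G} {Q : Subgroup G} {i : Fin (n+1)}
    (h : T1 p f Q i) : IsSylowIn p (chainNorm (f ∘ i.succ.succAbove)) Q := by
  have hN := le_chainNorm.1 h.syl.1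
  refine syl_crit hp (hG n _ (h.sm.monotone.comp (Fin.strictMono_succAbove _).monotone)
    (fun k => h.fin _) (fun k => h.pg _)) (le_chainNorm.2 fun k => hN _) h.syl.2.1 h.syl.2.2.1 ?_
  intro T hT hTf hTp hQT hTQ
  have hT' := le_chainNorm.1 hT
  have hTN : T ≤ chainNorm f := by
    rw [le_chainNorm]
    intro k
    rcases Fin.eq_self_or_eq_succAbove i.succ k with rfl | ⟨k, rfl⟩
    · rw [h.eq]
      refine sup_norm hTQ ?_
      have := hT' i
      rwa [Function.comp_apply, del_castSucc] at this
    · exact hT' k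
  exact (eq_of_le_card hQT (syl_card_le h.syl hTN hTf hTp)).ge

lemma syl_ins (hp : p.Prime) (hG : PseudoFiniteAt p G) {n : ℕ}
    {f : Fin (n+2) → Subgroup G} {Q : Subgroup G} {i : Fin (n+1)}
    (sm : Monotone f) (fin : ∀ k, Finite (f k)) (pg : ∀ k, IsPGroup p (f k))
    (heq : f i.succ = Q ⊔ f i.castSucc)
    (h : IsSylowIn p (chainNorm (f ∘ i.succ.succAbove)) Q) : IsSylowIn p (chainNorm f) Q := by
  have hN := le_chainNorm.1 h.1
  refine syl_crit hp (hG _ _ sm fin pg) ?_ h.2.1 h.2.2.1 ?_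
  · rw [le_chainNorm]
    intro k
    rcases Fin.eq_self_or_eq_succAbove i.succ k with rfl | ⟨k, rfl⟩
    · refine le_trans ?_ Subgroup.le_normalizer
      rw [heq]; exact le_sup_left
    · exact hN k
  · intro T hT hTf hTp hQT hTQ
    have hTN : T ≤ chainNorm (f ∘ i.succ.succAbove) :=
      le_chainNorm.2 fun k => le_chainNorm.1 hT _
    exact (eq_of_le_card hQT (syl_card_le h hTN hTf hTp)).ge

lemma T1.Q_le {n : ℕ} {f : Fin (n+2) → Subgroup G} {Q : Subgroup G} {i : Fin (n+1)}
    (h : T1 p f Q i) (k : Fin (n+2)) : Q ≤ f k ↔ i.castSucc < k := by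
  constructor
  · intro hk
    by_contra hlt
    exact h.nle (hk.trans (h.sm.monotone (not_lt.1 hlt)))
  · intro hk
    have : f i.succ ≤ f k := h.sm.monotone (Fin.castSucc_lt_iff_succ_le.1 hk)
    refine le_trans ?_ this
    rw [h.eq]; exact le_sup_left

lemma T1.Q_le_del {n : ℕ} {f : Fin (n+2) → Subgroup G} {Q : Subgroup G} {i : Fin (n+1)}
    (h : T1 p f Q i) (k : Fin (n+1)) : Q ≤ f (i.succ.succAbove k) ↔ i < k := by
  rw [h.Q_le, ← del_castSucc]
  exact (Fin.strictMono_succAbove _).lt_iff_lt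

lemma T1.ext {n : ℕ} {f f' : Fin (n+2) → Subgroup G} {Q : Subgroup G} {i i' : Fin (n+1)}
    (h : T1 p f Q i) (h' : T1 p f' Q i')
    (he : f ∘ i.succ.succAbove = f' ∘ i'.succ.succAbove) : f = f' ∧ i = i' := by
  have hk : ∀ k, i < k ↔ i' < k := by
    intro k
    rw [← h.Q_le_del, ← h'.Q_le_del]
    have := congrFun he k
    simp only [Function.comp_apply] at this
    rw [this]
  have hi : i = i' := le_antisymm (by
    by_contra hlt
    exact lt_irrefl _ ((hk i).2 (not_le.1 hlt))) (by
    by_contra hlt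
    exact lt_irrefl _ ((hk i').1 (not_le.1 hlt)))
  subst hi
  refine ⟨?_, rfl⟩
  funext k
  rcases Fin.eq_self_or_eq_succAbove i.succ k with rfl | ⟨k, rfl⟩
  · rw [h.eq, h'.eq]
    have := congrFun he i
    simp only [Function.comp_apply, del_castSucc] at this
    rw [this]
  · exact congrFun he k

/-- align Sylow subgroups of conjugate chains -/
lemma align {n : ℕ} {h h' : Fin (n+1) → Subgroup G} {Q Q' : Subgroup G} {g : G}
    (e : h' = cj g h) (hQ : IsSylowIn p (chainNorm h) Q) (hQ' : IsSylowIn p (chainNorm h') Q') :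
    ∃ x, h' = cj x h ∧ Q' = conjSub x Q := by
  have h1 := syl_conj hQ g
  rw [conj_chainNorm] at h1
  change IsSylowIn p (chainNorm (cj g h)) _ at h1
  rw [← e] at h1
  obtain ⟨x, hx, hxQ⟩ := syl_syl hQ' h1
  refine ⟨g * x, ?_, ?_⟩
  · rw [← cj_cj, ← e]
    exact (funext fun k => mem_chainNorm.1 hx k).symm
  · rw [← hxQ, conjSub_conjSub]

lemma T1.inj (hp : p.Prime) (hG : PseudoFiniteAt p G) {n : ℕ}
    {f f' : Fin (n+2) → Subgroup G} {Q Q' : Subgroup G} {i i' : Fin (n+1)}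
    (h : T1 p f Q i) (h' : T1 p f' Q' i') {g : G}
    (he : f' ∘ i'.succ.succAbove = cj g (f ∘ i.succ.succAbove)) : ∃ x, f' = cj x f := by
  obtain ⟨x, hx, rfl⟩ := align he (h.sylDel hp hG) (h'.sylDel hp hG)
  exact ⟨x, (T1.ext h' (h.conj x) hx).1⟩

lemma T1.ne (hp : p.Prime) (hG : PseudoFiniteAt p G) {n : ℕ}
    {f : Fin (n+2) → Subgroup G} {f' : Fin (n+3) → Subgroup G} {Q Q' : Subgroup G}
    {i : Fin (n+1)} {i' : Fin (n+2)}
    (h : T1 p f Q i) (h' : T1 p f' Q' i') {g : G}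
    (he : f' ∘ i'.succ.succAbove = cj g f) : False := by
  obtain ⟨x, hx, rfl⟩ := align he h.syl (h'.sylDel hp hG)
  replace h := h.conj x
  rw [← hx] at h
  clear hx he
  have h1 := h.Q_le i.castSucc
  have h2 := h.Q_le i.succ
  rw [Function.comp_apply, h'.Q_le_del] at h1 h2
  have h3 : i' < i.succ := h2.2 Fin.castSucc_lt_succ
  have h4 : ¬ i' < i.castSucc := fun hl => lt_irrefl _ (h1.1 hl)
  have h5 : i' = i.castSucc := by
    apply Fin.ext
    have h3' : i'.1 < i.1 + 1 := h3
    have h4' : ¬ i'.1 < i.1 := h4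
    change i'.1 = i.1
    omega
  subst h5
  have e1 := h.eq
  have e2 : (i.castSucc.succ).succAbove i.succ = i.succ.succ :=
    Fin.succAbove_of_le_castSucc _ _ (by simp [Fin.le_def])
  simp only [Function.comp_apply, del_castSucc, e2] at e1
  rw [← h'.eq] at e1
  have := h'.sm.injective e1
  have := congrArg Fin.val this
  simp at this

lemma T1.proper {n : ℕ} {f : Fin (n+2) → Subgroup G} (sm : StrictMono f)
    (fin : ∀ k, Finite (f k)) {a b : Fin (n+2)} {g : G}
    (he : f ∘ a.succAbove = cj g (f ∘ b.succAbove)) : a = b := by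
  have hc : StrictMono fun k => Nat.card (f k) := by
    intro k l hkl
    have := fin l
    refine lt_of_le_of_ne (Subgroup.card_le_of_le (sm hkl).le) fun e => ?_
    exact (sm hkl).ne (eq_of_le_card (sm hkl).le e.ge)
  apply Fin.succAbove_left_injective
  funext k
  apply hc.injective
  have := congrFun he k
  simp only [Function.comp_apply, cj] at this
  simp only [this, conjSub_card]

lemma T1.rank (hp : p.Prime) (hG : PseudoFiniteAt p G) {n : ℕ}
    {f f' : Fin (n+2) → Subgroup G} {Q Q' : Subgroup G} {i i' : Fin (n+1)} {j : Fin (n+2)}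
    (h : T1 p f Q i) (h' : T1 p f' Q' i') {g : G}
    (he : f ∘ i.succ.succAbove = cj g (f' ∘ j.succAbove))
    (hne : ∀ x, f ≠ cj x f') :
    Nat.card Q' < Nat.card Q ∨ (Nat.card Q' = Nat.card Q ∧ i < i') := by
  -- first align
  replace h' := h'.conj g
  rw [← cj_comp] at he
  rw [← conjSub_card g Q']
  have hne' : ∀ x, f ≠ cj x (cj g f') := fun x => by rw [cj_cj]; exact hne _
  clear hne
  generalize conjSub g Q' = Q' at *
  generalize cj g f' = f' at *
  have hQ := h.sylDel hp hG
  have hle : Q' ≤ chainNorm (f ∘ i.succ.succAbove) := by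
    rw [he, le_chainNorm]
    exact fun k => le_chainNorm.1 h'.syl.1 _
  have hcard := syl_card_le hQ hle h'.syl.2.1 h'.syl.2.2.1
  rcases hcard.lt_or_eq with hlt | hcard
  · exact Or.inl hlt
  right
  refine ⟨hcard, ?_⟩
  obtain ⟨x, hx, hxQ⟩ := syl_conj_eq hQ hle h'.syl.2.1 h'.syl.2.2.1 hcard.ge
  replace h' := h'.conj x
  replace he : f ∘ i.succ.succAbove = cj x f' ∘ j.succAbove := by
    rw [cj_comp, ← he]
    exact (funext fun k => mem_chainNorm.1 hx k).symm
  replace hne' : f ≠ cj x f' := by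
    have := hne' x
    exact this
  rw [hxQ] at h'
  generalize cj x f' = f' at *
  clear hx hxQ hle hcard
  have hk : ∀ k, i < k ↔ i'.castSucc < j.succAbove k := by
    intro k
    rw [← h.Q_le_del, ← h'.Q_le]
    have := congrFun he k
    simp only [Function.comp_apply] at this
    rw [this]
  rcases lt_trichotomy j i'.succ with hj | rfl | hj
  · have h1 : j.succAbove i' = i'.succ :=
      Fin.succAbove_of_le_castSucc _ _ (Fin.le_castSucc_iff.2 hj)
    rw [hk, h1]
    exact Fin.castSucc_lt_succ
  · exact absurd (T1.ext h h' he).1 hne'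
  · exfalso
    have h1 : j.succAbove i' = i'.castSucc :=
      Fin.succAbove_of_castSucc_lt _ _ (lt_trans Fin.castSucc_lt_succ hj)
    have hii : ¬ i < i' := by
      rw [hk, h1]; exact lt_irrefl _
    have hjlt : i'.1 + 1 < j.1 := hj
    have hm : i'.1 + 1 < n + 1 := by have := j.2; omega
    let m : Fin (n+1) := ⟨i'.1 + 1, hm⟩
    have h2 : j.succAbove m = i'.succ := by
      rw [Fin.succAbove_of_castSucc_lt _ _ (by exact hjlt)]
      rfl
    have h3 : i < m := by
      rw [hk, h2]; exact Fin.castSucc_lt_succ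
    have hi : i = i' := by
      apply Fin.ext
      have a1 : ¬ i.1 < i'.1 := hii
      have a2 : i.1 < i'.1 + 1 := h3
      omega
    subst hi
    have e1 := congrFun he m
    have e2 := congrFun he i
    simp only [Function.comp_apply, h2, h1, del_castSucc] at e1 e2
    have e3 : i.succ.succAbove m = i.succ.succAbove m := rfl
    have h4 : i.succ < i.succ.succAbove m := by
      rw [Fin.succAbove_of_le_castSucc _ _ (by simp [Fin.le_def, m])]
      simp [Fin.lt_def, m]
    have := h.sm h4
    rw [e1, h.eq, h'.eq, e2] at this
    exact lt_irrefl _ this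

lemma bot_le_syl {n : ℕ} {h : Fin (n+1) → Subgroup G} (mono : Monotone h)
    (fin : ∀ k, Finite (h k)) (pg : ∀ k, IsPGroup p (h k)) {Q : Subgroup G}
    (hQ : IsSylowIn p (chainNorm h) Q) : h 0 ≤ Q := by
  have h0 : h 0 ≤ chainNorm h :=
    le_chainNorm.2 fun k => (mono (Fin.zero_le k)).trans Subgroup.le_normalizer
  obtain ⟨g, hg, hgQ⟩ := hQ.2.2.2 (h 0) h0 (fin 0) (pg 0)
  rwa [mem_chainNorm.1 hg 0] at hgQ

lemma T1.notSylow (hp : p.Prime) (hG : PseudoFiniteAt p G)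
    {f : Fin 2 → Subgroup G} {Q : Subgroup G} {i : Fin 1}
    (h : T1 p f Q i) : ¬ IsSylowIn p ⊤ (f (i.succ.succAbove 0)) := by
  intro hS
  have h1 := bot_le_syl (h.sm.monotone.comp (Fin.strictMono_succAbove i.succ).monotone)
    (fun k => h.fin _) (fun k => h.pg _) (h.sylDel hp hG)
  have h2 := syl_card_le hS le_top h.syl.2.1 h.syl.2.2.1
  have := h.syl.2.1
  have h3 := eq_of_le_card h1 h2
  apply h.nle
  rw [← h3]
  have : i = 0 := Subsingleton.elim _ _
  subst this
  rw [Function.comp_apply, del_castSucc]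

end chain
end OrbC

namespace OrbC
open scoped Pointwise
section surj
variable {G : Type} [Group G] {p : ℕ}

lemma exists_sylow (hG : PseudoFiniteAt p G) : ∃ S : Subgroup G, IsSylowIn p ⊤ S := by
  obtain ⟨S, hS⟩ := hG 0 (fun _ => ⊥) (fun _ _ _ => le_rfl) (fun _ => inferInstance)
    (fun _ => IsPGroup.of_bot)
  have : chainNorm (fun _ : Fin 1 => (⊥ : Subgroup G)) = ⊤ := by
    rw [eq_top_iff]
    intro x _
    rw [mem_chainNorm]
    intro _
    exact Subgroup.map_bot _
  rw [this] at hS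
  exact ⟨S, hS⟩

lemma syl_low (hp : p.Prime) (hG : PseudoFiniteAt p G) {n : ℕ} {h : Fin (n+1) → Subgroup G}
    (sm : StrictMono h) (fin : ∀ k, Finite (h k)) (pg : ∀ k, IsPGroup p (h k)) {Q : Subgroup G}
    (hQ : IsSylowIn p (chainNorm h) Q) (hle : Q ≤ h 0) : n = 0 ∧ IsSylowIn p ⊤ (h 0) := by
  have hQ0 : Q = h 0 := le_antisymm hle (bot_le_syl sm.monotone fin pg hQ)
  subst hQ0
  have hn : n = 0 := by
    by_contra hn
    have hn' : 1 < n + 1 := by omega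
    let o : Fin (n+1) := ⟨1, hn'⟩
    have h0 : h 0 < h o := sm (by simp [Fin.lt_def, o])
    obtain ⟨x, hx1, hx2, hx3⟩ := grow hp (fin o) (pg o) h0
    have hl : h o ⊓ Subgroup.normalizer (h 0 : Set G) ≤ h o := inf_le_left
    have := fin o
    have hT : h o ⊓ Subgroup.normalizer (h 0 : Set G) ≤ chainNorm h := by
      rw [le_chainNorm]
      intro k
      by_cases hk : k = 0
      · subst hk; exact inf_le_right
      · have : o ≤ k := by
          rw [Fin.le_def]
          have : k.1 ≠ 0 := fun e => hk (Fin.ext e)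
          change 1 ≤ k.1
          omega
        exact hl.trans ((sm.monotone this).trans Subgroup.le_normalizer)
    have hTf : Finite ↥(h o ⊓ Subgroup.normalizer (h 0 : Set G)) :=
      Finite.of_injective _ (Subgroup.inclusion_injective hl)
    have h1 := syl_card_le hQ hT hTf ((pg o).to_le hl)
    have h2 := eq_of_le_card (le_inf h0.le Subgroup.le_normalizer) h1
    apply hx2
    rw [h2]
    exact ⟨hx1, hx3⟩
  refine ⟨hn, ?_⟩
  subst hn
  refine syl_crit hp (exists_sylow hG) le_top (fin 0) (pg 0) ?_
  intro T _ hTf hTp hQT hTN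
  have : T ≤ chainNorm h := by
    rw [le_chainNorm]
    intro k
    have hk0 : k = 0 := Fin.ext (by have := k.2; simp at this ⊢)
    rw [hk0]
    exact hTN
  exact (eq_of_le_card hQT (syl_card_le hQ this hTf hTp)).ge

lemma exists_last {n : ℕ} {h : Fin (n+1) → Subgroup G} (mono : Monotone h) {Q : Subgroup G}
    (h0 : ¬ Q ≤ h 0) : ∃ k, ¬ Q ≤ h k ∧ ∀ l, k < l → Q ≤ h l := by
  classical
  obtain ⟨k, hk⟩ := (Finset.univ.filter fun k => ¬ Q ≤ h k).exists_maximal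
    ⟨0, by simpa using h0⟩
  refine ⟨k, by simpa using hk.1, fun l hl => ?_⟩
  by_contra hc
  exact absurd (hk.2 (by simpa using hc) hl.le) hl.not_ge

lemma ins (hp : p.Prime) (hG : PseudoFiniteAt p G) {n : ℕ} {h : Fin (n+1) → Subgroup G}
    (sm : StrictMono h) (fin : ∀ k, Finite (h k)) (pg : ∀ k, IsPGroup p (h k)) {Q : Subgroup G}
    (hQ : IsSylowIn p (chainNorm h) Q) (k : Fin (n+1)) (hk : ¬ Q ≤ h k)
    (hk' : ∀ l, k < l → Q ≤ h l)
    (hno : ¬ ∃ l : Fin (n+1), l.1 = k.1 + 1 ∧ h l = Q ⊔ h k) :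
    ∃ f : Fin (n+2) → Subgroup G, T1 p f Q k ∧ f ∘ k.succ.succAbove = h ∧
      f k.succ = Q ⊔ h k := by
  let f : Fin (n+2) → Subgroup G := (k.succ).insertNth (α := fun _ => Subgroup G) (Q ⊔ h k) h
  have f1 : f k.succ = Q ⊔ h k := Fin.insertNth_apply_same _ _ _
  have f2 : ∀ l, f (k.succ.succAbove l) = h l := fun l => Fin.insertNth_apply_succAbove _ _ _ _
  have f3 : f k.castSucc = h k := by rw [← del_castSucc, f2]
  have hnorm : Q ≤ Subgroup.normalizer (h k : Set G) := le_chainNorm.1 hQ.1 k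
  have hfm : StrictMono f := by
    intro a b hab
    rcases Fin.eq_self_or_eq_succAbove k.succ a with ha | ⟨a', rfl⟩
    · rcases Fin.eq_self_or_eq_succAbove k.succ b with hb | ⟨b', rfl⟩
      · subst ha; subst hb; exact absurd hab (lt_irrefl _)
      · subst ha
        rw [f1, f2]
        have hkb : k < b' := by
          by_contra hc
          rw [Fin.succAbove_of_castSucc_lt _ _ (by
            rw [Fin.lt_def]
            have : b'.1 ≤ k.1 := not_lt.1 hc
            simp; omega)] at hab
          have h1 : k.1 + 1 < b'.1 := hab
          have : b'.1 ≤ k.1 := not_lt.1 hc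
          omega
        refine lt_of_le_of_ne (sup_le (hk' _ hkb) (sm.monotone hkb.le)) fun e => ?_
        have hlt : k.1 + 1 < n + 1 := by
          have h1 : k.1 < b'.1 := hkb
          have := b'.2
          omega
        refine hno ⟨⟨k.1 + 1, hlt⟩, rfl, le_antisymm ?_ ?_⟩
        · rw [e]
          exact sm.monotone hkb
        · have hkl : k < ⟨k.1 + 1, hlt⟩ := by simp [Fin.lt_def]
          exact sup_le (hk' _ hkl) (sm.monotone hkl.le)
    · rcases Fin.eq_self_or_eq_succAbove k.succ b with hb | ⟨b', rfl⟩
      · subst hb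
        rw [f1, f2]
        have hka : a' ≤ k := by
          by_contra hc
          rw [Fin.succAbove_of_le_castSucc _ _ (by
            rw [Fin.le_def]
            have : k.1 < a'.1 := not_le.1 hc
            simp; omega)] at hab
          have h1 : a'.1 + 1 < k.1 + 1 := hab
          have : k.1 < a'.1 := not_le.1 hc
          omega
        refine lt_of_le_of_lt (sm.monotone hka) (lt_of_le_of_ne le_sup_right fun e => hk ?_)
        rw [e]; exact le_sup_left
      · rw [f2, f2]
        exact sm ((Fin.strictMono_succAbove _).lt_iff_lt.1 hab)
  have hff : ∀ k, Finite (f k) := by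
    intro a
    rcases Fin.eq_self_or_eq_succAbove k.succ a with ha | ⟨a', rfl⟩
    · rw [ha, f1]; exact sup_fin hQ.2.1 (fin k) hnorm
    · rw [f2]; exact fin _
  have hfp : ∀ k, IsPGroup p (f k) := by
    intro a
    rcases Fin.eq_self_or_eq_succAbove k.succ a with ha | ⟨a', rfl⟩
    · rw [ha, f1]; exact sup_pg hQ.2.2.1 (pg k) hnorm
    · rw [f2]; exact pg _
  have hfe : f ∘ k.succ.succAbove = h := funext f2
  refine ⟨f, ⟨hfm, hff, hfp, ?_, by rw [f1, f3], by rwa [f3]⟩, hfe, f1⟩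
  refine syl_ins hp hG hfm.monotone hff hfp (i := k) (by rw [f1, f3]) ?_
  rwa [hfe]

/-- trichotomy, successor case -/
lemma surj_succ (hp : p.Prime) (hG : PseudoFiniteAt p G) {n : ℕ} {h : Fin (n+2) → Subgroup G}
    (sm : StrictMono h) (fin : ∀ k, Finite (h k)) (pg : ∀ k, IsPGroup p (h k)) :
    (∃ Q i, T1 p h Q i) ∨
    ∃ (f : Fin (n+3) → Subgroup G) (Q : _) (k : _), T1 p f Q k ∧ f ∘ k.succ.succAbove = h ∧
      f k.succ = Q ⊔ h k := by
  obtain ⟨Q, hQ⟩ := hG _ h sm.monotone fin pg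
  by_cases hQ0 : Q ≤ h 0
  · exact absurd (syl_low hp hG sm fin pg hQ hQ0).1 (by omega)
  obtain ⟨k, hk, hk'⟩ := exists_last sm.monotone hQ0
  by_cases hno : ∃ l : Fin (n+2), l.1 = k.1 + 1 ∧ h l = Q ⊔ h k
  · obtain ⟨l, hl, hl'⟩ := hno
    left
    have hi : k.1 < n + 1 := by have := l.2; omega
    have e1 : (⟨k.1, hi⟩ : Fin (n+1)).castSucc = k := rfl
    have e2 : (⟨k.1, hi⟩ : Fin (n+1)).succ = l := Fin.ext hl.symm
    exact ⟨Q, ⟨k.1, hi⟩, sm, fin, pg, hQ, by rw [e1, e2, hl'], by rwa [e1]⟩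
  · right
    obtain ⟨f, hf⟩ := ins hp hG sm fin pg hQ k hk hk' hno
    exact ⟨f, Q, k, hf⟩

lemma surj_zero (hp : p.Prime) (hG : PseudoFiniteAt p G) {h : Fin 1 → Subgroup G}
    (sm : StrictMono h) (fin : ∀ k, Finite (h k)) (pg : ∀ k, IsPGroup p (h k)) :
    IsSylowIn p ⊤ (h 0) ∨
    ∃ (f : Fin 2 → Subgroup G) (Q : _) (k : _), T1 p f Q k ∧ f ∘ k.succ.succAbove = h ∧
      f k.succ = Q ⊔ h k := by
  obtain ⟨Q, hQ⟩ := hG _ h sm.monotone fin pg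
  by_cases hQ0 : Q ≤ h 0
  · exact Or.inl (syl_low hp hG sm fin pg hQ hQ0).2
  obtain ⟨k, hk, hk'⟩ := exists_last sm.monotone hQ0
  right
  obtain ⟨f, hf⟩ := ins hp hG sm fin pg hQ k hk hk' (by
    rintro ⟨l, hl, -⟩
    omega)
  exact ⟨f, Q, k, hf⟩

end surj
end OrbC

namespace OrbC
open scoped Pointwise
section zset
open Simplicial
variable {G : Type} [Group G] {p : ℕ}

/-- orbit relation on chains -/
def Zsetoid (C : Set (Subgroup G)) (n : ℕ) : Setoid (Fin (n+1) →o C) where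
  r x y := ∃ g : G, ∀ i, (y i).1 = conjSub g (x i).1
  iseqv :=
    { refl := fun x => ⟨1, fun i => (conjSub_one _).symm⟩
      symm := by
        rintro x y ⟨g, hg⟩
        exact ⟨g⁻¹, fun i => by rw [hg, conjSub_inv_cancel]⟩
      trans := by
        rintro x y z ⟨g, hg⟩ ⟨h, hh⟩
        exact ⟨g * h, fun i => by rw [hh, hg, conjSub_conjSub]⟩ }

/-- the simplicial set of orbits of chains -/
def Z (C : Set (Subgroup G)) : SSet.{0} where
  obj n := Quotient (Zsetoid C n.unop.len)
  map {m n} f := ↾(Quotient.map (fun x => x.comp f.unop.toOrderHom) (by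
    rintro x y ⟨g, hg⟩
    exact ⟨g, fun i => hg _⟩))
  map_id n := by
    ext x
    induction x using Quotient.ind
    rfl
  map_comp f g := by
    ext x
    induction x using Quotient.ind
    rfl

variable {C : Set (Subgroup G)}

/-- class of a chain -/
def zmk {n : ℕ} (x : Fin (n+1) →o C) : (Z C) _⦋n⦌ := Quotient.mk (Zsetoid C n) x

/-- underlying chain -/
def ch {n : ℕ} (x : Fin (n+1) →o C) : Fin (n+1) → Subgroup G := fun k => (x k).1

lemma zmk_surj {n : ℕ} (s : (Z C) _⦋n⦌) : ∃ x, zmk x = s := Quotient.exists_rep s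

lemma zmk_eq {n : ℕ} {x y : Fin (n+1) →o C} : zmk x = zmk y ↔ ∃ g, ch y = cj g (ch x) := by
  refine Quotient.eq.trans ?_
  constructor
  · rintro ⟨g, hg⟩
    exact ⟨g, funext hg⟩
  · rintro ⟨g, hg⟩
    exact ⟨g, fun i => congrFun hg i⟩

lemma zmk_map {n m : ℕ} (x : Fin (n+1) →o C) (f : ⦋m⦌ ⟶ ⦋n⦌) :
    (Z C).map f.op (zmk x) = zmk (x.comp f.toOrderHom) := rfl

lemma zmk_δ {n : ℕ} (x : Fin (n+2) →o C) (j : Fin (n+2)) :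
    (Z C).δ j (zmk x) = zmk (x.comp (Fin.succAboveOrderEmb j).toOrderHom) := rfl

lemma zmk_σ {n : ℕ} (x : Fin (n+1) →o C) (j : Fin (n+1)) :
    (Z C).σ j (zmk x) = zmk (x.comp ⟨j.predAbove, Fin.predAbove_right_monotone j⟩) := rfl

lemma ch_mono {n : ℕ} (x : Fin (n+1) →o C) : Monotone (ch x) := fun _ _ h => x.monotone h

lemma ch_δ {n : ℕ} (x : Fin (n+2) →o C) (j : Fin (n+2)) :
    ch (x.comp (Fin.succAboveOrderEmb j).toOrderHom) = ch x ∘ j.succAbove := rfl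

lemma ch_inj {n : ℕ} {x y : Fin (n+1) →o C} (h : ch x = ch y) : x = y := by
  ext k
  rw [show (x k).1 = (y k).1 from congrFun h k]

lemma z_nondeg {n : ℕ} (x : Fin (n+1) →o C) :
    zmk x ∈ (Z C).nonDegenerate n ↔ StrictMono (ch x) := by
  obtain _ | n := n
  · have : StrictMono (ch x) := fun a b hab => absurd hab (by simp [Fin.lt_def])
    simpa using this
  · rw [← not_iff_not, ← SSet.mem_degenerate_iff_notMem_nonDegenerate,
      Fin.strictMono_iff_lt_succ, SSet.degenerate_eq_iUnion_range_σ, Set.mem_iUnion, not_forall]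
    apply exists_congr
    intro i
    have hle := ch_mono x i.castSucc_le_succ
    constructor
    · rintro ⟨s, hs⟩ hlt
      obtain ⟨y, rfl⟩ := zmk_surj s
      rw [zmk_σ, zmk_eq] at hs
      obtain ⟨g, hg⟩ := hs
      refine hlt.ne ?_
      rw [hg]
      change conjSub g (y (i.predAbove i.castSucc)).1 = conjSub g (y (i.predAbove i.succ)).1
      simp
    · intro h
      have he : ch x i.castSucc = ch x i.succ := hle.eq_of_not_lt h
      refine ⟨(Z C).δ i.castSucc (zmk x), ?_⟩
      rw [zmk_δ, zmk_σ]
      congr 1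
      apply ch_inj
      funext j
      change ch x (i.castSucc.succAbove (i.predAbove j)) = ch x j
      by_cases h₁ : i.castSucc < j
      · obtain ⟨j, rfl⟩ := Fin.eq_succ_of_ne_zero (Fin.ne_zero_of_lt h₁)
        rw [Fin.predAbove_of_castSucc_lt _ _ h₁, Fin.pred_succ,
          Fin.succAbove_of_le_castSucc _ _ (Fin.le_castSucc_iff.2 h₁)]
      · simp only [not_lt] at h₁
        grind [→ Fin.succAbove_of_castSucc_lt,
          → Fin.predAbove_of_le_castSucc, Fin.castSucc_castPred, Fin.castPred_castSucc,
          Fin.succAbove_castSucc_self, → LE.le.lt_or_eq]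

end zset
end OrbC

namespace OrbC
open scoped Pointwise
section pair
open Simplicial
variable {G : Type} [Group G] {p : ℕ} {C : Set (Subgroup G)}

lemma T1.idx {n : ℕ} {f f' : Fin (n+2) → Subgroup G} {Q Q' : Subgroup G} {i i' : Fin (n+1)} {g : G}
    (h : T1 p f Q i) (h' : T1 p f' Q' i') (he : f' = cj g f) : i' = i := by
  obtain ⟨x, hx, rfl⟩ := align he h.syl h'.syl
  subst hx
  have h1 := h.conj x
  have hk : ∀ k, i.castSucc < k ↔ i'.castSucc < k := fun k => by rw [← h1.Q_le, ← h'.Q_le]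
  have a := (hk i.succ).1 Fin.castSucc_lt_succ
  have b := (hk i'.succ).2 Fin.castSucc_lt_succ
  simp only [Fin.lt_def, Fin.val_castSucc, Fin.val_succ] at a b
  exact Fin.ext (by omega)

/-- constant vertex -/
def vtx (S : C) : (Z C) _⦋0⦌ := zmk (OrderHom.const _ S)

lemma mem_A {S : C} (hS : IsSylowIn p ⊤ S.1) {n : ℕ} {x : Fin (n+1) →o C}
    (sm : StrictMono (ch x)) (h : zmk x ∈ (SSet.Subcomplex.ofSimplex (vtx S)).obj _) :
    n = 0 ∧ IsSylowIn p ⊤ (ch x 0) := by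
  rw [SSet.Subcomplex.mem_ofSimplex_obj_iff] at h
  obtain ⟨f, hf⟩ := h
  have hf' : zmk ((OrderHom.const _ S).comp f.toOrderHom) = zmk x := hf
  rw [zmk_eq] at hf'
  obtain ⟨g, hg⟩ := hf'
  have hk : ∀ k, ch x k = conjSub g S.1 := fun k => by rw [hg]; rfl
  constructor
  · by_contra hn
    have : ch x 0 < ch x (Fin.last n) := sm (by rw [Fin.lt_def]; simp; omega)
    rw [hk, hk] at this
    exact lt_irrefl _ this
  · rw [hk]
    have := syl_conj hS g
    rwa [conj_self (Subgroup.mem_top g)] at this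

lemma A_mem {S : C} (hS : IsSylowIn p ⊤ S.1) {x : Fin 1 →o C}
    (h : IsSylowIn p ⊤ (ch x 0)) : zmk x ∈ (SSet.Subcomplex.ofSimplex (vtx S)).obj _ := by
  rw [SSet.Subcomplex.mem_ofSimplex_obj_iff]
  refine ⟨𝟙 _, ?_⟩
  change zmk (OrderHom.const _ S) = zmk x
  rw [zmk_eq]
  obtain ⟨g, -, hg⟩ := syl_conj_eq h le_top hS.2.1 hS.2.2.1
    (syl_card_le hS le_top h.2.1 h.2.2.1)
  refine ⟨g, funext fun k => ?_⟩
  have hk : k = 0 := Fin.ext (by have := k.2; simp at this ⊢)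
  rw [hk]
  exact hg.symm

variable (p C) in
/-- index type -/
def Ix : Type := Σ n : ℕ, {s : (Z C) _⦋n+1⦌ // ∃ (x : _) (Q : _) (i : _), zmk x = s ∧ T1 p (ch x) Q i}

noncomputable def Ix.x (s : Ix p C) : Fin (s.1+2) →o C := s.2.2.choose
noncomputable def Ix.Q (s : Ix p C) : Subgroup G := s.2.2.choose_spec.choose
noncomputable def Ix.i (s : Ix p C) : Fin (s.1+1) := s.2.2.choose_spec.choose_spec.choose
lemma Ix.hx (s : Ix p C) : zmk s.x = s.2.1 := s.2.2.choose_spec.choose_spec.choose_spec.1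
lemma Ix.t1 (s : Ix p C) : T1 p (ch s.x) s.Q s.i :=
  s.2.2.choose_spec.choose_spec.choose_spec.2

lemma Ix.ext_of {n : ℕ} {a b : {s : (Z C) _⦋n+1⦌ // ∃ (x : _) (Q : _) (i : _), zmk x = s ∧ T1 p (ch x) Q i}}
    {g : G} (h : ch (Ix.x (⟨n, b⟩ : Ix p C)) = cj g (ch (Ix.x (⟨n, a⟩ : Ix p C)))) :
    (⟨n, a⟩ : Ix p C) = ⟨n, b⟩ := by
  have h1 := Ix.hx (⟨n, a⟩ : Ix p C)
  have h2 := Ix.hx (⟨n, b⟩ : Ix p C)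
  have h3 := zmk_eq.2 ⟨g, h⟩
  rw [h1, h2] at h3
  have : a = b := Subtype.ext h3
  rw [this]

lemma δ_nd (s : Ix p C) : StrictMono (ch (s.x.comp (Fin.succAboveOrderEmb s.i.succ).toOrderHom)) :=
  s.t1.sm.comp (Fin.strictMono_succAbove _)

lemma δ_notMem (hp : p.Prime) (hG : PseudoFiniteAt p G) {S : C} (hS : IsSylowIn p ⊤ S.1)
    (s : Ix p C) :
    zmk (s.x.comp (Fin.succAboveOrderEmb s.i.succ).toOrderHom) ∉
      (SSet.Subcomplex.ofSimplex (vtx S)).obj _ := by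
  intro h
  obtain ⟨h0, h1⟩ := mem_A hS (δ_nd s) h
  obtain ⟨n, a⟩ := s
  change n = 0 at h0
  subst h0
  exact (Ix.t1 (⟨0, a⟩ : Ix p C)).notSylow hp hG h1

lemma surj_aux (hp : p.Prime) (hG : PseudoFiniteAt p G)
    (hfin : ∀ P ∈ C, Finite P) (hpg : ∀ P ∈ C, IsPGroup p P)
    (hover : ∀ P ∈ C, ∀ Q : Subgroup G, P ≤ Q → Finite Q → IsPGroup p Q → Q ∈ C)
    {S : C} (hS : IsSylowIn p ⊤ S.1) {n : ℕ} (x : Fin (n+1) →o C) (sm : StrictMono (ch x))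
    (hA : zmk x ∉ (SSet.Subcomplex.ofSimplex (vtx S)).obj _) :
    ∃ s : Ix p C, SSet.S.mk (zmk x) = SSet.S.mk (zmk s.x) ∨
      SSet.S.mk (zmk x) = SSet.S.mk (zmk (s.x.comp (Fin.succAboveOrderEmb s.i.succ).toOrderHom)) := by
  have fin : ∀ k, Finite (ch x k) := fun k => hfin _ (x k).2
  have pg : ∀ k, IsPGroup p (ch x k) := fun k => hpg _ (x k).2
  have key : (∃ (f : Fin (n+2) → Subgroup G) (Q : _) (k : _), T1 p f Q k ∧
      f ∘ k.succ.succAbove = ch x ∧ f k.succ = Q ⊔ ch x k) →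
    ∃ s : Ix p C, SSet.S.mk (zmk x) =
      SSet.S.mk (zmk (s.x.comp (Fin.succAboveOrderEmb s.i.succ).toOrderHom)) := by
    rintro ⟨f, Q, k, hT, he, hk⟩
    have hC : ∀ a, f a ∈ C := by
      intro a
      rcases Fin.eq_self_or_eq_succAbove k.succ a with ha | ⟨a', rfl⟩
      · refine hover _ (x k).2 _ ?_ (hT.fin a) (hT.pg a)
        rw [ha, hk]
        exact le_sup_right
      · have : f (k.succ.succAbove a') = ch x a' := congrFun he a'
        rw [this]
        exact (x a').2
    let y : Fin (n+2) →o C := ⟨fun a => ⟨f a, hC a⟩, fun a b hab => hT.sm.monotone hab⟩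
    have hy : ch y = f := rfl
    let s : Ix p C := ⟨n, zmk y, y, Q, k, rfl, hT⟩
    refine ⟨s, ?_⟩
    congr 1
    have h1 : zmk y = zmk s.x := s.hx.symm
    obtain ⟨g, hg⟩ := zmk_eq.1 h1
    have h2 : s.i = k := T1.idx hT s.t1 hg
    rw [zmk_eq]
    refine ⟨g, ?_⟩
    rw [ch_δ, h2, hg, cj_comp, hy, he]
  obtain _ | n := n
  · rcases surj_zero hp hG sm fin pg with h | h
    · exact absurd (A_mem hS h) hA
    · obtain ⟨s, hs⟩ := key h
      exact ⟨s, Or.inr hs⟩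
  · rcases surj_succ hp hG sm fin pg with ⟨Q, i, h⟩ | h
    · let s : Ix p C := ⟨n, zmk x, x, Q, i, rfl, h⟩
      refine ⟨s, Or.inl ?_⟩
      congr 1
      exact s.hx.symm
    · obtain ⟨s, hs⟩ := key h
      exact ⟨s, Or.inr hs⟩

noncomputable def core (hp : p.Prime) (hG : PseudoFiniteAt p G)
    (hfin : ∀ P ∈ C, Finite P) (hpg : ∀ P ∈ C, IsPGroup p P)
    (hover : ∀ P ∈ C, ∀ Q : Subgroup G, P ≤ Q → Finite Q → IsPGroup p Q → Q ∈ C)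
    {S : C} (hS : IsSylowIn p ⊤ S.1) :
    (SSet.Subcomplex.ofSimplex (vtx S)).PairingCore where
  ι := Ix p C
  dim s := s.1
  simplex s := zmk s.x
  index s := s.i.succ
  nonDegenerate₁ s := (z_nondeg _).2 s.t1.sm
  nonDegenerate₂ s := (z_nondeg _).2 (δ_nd s)
  notMem₁ s h := absurd (mem_A hS s.t1.sm h).1 (by omega)
  notMem₂ s := δ_notMem hp hG hS s
  injective_type₁' := by
    rintro ⟨n, a⟩ ⟨m, b⟩ h
    obtain rfl : n = m := Nat.succ_injective (SSet.S.dim_eq_of_mk_eq h)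
    rw [SSet.S.ext_iff, zmk_eq] at h
    obtain ⟨g, hg⟩ := h
    exact Ix.ext_of hg
  injective_type₂' := by
    rintro ⟨n, a⟩ ⟨m, b⟩ h
    obtain rfl : n = m := SSet.S.dim_eq_of_mk_eq h
    rw [SSet.S.ext_iff, zmk_δ, zmk_δ, zmk_eq] at h
    obtain ⟨g, hg⟩ := h
    obtain ⟨x, hx⟩ := T1.inj hp hG (Ix.t1 (⟨n, a⟩ : Ix p C)) (Ix.t1 (⟨n, b⟩ : Ix p C)) hg
    exact Ix.ext_of hx
  type₁_ne_type₂' := by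
    rintro ⟨n, a⟩ ⟨m, b⟩ h
    obtain rfl : n + 1 = m := SSet.S.dim_eq_of_mk_eq h
    rw [SSet.S.ext_iff, zmk_δ, zmk_eq] at h
    obtain ⟨g, hg⟩ := h
    exact T1.ne hp hG (Ix.t1 (⟨n, a⟩ : Ix p C)) (Ix.t1 (⟨n+1, b⟩ : Ix p C)) hg
  surjective' := by
    intro x
    obtain ⟨n, y, hy, hy', rfl⟩ := x.mk_surjective
    obtain ⟨x, rfl⟩ := zmk_surj y
    exact surj_aux hp hG hfin hpg hover hS x ((z_nondeg _).1 hy) hy'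

theorem anodyne (hp : p.Prime) (hG : PseudoFiniteAt p G)
    (hfin : ∀ P ∈ C, Finite P) (hpg : ∀ P ∈ C, IsPGroup p P)
    (hover : ∀ P ∈ C, ∀ Q : Subgroup G, P ≤ Q → Finite Q → IsPGroup p Q → Q ∈ C)
    {S : C} (hS : IsSylowIn p ⊤ S.1) :
    SSet.anodyneExtensions (SSet.Subcomplex.ofSimplex (vtx S)).ι := by
  let h := core hp hG hfin hpg hover hS
  have : h.IsProper := ⟨fun s => by
    change SSet.S.IsUniquelyCodimOneFace
      (SSet.S.mk ((Z C).δ (Ix.i s).succ (zmk (Ix.x s)))) (SSet.S.mk (zmk (Ix.x s)))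
    rw [SSet.S.IsUniquelyCodimOneFace.iff]
    refine ⟨_, rfl, fun j hj => ?_⟩
    rw [zmk_δ, zmk_δ, zmk_eq] at hj
    obtain ⟨g, hg⟩ := hj
    exact (T1.proper (Ix.t1 s).sm (Ix.t1 s).fin hg).symm⟩
  have hle : ∀ s : Ix p C, Nat.card s.Q ≤ Nat.card S.1 := fun s =>
    syl_card_le hS le_top s.t1.syl.2.1 s.t1.syl.2.2.1
  let r : h.WeakRankFunction (ℕ ×ₗ ℕ) :=
    { rank := fun s : Ix p C => toLex (Nat.card S.1 - Nat.card s.Q, s.i.1)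
      lt := by
        rintro ⟨n, a⟩ ⟨m, b⟩ ⟨hne, hlt⟩ hd
        obtain rfl : n = m := hd
        have h1 := hlt.le
        rw [SSet.Subcomplex.N.le_iff, SSet.N.le_iff_exists_mono] at h1
        obtain ⟨f, hf, hfe⟩ := h1
        obtain ⟨j, rfl⟩ := @SimplexCategory.eq_δ_of_mono n f hf
        have hfe' : (Z C).δ j (zmk (Ix.x (⟨n, b⟩ : Ix p C))) =
          (Z C).δ (Ix.i (⟨n, a⟩ : Ix p C)).succ (zmk (Ix.x (⟨n, a⟩ : Ix p C))) := hfe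
        rw [zmk_δ, zmk_δ, zmk_eq] at hfe'
        obtain ⟨g, hg⟩ := hfe'
        have h2 := T1.rank hp hG (Ix.t1 (⟨n, a⟩ : Ix p C)) (Ix.t1 (⟨n, b⟩ : Ix p C)) hg
          (fun x hx => hne (Ix.ext_of hx).symm)
        rw [Prod.Lex.toLex_lt_toLex]
        have h3 := hle ⟨n, a⟩
        have h4 := hle ⟨n, b⟩
        rcases h2 with h2 | ⟨h2, h5⟩
        · left
          change Nat.card S.1 - _ < Nat.card S.1 - _
          omega
        · right
          exact ⟨by change Nat.card S.1 - _ = Nat.card S.1 - _; rw [h2], h5⟩ }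
  have : h.IsRegular := r.isRegular
  exact h.pairing.anodyneExtensions

end pair
end OrbC

namespace OrbC
open scoped Pointwise
section fin
open Simplicial
variable {G : Type} [Group G] {p : ℕ} {C : Set (Subgroup G)}

/-- chain of a simplex of the nerve -/
def toCh {n : ℕ} (F : ComposableArrows C n) : Fin (n+1) →o C := ⟨F.obj, F.monotone⟩

lemma arr_ext {n : ℕ} {F F' : ComposableArrows C n} (h : ∀ i, F.obj i = F'.obj i) : F = F' :=
  CategoryTheory.Functor.ext h (fun _ _ _ => Subsingleton.elim _ _)

/-- projection -/
def prj (C : Set (Subgroup G)) : nerveFunctor.obj (Cat.of ↥C) ⟶ Z C where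
  app n := ↾(fun F : ComposableArrows C n.unop.len => Quotient.mk (Zsetoid C n.unop.len) (toCh F))
  naturality _ _ _ := rfl

theorem final (hp : p.Prime) (hG : PseudoFiniteAt p G)
    (C : Set (Subgroup G)) (hne : C.Nonempty)
    (hfin : ∀ P ∈ C, Finite P)
    (hpg : ∀ P ∈ C, IsPGroup p P)
    (hconj : ∀ P ∈ C, ∀ g : G, conjSub g P ∈ C)
    (hover : ∀ P ∈ C, ∀ Q : Subgroup G, P ≤ Q → Finite Q → IsPGroup p Q → Q ∈ C) :
    ContractibleSpace
      (Quot (fun x y : (SSet.toTop.obj (nerveFunctor.obj (Cat.of ↥C))) =>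
        ∃ g : G,
          (SSet.toTop.map (nerveFunctor.map (conjFun_monotone C hconj g).functor.toCatHom)) x = y)) := by
  obtain ⟨S, hS⟩ := exists_sylow hG
  obtain ⟨P, hP⟩ := hne
  obtain ⟨g, -, hg⟩ := hS.2.2.2 P le_top (hfin P hP) (hpg P hP)
  have hSC : S ∈ C := hover _ (hconj P hP g) S hg hS.2.1 hS.2.2.1
  refine quot_contractible (Γ := G) (nerveFunctor.obj (Cat.of ↥C)) (Z C)
    (fun g => nerveFunctor.map (conjFun_monotone C hconj g).functor.toCatHom) (prj C)
    ?_ ?_ ?_ (vtx ⟨S, hSC⟩) (anodyne hp hG hfin hpg hover hS)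
  · intro n s
    obtain ⟨x, hx⟩ := Quotient.exists_rep s
    exact ⟨x.monotone.functor, hx⟩
  · intro g
    ext n F
    refine Quotient.sound (s := Zsetoid C n.unop.len) ?_
    exact (Zsetoid C n.unop.len).symm ⟨g, fun i => rfl⟩
  · intro n x y h
    obtain ⟨g, hg⟩ := Quotient.exact (s := Zsetoid C n.unop.len) h
    refine ⟨g, ?_⟩
    exact arr_ext (fun i => Subtype.ext (hg i).symm)

end fin
end OrbC

/-- Let `p` be a prime, `G` a group pseudo finite at `p`, and `C` a nonempty
collection of nontrivial finite `p`-subgroups of `G` closed under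
`G`-conjugation and under passage to overgroups that are finite `p`-groups.
Then the quotient of the geometric realization of the order complex (nerve) of
the poset `C` by the conjugation action of `G` is contractible.  Here the
quotient is the quotient space of the realization by the relation identifying
each point with its image under the self-map induced (functorially, via the
nerve and geometric realization) by conjugation by each `g ∈ G`. -/
theorem orbit_space_contractible_of_pseudoFinite (p : ℕ) (hp : p.Prime)
    {G : Type} [Group G] (hG : PseudoFiniteAt p G)
    (C : Set (Subgroup G)) (hne : C.Nonempty)
    (hnt : ∀ P ∈ C, P ≠ ⊥)
    (hfin : ∀ P ∈ C, Finite P)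
    (hpg : ∀ P ∈ C, IsPGroup p P)
    (hconj : ∀ P ∈ C, ∀ g : G, conjSub g P ∈ C)
    (hover : ∀ P ∈ C, ∀ Q : Subgroup G, P ≤ Q → Finite Q → IsPGroup p Q → Q ∈ C) :
    ContractibleSpace
      (Quot (fun x y : (SSet.toTop.obj (nerveFunctor.obj (Cat.of ↥C))) =>
        ∃ g : G,
          (SSet.toTop.map (nerveFunctor.map (conjFun_monotone C hconj g).functor.toCatHom)) x = y)) := by
  exact OrbC.final hp hG C hne hfin hpg hconj hover
end

section
/- Let G be a finite group, p a prime, and let C be a nonempty collection of nontrivial p-subgroups of G that is closed under G-conjugation and under passage to overgroups in G that are p-groups. Then the quotient of the geometric realization of the order complex of the poset C (ordered by inclusion) by the conjugation action of G is a contractible topological space. -/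
open scoped Pointwise

open CategoryTheory

namespace OSC

lemma simplex_map_apply {k l : ℕ} (e : Fin k → Fin l) (w : stdSimplex ℝ (Fin k)) (b : Fin l) :
    (stdSimplex.map e w : Fin l → ℝ) b = ∑ a with e a = b, (w : Fin k → ℝ) a := by
  rw [stdSimplex.map_coe, FunOnFinite.linearMap_apply_apply]

lemma simplex_map_inj_apply {k l : ℕ} {e : Fin k → Fin l} (he : Function.Injective e)
    (w : stdSimplex ℝ (Fin k)) (a : Fin k) :
    (stdSimplex.map e w : Fin l → ℝ) (e a) = (w : Fin k → ℝ) a := by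
  rw [simplex_map_apply]
  have : (Finset.univ.filter (fun a' => e a' = e a)) = {a} := by
    ext a'; simp [he.eq_iff]
  rw [this]; simp

lemma simplex_map_injective {k l : ℕ} {e : Fin k → Fin l} (he : Function.Injective e) :
    Function.Injective (stdSimplex.map (S := ℝ) e) := by
  intro w w' h
  ext a
  have := congrArg (fun z : stdSimplex ℝ (Fin l) => (z : Fin l → ℝ) (e a)) h
  simpa [simplex_map_inj_apply he] using this

lemma simplex_exists_preimage {k l : ℕ} {e : Fin k → Fin l} (he : Function.Injective e)
    (z : stdSimplex ℝ (Fin l)) (hz : ∀ b, (z : Fin l → ℝ) b ≠ 0 → ∃ a, e a = b) :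
    ∃ w, stdSimplex.map e w = z := by
  have hsum : ∑ a, (z : Fin l → ℝ) (e a) = 1 := by
    rw [← z.2.2]
    have : ∑ a, (z : Fin l → ℝ) (e a) = ∑ b ∈ Finset.univ.image e, (z : Fin l → ℝ) b := by
      rw [Finset.sum_image (fun _ _ _ _ h => he h)]
    rw [this]
    apply Finset.sum_subset (Finset.subset_univ _)
    intro b _ hb
    by_contra hne
    obtain ⟨a, rfl⟩ := hz b hne
    simp at hb
  refine ⟨⟨fun a => (z : Fin l → ℝ) (e a), fun a => z.2.1 _, hsum⟩, ?_⟩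
  ext b
  by_cases hb : ∃ a, e a = b
  · obtain ⟨a, rfl⟩ := hb
    rw [simplex_map_inj_apply he]; rfl
  · have h0 : (z : Fin l → ℝ) b = 0 := by
      by_contra h; exact hb (hz b h)
    rw [simplex_map_apply, h0]
    apply Finset.sum_eq_zero
    intro a ha
    simp at ha
    exact absurd ⟨a, ha⟩ hb

/-- based paths -/
abbrev PPath (Y : Type) [TopologicalSpace Y] (y0 : Y) := {f : C(unitInterval, Y) // f 0 = y0}

lemma cont_coord {k : ℕ} (j : Fin k) :
    Continuous (fun x : stdSimplex ℝ (Fin k) => (x : Fin k → ℝ) j) :=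
  (continuous_apply j).comp continuous_subtype_val

section fill
variable {n : ℕ} (i : Fin (n + 2))

noncomputable def lam (x : stdSimplex ℝ (Fin (n + 2))) : ℝ :=
  Finset.univ.inf' ⟨0, Finset.mem_univ _⟩ (fun k : Fin (n + 1) => (x : Fin (n + 2) → ℝ) (i.succAbove k))

lemma lam_le (x : stdSimplex ℝ (Fin (n + 2))) (j : Fin (n + 2)) (hj : j ≠ i) :
    lam i x ≤ (x : Fin (n + 2) → ℝ) j := by
  obtain ⟨k, rfl⟩ := Fin.exists_succAbove_eq hj
  exact Finset.inf'_le _ (Finset.mem_univ k)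

lemma exists_lam (x : stdSimplex ℝ (Fin (n + 2))) :
    ∃ j, j ≠ i ∧ (x : Fin (n + 2) → ℝ) j = lam i x := by
  obtain ⟨k, -, hk⟩ := Finset.exists_mem_eq_inf' (s := Finset.univ) ⟨0, Finset.mem_univ _⟩
    (fun k : Fin (n + 1) => (x : Fin (n + 2) → ℝ) (i.succAbove k))
  exact ⟨i.succAbove k, Fin.succAbove_ne _ _, hk.symm⟩

lemma lam_nonneg (x : stdSimplex ℝ (Fin (n + 2))) : 0 ≤ lam i x := by
  obtain ⟨j, -, hj⟩ := exists_lam i x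
  rw [← hj]; exact x.2.1 _

lemma continuous_lam : Continuous (lam (n := n) i) := by
  unfold lam
  apply Continuous.finset_inf'_apply
  intro k _
  exact cont_coord _

noncomputable def clampL (x : stdSimplex ℝ (Fin (n + 2))) (μ : ℝ) : ℝ := max 0 (min μ (lam i x))

noncomputable def Phi (x : stdSimplex ℝ (Fin (n + 2))) (μ : ℝ) : stdSimplex ℝ (Fin (n + 2)) :=
  ⟨fun j => if j = i then (x : Fin (n + 2) → ℝ) j + (n + 1) * clampL i x μ
    else (x : Fin (n + 2) → ℝ) j - clampL i x μ, by
    have h0 : 0 ≤ clampL i x μ := le_max_left _ _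
    constructor
    · intro j
      dsimp only
      split_ifs with h
      · have := x.2.1 j
        positivity
      · have h1 := lam_le i x j h
        have h2 : clampL i x μ ≤ lam i x := max_le (lam_nonneg i x) (min_le_right _ _)
        linarith
    · have hs : ∑ j, (x : Fin (n + 2) → ℝ) j = 1 := x.2.2
      rw [Fin.sum_univ_succAbove _ i] at hs ⊢
      simp only [if_true, Fin.succAbove_ne, if_false, Finset.sum_sub_distrib]
      simp
      linarith⟩

lemma continuous_Phi : Continuous (fun q : stdSimplex ℝ (Fin (n + 2)) × ℝ => Phi i q.1 q.2) := by
  have hl := continuous_lam (n := n) i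
  apply Continuous.subtype_mk
  apply continuous_pi
  intro j
  have hj : Continuous (fun q : stdSimplex ℝ (Fin (n + 2)) × ℝ => (q.1 : Fin (n + 2) → ℝ) j) :=
    (cont_coord j).comp continuous_fst
  unfold clampL
  split_ifs
  · exact hj.add (by fun_prop)
  · exact hj.sub (by fun_prop)

lemma Phi_zero (x : stdSimplex ℝ (Fin (n + 2))) : Phi i x 0 = x := by
  have : clampL i x 0 = 0 := by simp [clampL, lam_nonneg i x]
  ext j
  change (if j = i then (x : Fin (n + 2) → ℝ) j + (n + 1) * clampL i x 0
    else (x : Fin (n + 2) → ℝ) j - clampL i x 0) = _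
  simp [this]

lemma Phi_lam (x : stdSimplex ℝ (Fin (n + 2))) {j} (hj : j ≠ i)
    (h : (x : Fin (n + 2) → ℝ) j = lam i x) : (Phi i x (lam i x) : Fin (n + 2) → ℝ) j = 0 := by
  have : clampL i x (lam i x) = lam i x := by simp [clampL, lam_nonneg i x]
  change (if j = i then (x : Fin (n + 2) → ℝ) j + (n + 1) * clampL i x _
    else (x : Fin (n + 2) → ℝ) j - clampL i x _) = _
  simp [this, hj, h]

theorem fill {Y : Type} [TopologicalSpace Y] {y0 : Y}
    (β : C(stdSimplex ℝ (Fin (n + 2)), Y))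
    (a : Fin (n + 2) → C(stdSimplex ℝ (Fin (n + 1)), PPath Y y0))
    (hβ : ∀ j, j ≠ i → ∀ x, (a j x).1 1 = β (stdSimplex.map j.succAbove x))
    (hc : ∀ j k, j ≠ i → k ≠ i → ∀ x y,
      stdSimplex.map (S := ℝ) j.succAbove x = stdSimplex.map k.succAbove y → a j x = a k y) :
    ∃ γ : C(stdSimplex ℝ (Fin (n + 2)), PPath Y y0),
      (∀ x, (γ x).1 1 = β x) ∧ ∀ j, j ≠ i → ∀ x, γ (stdSimplex.map j.succAbove x) = a j x := by
  classical
  have hdrop : ∀ j : Fin (n + 2), ∃ σ : Fin (n + 2) → Fin (n + 1), ∀ z : stdSimplex ℝ (Fin (n + 2)),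
      (z : Fin (n + 2) → ℝ) j = 0 → stdSimplex.map j.succAbove (stdSimplex.map σ z) = z := by
    intro j
    refine ⟨Function.invFun j.succAbove, fun z hz => ?_⟩
    have hinj : Function.Injective j.succAbove := Fin.succAbove_right_injective
    obtain ⟨w, rfl⟩ := simplex_exists_preimage (e := j.succAbove) hinj z (by
      intro b hb
      exact Fin.exists_succAbove_eq (fun h => hb (h ▸ hz)))
    congr 1
    rw [stdSimplex.map_comp_apply, Function.invFun_comp hinj, stdSimplex.map_id_apply]
  choose σ hσ using hdrop
  choose jj hjj1 hjj2 using exists_lam (n := n) i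
  let r : stdSimplex ℝ (Fin (n + 2)) → stdSimplex ℝ (Fin (n + 2)) := fun x => Phi i x (lam i x)
  have hr : Continuous r := by
    have h1 := continuous_lam (n := n) i
    exact (continuous_Phi i).comp (continuous_id.prodMk h1)
  let α : stdSimplex ℝ (Fin (n + 2)) → PPath Y y0 := fun x => a (jj x) (stdSimplex.map (σ (jj x)) (r x))
  have hα : ∀ j, j ≠ i → ∀ x : stdSimplex ℝ (Fin (n + 2)), (x : Fin (n + 2) → ℝ) j = lam i x →
      α x = a j (stdSimplex.map (σ j) (r x)) := by
    intro j hj x hx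
    apply hc _ _ (hjj1 x) hj
    rw [hσ _ _ (Phi_lam i x (hjj1 x) (hjj2 x)), hσ _ _ (Phi_lam i x hj hx)]
  have hαc : Continuous α := by
    have hlf : LocallyFinite (fun j : {j : Fin (n + 2) // j ≠ i} =>
        {x : stdSimplex ℝ (Fin (n + 2)) | (x : Fin (n + 2) → ℝ) j = lam i x}) :=
      locallyFinite_of_finite _
    refine hlf.continuous ?_ ?_ ?_
    · ext x
      simp only [Set.mem_iUnion, Set.mem_univ, iff_true]
      exact ⟨⟨jj x, hjj1 x⟩, hjj2 x⟩
    · intro j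
      have h1 := continuous_lam (n := n) i
      exact isClosed_eq (cont_coord _) h1
    · intro j
      have : Continuous (fun x => a j.1 (stdSimplex.map (σ j.1) (r x))) :=
        (a j.1).continuous.comp ((stdSimplex.continuous_map _).comp hr)
      refine this.continuousOn.congr ?_
      intro x hx
      exact hα j.1 j.2 x hx
  have hα1 : ∀ x, (α x).1 1 = β (r x) := by
    intro x
    change (a (jj x) _).1 1 = _
    rw [hβ _ (hjj1 x), hσ _ _ (Phi_lam i x (hjj1 x) (hjj2 x))]
  let F : stdSimplex ℝ (Fin (n + 2)) × unitInterval → Y := fun q =>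
    if (q.2 : ℝ) * (1 + lam i q.1) ≤ 1 then
      (α q.1).1 (Set.projIcc 0 1 zero_le_one ((q.2 : ℝ) * (1 + lam i q.1)))
    else β (Phi i q.1 (lam i q.1 - ((q.2 : ℝ) * (1 + lam i q.1) - 1)))
  have hF : Continuous F := by
    have hl := continuous_lam (n := n) i
    have hs : Continuous (fun q : stdSimplex ℝ (Fin (n + 2)) × unitInterval =>
        (q.2 : ℝ) * (1 + lam i q.1)) := by fun_prop
    refine Continuous.if_le ?_ ?_ hs continuous_const ?_
    · have h1 : Continuous (fun q : stdSimplex ℝ (Fin (n + 2)) × unitInterval => (α q.1).1) :=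
        continuous_subtype_val.comp (hαc.comp continuous_fst)
      exact h1.eval (continuous_projIcc.comp hs)
    · apply β.continuous.comp
      exact (continuous_Phi i).comp (continuous_fst.prodMk (by fun_prop))
    · intro q hq
      rw [hq, Set.projIcc_right, sub_self, sub_zero]
      exact hα1 q.1
  have hF0 : ∀ x, F (x, 0) = y0 := by
    intro x
    simp only [F, Set.Icc.coe_zero, zero_mul, zero_le_one, if_true, Set.projIcc_left]
    exact (α x).2
  let γ0 : C(stdSimplex ℝ (Fin (n + 2)), C(unitInterval, Y)) := ContinuousMap.curry ⟨F, hF⟩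
  refine ⟨⟨fun x => ⟨γ0 x, hF0 x⟩, γ0.continuous.subtype_mk _⟩, ?_, ?_⟩
  · intro x
    change F (x, 1) = β x
    by_cases h : lam i x = 0
    · have hrx : r x = x := by change Phi i x (lam i x) = x; rw [h, Phi_zero]
      simp only [F, h]
      simp [Set.projIcc_right]
      erw [hα1 x]
      rw [hrx]
    · have h' : 0 < lam i x := lt_of_le_of_ne (lam_nonneg i x) (Ne.symm h)
      have : ¬ ((1 : unitInterval) : ℝ) * (1 + lam i x) ≤ 1 := by simp; exact h'
      simp only [F, if_neg this]
      simp [Phi_zero]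
  · intro j hj x
    have h0 : (stdSimplex.map j.succAbove x : Fin (n + 2) → ℝ) j = 0 := by
      rw [simplex_map_apply]
      apply Finset.sum_eq_zero
      intro b hb
      simp [Fin.succAbove_ne] at hb
    set z := stdSimplex.map (S := ℝ) j.succAbove x with hz
    have hl : lam i z = 0 := le_antisymm (by rw [← h0]; exact lam_le i z j hj) (lam_nonneg i z)
    have hrx : r z = z := by change Phi i z (lam i z) = z; rw [hl, Phi_zero]
    have hα' : α z = a j x := by
      rw [hα j hj z (by rw [h0, hl])]
      congr 1
      apply simplex_map_injective (e := j.succAbove) Fin.succAbove_right_injective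
      rw [hσ _ _ (by rw [hrx]; exact h0), hrx]
    apply Subtype.ext
    ext t
    change F (z, t) = (a j x).1 t
    have ht : (t : ℝ) ≤ 1 := t.2.2
    simp only [F, hl, add_zero, mul_one, if_pos ht, hα']
    congr 1
    exact Set.projIcc_val _ t
end fill
end OSC

namespace OSC
open CategoryTheory Simplicial Opposite

noncomputable def evPP (Y : Type) [TopologicalSpace Y] (y0 : Y) :
    TopCat.of (PPath Y y0) ⟶ TopCat.of Y :=
  TopCat.ofHom ⟨fun f => f.1 1, by
    have h1 : Continuous (fun f : PPath Y y0 => f.1) := continuous_subtype_val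
    exact h1.eval continuous_const⟩

lemma toSSetObjEquiv_map_apply {X Y : TopCat.{0}} (f : X ⟶ Y) {n : SimplexCategoryᵒᵖ}
    (x : (TopCat.toSSet.obj X).obj n) (z) :
    Y.toSSetObjEquiv n ((TopCat.toSSet.map f).app n x) z = f (X.toSSetObjEquiv n x z) := rfl

lemma horn_compat {Z : TopCat.{0}} {n : ℕ} {i : Fin (n + 2)}
    (a : (Λ[n + 1, i] : SSet.{0}) ⟶ TopCat.toSSet.obj Z) (j k : Fin (n + 2)) (hj : j ≠ i) (hk : k ≠ i)
    (x y : stdSimplex ℝ (Fin (n + 1)))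
    (h : stdSimplex.map (S := ℝ) j.succAbove x = stdSimplex.map k.succAbove y) :
    Z.toSSetObjEquiv _ (a.app _ (SSet.horn.face i j hj)) x =
      Z.toSSetObjEquiv _ (a.app _ (SSet.horn.face i k hk)) y := by
  classical
  set z := stdSimplex.map (S := ℝ) j.succAbove x with hz
  let S : Finset (Fin (n + 2)) := Finset.univ.filter (fun b => (z : Fin (n + 2) → ℝ) b ≠ 0)
  have hS : S.Nonempty := by
    by_contra hS
    rw [Finset.not_nonempty_iff_eq_empty] at hS
    have h1 : ∑ b, (z : Fin (n + 2) → ℝ) b = 1 := z.2.2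
    rw [Finset.sum_eq_zero] at h1
    · exact zero_ne_one h1
    · intro b _
      by_contra hb
      have : b ∈ S := by simp [S, hb]
      simp [hS] at this
  obtain ⟨m, hm⟩ : ∃ m, S.card = m + 1 := ⟨S.card - 1, by have := hS.card_pos; omega⟩
  let e : Fin (m + 1) ↪o Fin (n + 2) := S.orderEmbOfFin hm
  have he : ∀ b, (z : Fin (n + 2) → ℝ) b ≠ 0 → ∃ c, e c = b := by
    intro b hb
    have : b ∈ Set.range e := by
      rw [Finset.range_orderEmbOfFin]; simp [S, hb]
    exact this
  obtain ⟨w, hw⟩ := simplex_exists_preimage e.injective z he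
  have hez : ∀ c, (z : Fin (n + 2) → ℝ) (e c) ≠ 0 := by
    intro c
    have := Finset.orderEmbOfFin_mem S hm c
    simp only [S, Finset.mem_filter] at this
    exact this.2
  have h0 : ∀ (l : Fin (n + 2)) (v : stdSimplex ℝ (Fin (n + 1))),
      (stdSimplex.map l.succAbove v : Fin (n + 2) → ℝ) l = 0 := by
    intro l v
    rw [simplex_map_apply]
    apply Finset.sum_eq_zero
    intro b hb
    simp [Fin.succAbove_ne] at hb
  let E : ⦋m⦌ ⟶ ⦋n + 1⦌ := SimplexCategory.mkHom e.toOrderHom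
  have key : ∀ (l : Fin (n + 2)) (hl : l ≠ i) (v : stdSimplex ℝ (Fin (n + 1))),
      stdSimplex.map (S := ℝ) l.succAbove v = z →
      ∃ hE : (SSet.stdSimplex.objEquiv.symm E : (Δ[n + 1] : SSet.{0}) _⦋m⦌) ∈ Λ[n + 1, i].obj _,
      Z.toSSetObjEquiv _ (a.app _ (SSet.horn.face i l hl)) v =
        Z.toSSetObjEquiv _ (a.app (op ⦋m⦌) ⟨SSet.stdSimplex.objEquiv.symm E, hE⟩) w := by
    intro l hl v hv
    have hne : ∀ c, E.toOrderHom c ≠ l := by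
      intro c hc
      apply hez c
      rw [← hv]
      have : e c = l := hc
      rw [this]
      exact h0 l v
    let g : ⦋m⦌ ⟶ ⦋n⦌ := SimplexCategory.factor_δ E l
    have hg : g ≫ SimplexCategory.δ l = E := SimplexCategory.factor_δ_spec E l hne
    have hface : (SSet.horn.face i l hl : (Λ[n + 1, i] : SSet.{0}) _⦋n⦌).1 =
      SSet.stdSimplex.objEquiv.symm (SimplexCategory.δ l) := by
      rfl
    have hEE : (SSet.stdSimplex.objEquiv.symm E : (Δ[n + 1] : SSet.{0}) _⦋m⦌) =
        (Δ[n + 1] : SSet.{0}).map g.op (SSet.horn.face i l hl).1 := by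
      rw [hface, ← hg]; rfl
    have hE : (SSet.stdSimplex.objEquiv.symm E : (Δ[n + 1] : SSet.{0}) _⦋m⦌) ∈ Λ[n + 1, i].obj _ := by
      rw [hEE]
      exact (Λ[n + 1, i] : (Δ[n + 1] : SSet.{0}).Subcomplex).map g.op (SSet.horn.face i l hl).2
    refine ⟨hE, ?_⟩
    have h1 : (⟨SSet.stdSimplex.objEquiv.symm E, hE⟩ : (Λ[n + 1, i] : SSet.{0}) _⦋m⦌) =
        (Λ[n + 1, i] : SSet.{0}).map g.op (SSet.horn.face i l hl) := Subtype.ext hEE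
    rw [h1]
    have h2 := ConcreteCategory.congr_hom (a.naturality g.op) (SSet.horn.face i l hl)
    simp only [types_comp_apply] at h2
    have h3 : a.app (op ⦋m⦌) ((Λ[n + 1, i] : SSet.{0}).map g.op (SSet.horn.face i l hl)) =
      (TopCat.toSSet.obj Z).map g.op (a.app _ (SSet.horn.face i l hl)) := h2
    rw [h3]
    have h4 : v = stdSimplex.map (S := ℝ) g.toOrderHom w := by
      apply simplex_map_injective (e := l.succAbove) Fin.succAbove_right_injective
      rw [hv, stdSimplex.map_comp_apply, ← hw]
      congr 1
      have := congrArg (fun t => (SimplexCategory.Hom.toOrderHom t : Fin (m + 1) → Fin (n + 2))) hg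
      exact this.symm
    rw [h4]
    rfl
  obtain ⟨_, h1⟩ := key j hj x rfl
  obtain ⟨_, h2⟩ := key k hk y h.symm
  rw [h1, h2]

theorem evPP_fibration (W : Type) [TopologicalSpace W] (y0 : W) :
    SSet.modelCategoryQuillen.J.rlp (TopCat.toSSet.map (evPP W y0)) := by
  intro A B f hf
  simp only [SSet.modelCategoryQuillen.J, MorphismProperty.iSup_iff] at hf
  obtain ⟨n, ⟨i⟩⟩ := hf
  refine ⟨fun {a b} sq => ?_⟩
  classical
  let β := (TopCat.of W).toSSetObjEquiv _ (SSet.yonedaEquiv b)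
  let c0 : C(stdSimplex ℝ (Fin (n + 1)), PPath W y0) :=
    ⟨fun _ => ⟨ContinuousMap.const _ y0, rfl⟩, continuous_const⟩
  let aa : Fin (n + 2) → C(stdSimplex ℝ (Fin (n + 1)), PPath W y0) := fun j =>
    if hj : j = i then c0 else
      (TopCat.of (PPath W y0)).toSSetObjEquiv (op ⦋n⦌) (a.app _ (SSet.horn.face i j hj))
  have haa : ∀ j (hj : j ≠ i), aa j =
    (TopCat.of (PPath W y0)).toSSetObjEquiv (op ⦋n⦌) (a.app _ (SSet.horn.face i j hj)) :=
    fun j hj => dif_neg hj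
  obtain ⟨γ, hγ1, hγ2⟩ := fill i β aa (by
    intro j hj x
    rw [haa j hj]
    have h1 := ConcreteCategory.congr_hom (NatTrans.congr_app sq.w (op ⦋n⦌)) (SSet.horn.face i j hj)
    have h2 := congrArg (fun t => (TopCat.of W).toSSetObjEquiv (op ⦋n⦌) t x) h1
    refine h2.trans ?_
    change (TopCat.of W).toSSetObjEquiv (op ⦋n⦌) (b.app _ (SSet.horn.face i j hj).1) x = _
    have h3 : b.app _ (SSet.horn.face i j hj).1 = (TopCat.toSSet.obj (TopCat.of W)).δ j (SSet.yonedaEquiv b) := by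
      have := ConcreteCategory.congr_hom (b.naturality (SimplexCategory.δ j).op) (SSet.yonedaEquiv (𝟙 Δ[n+1]))
      exact this
    rw [h3]
    rfl) (by
    intro j k hj hk x y hxy
    rw [haa j hj, haa k hk]
    exact horn_compat a j k hj hk x y hxy)
  let c := (TopCat.of (PPath W y0)).toSSetObjEquiv (op ⦋n + 1⦌) |>.symm γ
  refine ⟨⟨⟨SSet.yonedaEquiv.symm c, ?_, ?_⟩⟩⟩
  · apply SSet.horn.hom_ext
    intro j hj
    apply ((TopCat.of (PPath W y0)).toSSetObjEquiv (op ⦋n⦌)).injective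
    rw [← haa j hj]
    ext x : 1
    rw [← hγ2 j hj x]
    rfl
  · apply SSet.yonedaEquiv.injective
    apply ((TopCat.of W).toSSetObjEquiv (op ⦋n + 1⦌)).injective
    ext x : 1
    refine Eq.trans ?_ (hγ1 x)
    rw [SSet.yonedaEquiv_comp, Equiv.apply_symm_apply]
    rfl

theorem exists_lift_of_anodyne {X : SSet.{0}} {A : X.Subcomplex} (hA : SSet.anodyneExtensions A.ι)
    (Y : Type) [TopologicalSpace Y] (y0 : Y) (u : X ⟶ TopCat.toSSet.obj (TopCat.of Y))
    (hu : A.ι ≫ u = SSet.const (TopCat.toSSetObj₀Equiv.symm y0)) :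
    ∃ H : X ⟶ TopCat.toSSet.obj (TopCat.of (PPath Y y0)), H ≫ TopCat.toSSet.map (evPP Y y0) = u := by
  have hl := hA _ (evPP_fibration Y y0)
  let cp : PPath Y y0 := ⟨ContinuousMap.const _ y0, rfl⟩
  have sq : CommSq (SSet.const (TopCat.toSSetObj₀Equiv.symm cp) :
      (A : SSet) ⟶ TopCat.toSSet.obj (TopCat.of (PPath Y y0))) A.ι (TopCat.toSSet.map (evPP Y y0)) u :=
    ⟨by rw [hu]; rfl⟩
  exact ⟨sq.lift, sq.fac_right⟩
end OSC

namespace OSC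
section GT
variable {G : Type} [Group G]

lemma mem_conjSub {g x : G} {P : Subgroup G} : x ∈ conjSub g P ↔ g * x * g⁻¹ ∈ P := by
  unfold conjSub
  rw [Subgroup.mem_map]
  constructor
  · rintro ⟨y, hy, rfl⟩
    simpa [mul_assoc] using hy
  · intro h
    exact ⟨_, h, by simp [mul_assoc]⟩

lemma conjSub_one (P : Subgroup G) : conjSub 1 P = P := by ext x; simp [mem_conjSub]

lemma conjSub_mul (g h : G) (P : Subgroup G) : conjSub (g * h) P = conjSub h (conjSub g P) := by
  ext x; simp [mem_conjSub, mul_assoc]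

lemma conjSub_inv_cancel (g : G) (P : Subgroup G) : conjSub g⁻¹ (conjSub g P) = P := by
  rw [← conjSub_mul, mul_inv_cancel, conjSub_one]

lemma conjSub_cancel_inv (g : G) (P : Subgroup G) : conjSub g (conjSub g⁻¹ P) = P := by
  rw [← conjSub_mul, inv_mul_cancel, conjSub_one]

lemma conjSub_inj (g : G) : Function.Injective (conjSub g : Subgroup G → Subgroup G) :=
  Function.LeftInverse.injective (conjSub_inv_cancel g)

lemma conjSub_mono {g : G} {P Q : Subgroup G} (h : P ≤ Q) : conjSub g P ≤ conjSub g Q :=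
  Subgroup.map_mono h

lemma conjSub_le {g : G} {P Q : Subgroup G} : conjSub g P ≤ conjSub g Q ↔ P ≤ Q :=
  ⟨fun h => by simpa [conjSub_inv_cancel] using conjSub_mono (g := g⁻¹) h, conjSub_mono⟩

lemma conjSub_strictMono (g : G) : StrictMono (conjSub g : Subgroup G → Subgroup G) := by
  intro P Q h
  exact lt_of_le_of_ne (conjSub_mono h.le) (fun e => h.ne (conjSub_inj g e))

lemma conjSub_sup (g : G) (P Q : Subgroup G) : conjSub g (P ⊔ Q) = conjSub g P ⊔ conjSub g Q :=
  Subgroup.map_sup _ _ _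

lemma conjSub_card (g : G) (P : Subgroup G) : Nat.card (conjSub g P) = Nat.card P :=
  (Nat.card_congr (P.equivMapOfInjective _ (MulAut.conj g⁻¹).injective).toEquiv).symm

lemma conjSub_pg {p : ℕ} (g : G) {P : Subgroup G} (h : IsPGroup p P) : IsPGroup p (conjSub g P) :=
  h.map _

lemma conjSub_fix_of_le [Finite G] {g : G} {P : Subgroup G} (h : conjSub g P ≤ P) : conjSub g P = P :=
  Subgroup.eq_of_le_of_card_ge h (conjSub_card g P).ge

lemma conjSub_self {g : G} {P : Subgroup G} (h : g ∈ P) : conjSub g P = P := by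
  ext x
  rw [mem_conjSub]
  rw [P.mul_mem_cancel_right (P.inv_mem h), P.mul_mem_cancel_left h]

/-- normalizer of a set of subgroups -/
def NS (T : Set (Subgroup G)) : Subgroup G where
  carrier := {x | ∀ P ∈ T, conjSub x P = P}
  one_mem' := fun P _ => conjSub_one P
  mul_mem' := by
    intro a b ha hb P hP
    rw [conjSub_mul, ha P hP, hb P hP]
  inv_mem' := by
    intro a ha P hP
    conv_lhs => rw [← ha P hP]
    exact conjSub_inv_cancel a P

lemma mem_NS {T : Set (Subgroup G)} {x : G} : x ∈ NS T ↔ ∀ P ∈ T, conjSub x P = P := Iff.rfl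

lemma NS_anti {T T' : Set (Subgroup G)} (h : T ⊆ T') : NS T' ≤ NS T :=
  fun _ hx P hP => hx P (h hP)

lemma NS_conj (g : G) (T : Set (Subgroup G)) : NS (conjSub g '' T) = conjSub g (NS T) := by
  ext x
  rw [mem_conjSub, mem_NS, mem_NS]
  constructor
  · intro h P hP
    have := h _ ⟨P, hP, rfl⟩
    rw [conjSub_mul, conjSub_mul, this, conjSub_inv_cancel]
  · rintro h _ ⟨P, hP, rfl⟩
    have := h P hP
    rw [conjSub_mul, conjSub_mul] at this
    rw [← conjSub_cancel_inv g (conjSub x _), this]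

lemma le_normalizer_of {Q L : Subgroup G} (h : ∀ x ∈ Q, conjSub x L = L) :
    Q ≤ Subgroup.normalizer (L : Set G) := by
  intro x hx
  rw [Subgroup.mem_normalizer_iff]
  intro y
  conv_lhs => rw [← h x hx]
  exact mem_conjSub

lemma mem_normalizer_conjSub {x : G} {L : Subgroup G} (h : x ∈ Subgroup.normalizer (L : Set G)) :
    conjSub x L = L := by
  ext y
  rw [mem_conjSub]
  exact (Subgroup.mem_normalizer_iff.1 h y).symm

def MaxP (p : ℕ) (Q N : Subgroup G) : Prop :=
  IsPGroup p Q ∧ Q ≤ N ∧ ∀ R : Subgroup G, IsPGroup p R → R ≤ N → Q ≤ R → R = Q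

def DD (p : ℕ) (T : Set (Subgroup G)) (Q L : Subgroup G) : Prop :=
  MaxP p Q (NS T) ∧ L ∈ T ∧ ¬ Q ≤ L ∧ ∀ P ∈ T, ¬ Q ≤ P → P ≤ L

def Big (p : ℕ) (T : Set (Subgroup G)) : Prop := ∃ Q L, DD p T Q L ∧ Q ⊔ L ∈ T

lemma MaxP.conj {p : ℕ} {Q N : Subgroup G} (h : MaxP p Q N) (g : G) :
    MaxP p (conjSub g Q) (conjSub g N) := by
  refine ⟨conjSub_pg g h.1, conjSub_mono h.2.1, fun R hR hRN hQR => ?_⟩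
  have := h.2.2 (conjSub g⁻¹ R) (conjSub_pg _ hR)
    (by rw [← conjSub_inv_cancel g N]; exact conjSub_mono hRN)
    (by rw [← conjSub_inv_cancel g Q]; exact conjSub_mono hQR)
  rw [← this, conjSub_cancel_inv]

lemma DD.conj {p : ℕ} {T : Set (Subgroup G)} {Q L : Subgroup G} (h : DD p T Q L) (g : G) :
    DD p (conjSub g '' T) (conjSub g Q) (conjSub g L) := by
  refine ⟨by rw [NS_conj]; exact h.1.conj g, ⟨L, h.2.1, rfl⟩, by rw [conjSub_le]; exact h.2.2.1, ?_⟩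
  rintro _ ⟨P, hP, rfl⟩ hQ
  rw [conjSub_le] at hQ ⊢
  exact h.2.2.2 P hP hQ

lemma Big.conj {p : ℕ} {T : Set (Subgroup G)} (h : Big p T) (g : G) : Big p (conjSub g '' T) := by
  obtain ⟨Q, L, h1, h2⟩ := h
  exact ⟨_, _, h1.conj g, by rw [← conjSub_sup]; exact ⟨_, h2, rfl⟩⟩

variable [Finite G] {p : ℕ} [hp : Fact p.Prime]

lemma exists_maxP_ge (N P : Subgroup G) (hP : IsPGroup p P) (hPN : P ≤ N) :
    ∃ Q, MaxP p Q N ∧ P ≤ Q := by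
  obtain ⟨Q, hPQ, hQ⟩ := Set.Finite.exists_le_maximal (s := {R : Subgroup G | IsPGroup p R ∧ R ≤ N})
    (Set.toFinite _) (a := P) ⟨hP, hPN⟩
  refine ⟨Q, ⟨hQ.1.1, hQ.1.2, fun R hR hRN hQR => ?_⟩, hPQ⟩
  exact le_antisymm (hQ.2 ⟨hR, hRN⟩ hQR) hQR

lemma exists_maxP (N : Subgroup G) : ∃ Q, MaxP p Q N :=
  (exists_maxP_ge N ⊥ IsPGroup.of_bot bot_le).imp fun _ h => h.1

lemma maxP_conj_exists {Q Q' N : Subgroup G} (h : MaxP p Q N) (h' : MaxP p Q' N) :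
    ∃ n ∈ N, conjSub n Q = Q' := by
  have mk : ∀ R : Subgroup G, MaxP p R N → ∃ S : Sylow p N, (S : Subgroup N) = R.subgroupOf N := by
    intro R hR
    refine ⟨⟨R.subgroupOf N, hR.1.comap_of_injective _ N.subtype_injective, ?_⟩, rfl⟩
    intro U hU hle
    have h1 := hR.2.2 (U.map N.subtype) (hU.map _) (Subgroup.map_subtype_le U) (by
      have := Subgroup.map_mono (f := N.subtype) hle
      rwa [Subgroup.subgroupOf_map_subtype, inf_eq_left.2 hR.2.1] at this)
    rw [← h1]
    ext x
    simp [Subgroup.mem_subgroupOf]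
  obtain ⟨S, hS⟩ := mk Q h
  obtain ⟨S', hS'⟩ := mk Q' h'
  obtain ⟨n, hn⟩ := MulAction.exists_smul_eq N S S'
  refine ⟨(n⁻¹ : N), (n⁻¹ : N).2, ?_⟩
  have key : conjSub ((n⁻¹ : N) : G) Q ≤ Q' := by
    intro x hx
    rw [mem_conjSub] at hx
    have hxN : x ∈ N := by
      have := h.2.1 hx
      rwa [N.mul_mem_cancel_right (N.inv_mem (n⁻¹ : N).2), N.mul_mem_cancel_left (n⁻¹ : N).2] at this
    have : (⟨x, hxN⟩ : N) ∈ (S' : Subgroup N) := by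
      rw [← hn, Sylow.coe_subgroup_smul, Subgroup.mem_pointwise_smul_iff_inv_smul_mem, hS,
        Subgroup.mem_subgroupOf]
      simpa [MulAut.smul_def] using hx
    rw [hS', Subgroup.mem_subgroupOf] at this
    exact this
  have h3 : MaxP p (conjSub ((n⁻¹ : N) : G) Q) N := by
    have := h.conj ((n⁻¹ : N) : G)
    rwa [conjSub_self (n⁻¹ : N).2] at this
  exact (h3.2.2 Q' h'.1 h'.2.1 key).symm

lemma DD.change {T : Set (Subgroup G)} {Q L Q' : Subgroup G} (h : DD p T Q L)
    (h' : MaxP p Q' (NS T)) : DD p T Q' L ∧ ∃ n ∈ NS T, conjSub n Q = Q' := by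
  obtain ⟨n, hn, rfl⟩ := maxP_conj_exists h.1 h'
  have h1 : ∀ P ∈ T, conjSub n Q ≤ P ↔ Q ≤ P := by
    intro P hP
    conv_lhs => rw [← hn P hP]
    exact conjSub_le
  refine ⟨⟨h', h.2.1, ?_, ?_⟩, n, hn, rfl⟩
  · rw [h1 _ h.2.1]; exact h.2.2.1
  · intro P hP hh
    rw [h1 _ hP] at hh
    exact h.2.2.2 P hP hh

lemma DD.uniq {T : Set (Subgroup G)} {Q L Q' L' : Subgroup G} (h : DD p T Q L)
    (h' : DD p T Q' L') : L = L' ∧ ∃ n ∈ NS T, conjSub n Q = Q' ∧ conjSub n (Q ⊔ L) = Q' ⊔ L' := by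
  obtain ⟨h1, n, hn, h2⟩ := h.change h'.1
  have hL : L = L' := le_antisymm (h'.2.2.2 _ h1.2.1 h1.2.2.1) (h1.2.2.2 _ h'.2.1 h'.2.2.1)
  refine ⟨hL, n, hn, h2, ?_⟩
  rw [conjSub_sup, h2, hn L h.2.1, hL]

lemma Big.mem {T : Set (Subgroup G)} {Q L : Subgroup G} (hb : Big p T) (h : DD p T Q L) :
    Q ⊔ L ∈ T := by
  obtain ⟨Q', L', h1, h2⟩ := hb
  obtain ⟨_, n, hn, _, h3⟩ := h1.uniq h
  rw [hn _ h2] at h3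
  rwa [← h3]

lemma grow {Q R : Subgroup G} (hR : IsPGroup p R) (hQR : Q < R) :
    ∃ R', R' ≤ R ∧ Q < R' ∧ ∀ x ∈ R', conjSub x Q = Q := by
  refine ⟨R ⊓ Subgroup.normalizer (Q : Set G), inf_le_left, ?_,
    fun x hx => mem_normalizer_conjSub hx.2⟩
  have : Finite R := inferInstance
  have := hR.isNilpotent
  have h1 : Q.subgroupOf R < ⊤ := by
    rw [lt_top_iff_ne_top]
    intro h
    exact hQR.not_ge (Subgroup.subgroupOf_eq_top.1 h)
  have h2 := Group.normalizerCondition_of_isNilpotent (Q.subgroupOf R) h1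
  obtain ⟨x, hx, hxQ⟩ := SetLike.exists_of_lt h2
  refine lt_of_le_of_ne (le_inf hQR.le Subgroup.le_normalizer) ?_
  intro he
  apply hxQ
  rw [Subgroup.mem_subgroupOf, he]
  refine ⟨x.2, ?_⟩
  change (x : G) ∈ Subgroup.normalizer (Q : Set G)
  rw [Subgroup.mem_normalizer_iff]
  intro y
  rw [Subgroup.mem_normalizer_iff] at hx
  constructor
  · intro hy
    have := (hx ⟨y, hQR.le hy⟩).1 hy
    exact this
  · intro hy
    have hyR : y ∈ R := by
      have := hQR.le hy
      rwa [R.mul_mem_cancel_right (R.inv_mem x.2), R.mul_mem_cancel_left x.2] at this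
    exact (hx ⟨y, hyR⟩).2 hy

lemma DD.insert {T : Set (Subgroup G)} {Q L : Subgroup G} (h : DD p T Q L) :
    DD p (insert (Q ⊔ L) T) Q L := by
  refine ⟨⟨h.1.1, ?_, fun R hR hRN hQR => h.1.2.2 R hR (hRN.trans (NS_anti (Set.subset_insert _ _))) hQR⟩,
    Set.mem_insert_of_mem _ h.2.1, h.2.2.1, ?_⟩
  · intro x hx P hP
    rcases hP with rfl | hP
    · rw [conjSub_sup, conjSub_self hx, h.1.2.1 hx L h.2.1]
    · exact h.1.2.1 hx P hP
  · intro P hP hh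
    rcases hP with rfl | hP
    · exact absurd le_sup_left hh
    · exact h.2.2.2 P hP hh

lemma DD.of_insert {T : Set (Subgroup G)} {Q L : Subgroup G} (hL : L ∈ T)
    (h : DD p (Insert.insert (Q ⊔ L) T) Q L) : DD p T Q L := by
  refine ⟨⟨h.1.1, h.1.2.1.trans (NS_anti (Set.subset_insert _ _)), ?_⟩, hL, h.2.2.1,
    fun P hP => h.2.2.2 P (Set.mem_insert_of_mem _ hP)⟩
  intro R hR hRN hQR
  by_contra hne
  obtain ⟨R', h1, h2, h3⟩ := grow hR (lt_of_le_of_ne hQR (Ne.symm hne))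
  refine h2.ne' (h.1.2.2 R' (hR.to_le h1) ?_ h2.le)
  intro x hx P hP
  rcases hP with rfl | hP
  · rw [conjSub_sup, h3 x hx, hRN (h1 hx) L hL]
  · exact hRN (h1 hx) P hP

lemma DD.normalizes {T : Set (Subgroup G)} {Q L : Subgroup G} (h : DD p T Q L) :
    Q ≤ Subgroup.normalizer (L : Set G) := le_normalizer_of fun _ hx => h.1.2.1 hx L h.2.1

lemma DD.sup_pg {T : Set (Subgroup G)} {Q L : Subgroup G} (h : DD p T Q L) (hL : IsPGroup p L) :
    IsPGroup p (Q ⊔ L : Subgroup G) :=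
  IsPGroup.to_sup_of_normal_right' h.1.1 hL h.normalizes

lemma DD.lt_sup {T : Set (Subgroup G)} {Q L : Subgroup G} (h : DD p T Q L) : L < Q ⊔ L :=
  lt_of_le_of_ne le_sup_right (fun e => h.2.2.1 (by rw [e]; exact le_sup_left))

/-- If every member of the chain contains `Q`, the least one is `Q` and is maximal or single. -/
lemma all_ge {T : Set (Subgroup G)} {Q P0 : Subgroup G} (hT : ∀ P ∈ T, IsPGroup p P)
    (hQ : MaxP p Q (NS T)) (hall : ∀ P ∈ T, Q ≤ P) (h0 : P0 ∈ T) (hmin : ∀ P ∈ T, P0 ≤ P)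
    (hch : ∀ P ∈ T, ∀ P' ∈ T, P ≤ P' ∨ P' ≤ P) :
    Q = P0 ∧ T = {P0} := by
  have hP0 : P0 ≤ NS T := fun x hx P hP => conjSub_self (hmin P hP hx)
  have h1 : P0 = Q := hQ.2.2 P0 (hT P0 h0) hP0 (hall P0 h0)
  refine ⟨h1.symm, ?_⟩
  by_contra hne
  set T1 := T \ {P0} with hT1
  have hT1n : T1.Nonempty := by
    by_contra h
    rw [Set.not_nonempty_iff_eq_empty, Set.sdiff_eq_empty] at h
    exact hne (Set.Subset.antisymm h (by simpa using h0))
  obtain ⟨P1, hP1⟩ := (Set.toFinite T1).exists_minimal hT1n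
  have hlt : P0 < P1 := lt_of_le_of_ne (hmin _ hP1.1.1) (fun e => hP1.1.2 e.symm)
  obtain ⟨R', h2, h3, h4⟩ := grow (hT P1 hP1.1.1) hlt
  have h5 : R' = Q := by
    refine hQ.2.2 R' ((hT P1 hP1.1.1).to_le h2) ?_ (h1 ▸ h3.le)
    intro x hx P hP
    by_cases hPP : P = P0
    · subst hPP; exact h4 x hx
    · refine conjSub_self ?_
      have : P1 ≤ P := by
        rcases hch P1 hP1.1.1 P hP with h | h
        · exact h
        · exact hP1.2 ⟨hP, hPP⟩ h
      exact this (h2 hx)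
  rw [h5, h1] at h3
  exact lt_irrefl _ h3
end GT
end OSC

namespace OSC
section SL
variable {G : Type} [Group G] [Finite G] {p : ℕ} [hp : Fact p.Prime]

lemma card_lt_of_lt' {P Q : Subgroup G} (h : P < Q) : Nat.card P < Nat.card Q := by
  have : (P : Set G) ⊂ (Q : Set G) := h
  have := Set.ncard_lt_ncard this (Set.toFinite _)
  exact this

lemma DD.diff {T : Set (Subgroup G)} {Q L : Subgroup G} (h : DD p T Q L) (hM : Q ⊔ L ∈ T) :
    DD p (T \ {Q ⊔ L}) Q L := by
  apply DD.of_insert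
  · exact ⟨h.2.1, h.lt_sup.ne⟩
  · rwa [Set.insert_sdiff_singleton, Set.insert_eq_of_mem hM]

lemma DD.diff_not_big {T : Set (Subgroup G)} {Q L : Subgroup G} (h : DD p T Q L) (hM : Q ⊔ L ∈ T) :
    ¬ Big p (T \ {Q ⊔ L}) := fun hb => (hb.mem (h.diff hM)).2 rfl

lemma image_NS {T : Set (Subgroup G)} {n : G} (hn : n ∈ NS T) : conjSub n '' T = T := by
  ext P
  constructor
  · rintro ⟨P, hP, rfl⟩
    rwa [hn P hP]
  · intro hP
    exact ⟨P, hP, hn P hP⟩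

lemma image_conj_mul (g h : G) (T : Set (Subgroup G)) :
    conjSub (g * h) '' T = conjSub h '' (conjSub g '' T) := by
  rw [Set.image_image]
  exact Set.image_congr fun P _ => conjSub_mul g h P

lemma face_inj {T T' : Set (Subgroup G)} {Q L Q' L' : Subgroup G} (h : DD p T Q L) (hM : Q ⊔ L ∈ T)
    (h' : DD p T' Q' L') (hM' : Q' ⊔ L' ∈ T') {g : G}
    (hg : conjSub g '' (T \ {Q ⊔ L}) = T' \ {Q' ⊔ L'}) : ∃ k, conjSub k '' T = T' := by
  have h1 := (h.diff hM).conj g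
  rw [hg] at h1
  obtain ⟨_, n, hn, _, h2⟩ := h1.uniq (h'.diff hM')
  refine ⟨g * n, ?_⟩
  rw [← Set.insert_eq_of_mem hM, ← Set.insert_sdiff_singleton, image_conj_mul, Set.image_insert_eq,
    Set.image_insert_eq, hg, image_NS hn, conjSub_sup, h2, Set.insert_sdiff_singleton,
    Set.insert_eq_of_mem hM']

lemma rank_aux {T F : Set (Subgroup G)} {Q L Q' L' : Subgroup G} (hF : DD p F Q L) (hFb : ¬ Big p F)
    (h : DD p T Q' L') (hFT : F ⊆ T) (hc : (T \ {Q' ⊔ L'}).ncard ≤ F.ncard)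
    (hne : F ≠ T \ {Q' ⊔ L'}) :
    Nat.card Q' < Nat.card Q ∨ (Nat.card Q' = Nat.card Q ∧ Nat.card L < Nat.card L') := by
  have hMF : Q' ⊔ L' ∈ F := by
    by_contra hh
    apply hne
    refine Set.eq_of_subset_of_ncard_le ?_ hc (Set.toFinite _)
    intro P hP
    exact ⟨hFT hP, fun e => hh (by rw [← show P = Q' ⊔ L' from e]; exact hP)⟩
  obtain ⟨Q2, hQ2, hle⟩ := exists_maxP_ge (p := p) (NS F) Q' h.1.1 (h.1.2.1.trans (NS_anti hFT))
  obtain ⟨hD2, n, _, hn⟩ := hF.change hQ2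
  have hc2 : Nat.card Q2 = Nat.card Q := by rw [← hn, conjSub_card]
  rcases eq_or_lt_of_le hle with he | hlt
  · right
    subst he
    refine ⟨hc2, card_lt_of_lt' (lt_of_le_of_ne (h.2.2.2 L (hFT hF.2.1) hD2.2.2.1) ?_)⟩
    rintro rfl
    exact hFb ⟨_, _, hD2, hMF⟩
  · left
    rw [← hc2]
    exact card_lt_of_lt' hlt

lemma exists_DD {T : Set (Subgroup G)} {Q : Subgroup G} (hQ : MaxP p Q (NS T))
    (hch : ∀ P ∈ T, ∀ P' ∈ T, P ≤ P' ∨ P' ≤ P) (hne : ¬ ∀ P ∈ T, Q ≤ P) : ∃ L, DD p T Q L := by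
  push Not at hne
  obtain ⟨P, hP, hQP⟩ := hne
  obtain ⟨L, hL⟩ := (Set.toFinite {P | P ∈ T ∧ ¬ Q ≤ P}).exists_maximal ⟨P, hP, hQP⟩
  refine ⟨L, hQ, hL.1.1, hL.1.2, fun P' hP' hQP' => ?_⟩
  rcases hch P' hP' L hL.1.1 with h | h
  · exact h
  · exact hL.2 ⟨hP', hQP'⟩ h

lemma chain_enum {m : ℕ} {T : Set (Subgroup G)} (hch : ∀ P ∈ T, ∀ P' ∈ T, P ≤ P' ∨ P' ≤ P)
    (hc : T.ncard = m + 1) : ∃ γ : Fin (m + 1) → Subgroup G, StrictMono γ ∧ Set.range γ = T := by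
  classical
  let U : Finset (LinearExtension (Subgroup G)) := (Set.toFinite T).toFinset
  have hU : U.card = m + 1 := by
    rw [← hc]; exact (Set.ncard_eq_toFinset_card T (Set.toFinite T)).symm
  let f := U.orderEmbOfFin hU
  have hfr : Set.range f = T := by
    have : Set.range f = (U : Set (LinearExtension (Subgroup G))) := Finset.range_orderEmbOfFin U hU
    rw [this]
    exact Set.Finite.coe_toFinset _
  have hf : ∀ i, (f i : Subgroup G) ∈ T := fun i => by
    have h1 : f i ∈ Set.range f := ⟨i, rfl⟩
    rw [hfr] at h1
    exact h1
  refine ⟨fun i => f i, ?_, hfr⟩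
  intro i j hij
  have h1 : f i < f j := f.strictMono hij
  have h2 : @LE.le (Subgroup G) _ (f i) (f j) := by
    rcases hch _ (hf i) _ (hf j) with h | h
    · exact h
    · exact absurd ((toLinearExtension (α := Subgroup G)).monotone h) (not_le_of_gt h1)
  exact lt_of_le_of_ne h2 h1.ne

lemma maxP_top_of_NS_self {Q : Subgroup G} (h : MaxP p Q (NS {Q})) : MaxP p Q ⊤ := by
  refine ⟨h.1, le_top, fun R hR _ hQR => ?_⟩
  by_contra hne
  obtain ⟨R', h1, h2, h3⟩ := grow hR (lt_of_le_of_ne hQR (Ne.symm hne))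
  refine h2.ne' (h.2.2 R' (hR.to_le h1) ?_ h2.le)
  rintro x hx P rfl
  exact h3 x hx

lemma card_le_of_maxP {S P : Subgroup G} (hS : MaxP p S ⊤) (hP : IsPGroup p P) :
    Nat.card P ≤ Nat.card S := by
  obtain ⟨Q, hQ, hle⟩ := exists_maxP_ge (p := p) ⊤ P hP le_top
  obtain ⟨n, _, hn⟩ := maxP_conj_exists hS hQ
  rw [← conjSub_card n S, hn]
  exact Subgroup.card_le_of_le hle
end SL
end OSC

namespace OSC
open CategoryTheory Opposite
section X
variable {G : Type} [Group G]

/-- chains in `C` -/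
def Ch (C : Set (Subgroup G)) (n : ℕ) : Type :=
  {γ : Fin (n + 1) → Subgroup G // Monotone γ ∧ ∀ i, γ i ∈ C}

def chSetoid (C : Set (Subgroup G)) (n : ℕ) : Setoid (Ch C n) where
  r γ γ' := ∃ g : G, ∀ i, conjSub g (γ.1 i) = γ'.1 i
  iseqv :=
    { refl := fun γ => ⟨1, fun i => conjSub_one _⟩
      symm := by
        rintro γ γ' ⟨g, hg⟩
        exact ⟨g⁻¹, fun i => by rw [← hg, conjSub_inv_cancel]⟩
      trans := by
        rintro γ γ' γ'' ⟨g, hg⟩ ⟨h, hh⟩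
        exact ⟨g * h, fun i => by rw [conjSub_mul, hg, hh]⟩ }

def Ch.comp {C : Set (Subgroup G)} {n m : ℕ} (γ : Ch C n) (f : Fin (m + 1) →o Fin (n + 1)) : Ch C m :=
  ⟨fun i => γ.1 (f i), fun _ _ h => γ.2.1 (f.monotone h), fun i => γ.2.2 _⟩

/-- the orbit simplicial set -/
def XX (C : Set (Subgroup G)) : SSet.{0} where
  obj n := Quotient (chSetoid C n.unop.len)
  map f := TypeCat.ofHom (Quotient.map' (s₁ := chSetoid C _) (s₂ := chSetoid C _)
    (fun γ => γ.comp f.unop.toOrderHom)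
    (by rintro γ γ' ⟨g, hg⟩; exact ⟨g, fun i => hg _⟩))
  map_id n := by
    ext x
    induction x using Quotient.inductionOn' with | _ γ => rfl
  map_comp f g := by
    ext x
    induction x using Quotient.inductionOn' with | _ γ => rfl

def mkX {C : Set (Subgroup G)} {n : ℕ} (γ : Ch C n) : (XX C).obj (op (SimplexCategory.mk n)) :=
  Quotient.mk (chSetoid C n) γ

variable {C : Set (Subgroup G)}

lemma mkX_surj {n : ℕ} (x : (XX C).obj (op (SimplexCategory.mk n))) : ∃ γ : Ch C n, mkX γ = x :=
  Quotient.exists_rep x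

lemma mkX_eq {n : ℕ} {γ γ' : Ch C n} : mkX γ = mkX γ' ↔ ∃ g : G, ∀ i, conjSub g (γ.1 i) = γ'.1 i :=
  Quotient.eq (r := chSetoid C n)

lemma map_mkX {n m : ℕ} (f : SimplexCategory.mk m ⟶ SimplexCategory.mk n) (γ : Ch C n) :
    (XX C).map f.op (mkX γ) = mkX (γ.comp f.toOrderHom) := rfl

lemma δ_mkX {n : ℕ} (i : Fin (n + 2)) (γ : Ch C (n + 1)) :
    (XX C).δ i (mkX γ) = mkX (γ.comp (Fin.succAboveOrderEmb i).toOrderHom) := rfl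

lemma nondeg_iff {n : ℕ} (γ : Ch C n) : mkX γ ∈ (XX C).nonDegenerate n ↔ StrictMono γ.1 := by
  constructor
  · intro h
    by_contra hs
    apply h
    have hinj : ¬ ∀ (i : Fin n), γ.1 i.castSucc < γ.1 i.succ := fun hh => hs (Fin.strictMono_iff_lt_succ.2 hh)
    push Not at hinj
    obtain ⟨i, hi⟩ := hinj
    have hi : γ.1 i.castSucc = γ.1 i.succ := by
      by_contra hne
      exact hi (lt_of_le_of_ne (γ.2.1 i.castSucc_le_succ) hne)
    obtain _ | n := n
    · exact i.elim0
    have : mkX γ = (XX C).σ i ((XX C).δ i.succ (mkX γ)) := by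
      change mkX γ = mkX ((γ.comp _).comp (SimplexCategory.σ i).toOrderHom)
      congr 1
      apply Subtype.ext
      funext j
      change γ.1 j = γ.1 (i.succ.succAbove (i.predAbove j))
      by_cases hj : j = i.succ
      · subst hj
        rw [Fin.predAbove_succ_self, Fin.succAbove_of_castSucc_lt, hi]
        exact Fin.castSucc_lt_succ
      · rw [Fin.succ_succAbove_predAbove hj]
    rw [this]
    exact SSet.σ_mem_degenerate _ _ _
  · rintro hs ⟨m, hm, f, y, hy⟩
    obtain ⟨γ', rfl⟩ := mkX_surj y
    have hy' : mkX (γ'.comp f.toOrderHom) = mkX γ := hy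
    rw [mkX_eq] at hy'
    obtain ⟨g, hg⟩ := hy'
    obtain ⟨a, b, hab, he⟩ := Fintype.exists_ne_map_eq_of_card_lt f.toOrderHom (by simpa using hm)
    apply hab
    apply hs.injective
    rw [← hg a, ← hg b]
    change conjSub g (γ'.1 (f.toOrderHom a)) = conjSub g (γ'.1 (f.toOrderHom b))
    rw [he]

lemma smk_eq {n m : ℕ} {γ : Ch C n} {γ' : Ch C m} (hγ : StrictMono γ.1) (hγ' : StrictMono γ'.1) :
    SSet.S.mk (mkX γ) = SSet.S.mk (mkX γ') ↔ ∃ g : G, conjSub g '' Set.range γ.1 = Set.range γ'.1 := by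
  constructor
  · intro h
    obtain rfl : n = m := SSet.S.dim_eq_of_mk_eq h
    rw [SSet.S.ext_iff, mkX_eq] at h
    obtain ⟨g, hg⟩ := h
    refine ⟨g, ?_⟩
    rw [← Set.range_comp]
    congr 1
    funext i
    exact hg i
  · rintro ⟨g, hg⟩
    have h1 := congrArg Set.ncard hg
    rw [Set.ncard_image_of_injective _ (conjSub_inj g), ← Nat.card_coe_set_eq, ← Nat.card_coe_set_eq,
      Nat.card_range_of_injective hγ.injective, Nat.card_range_of_injective hγ'.injective] at h1
    simp only [Nat.card_eq_fintype_card, Fintype.card_fin, Nat.add_right_cancel_iff] at h1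
    subst h1
    rw [SSet.S.ext_iff, mkX_eq]
    refine ⟨g, fun i => ?_⟩
    rw [← Set.range_comp, StrictMono.range_inj ((conjSub_strictMono g).comp hγ) hγ'] at hg
    exact congrFun hg i

def constCh (S : Subgroup G) (hS : S ∈ C) (n : ℕ) : Ch C n := ⟨fun _ => S, monotone_const, fun _ => hS⟩

def AA (S : Subgroup G) (hS : S ∈ C) : (XX C).Subcomplex where
  obj n := {x | x = mkX (constCh S hS n.unop.len)}
  map f := by
    rintro x rfl
    rfl

lemma mem_AA {S : Subgroup G} {hS : S ∈ C} {n : ℕ} {γ : Ch C n} :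
    mkX γ ∈ (AA S hS).obj _ ↔ ∃ g : G, ∀ i, conjSub g (γ.1 i) = S := mkX_eq

lemma range_face {n : ℕ} (γ : Ch C (n + 1)) (hs : StrictMono γ.1) (i : Fin (n + 2)) :
    Set.range (γ.comp (Fin.succAboveOrderEmb i).toOrderHom).1 = Set.range γ.1 \ {γ.1 i} := by
  have : (γ.comp (Fin.succAboveOrderEmb i).toOrderHom).1 = γ.1 ∘ i.succAbove := rfl
  rw [this, Set.range_comp, Fin.range_succAbove, Set.image_compl_eq_range_sdiff_image hs.injective,
    Set.image_singleton]

end X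
end OSC

namespace OSC
open CategoryTheory Opposite
section Pr
variable {G : Type} [Group G] [Finite G] (p : ℕ) [hp : Fact p.Prime] (C : Set (Subgroup G))

structure BD (d : ℕ) (x : (XX C).obj (op (SimplexCategory.mk (d + 1)))) where
  γ : Ch C (d + 1)
  strict : StrictMono γ.1
  eq : mkX γ = x
  Q : Subgroup G
  L : Subgroup G
  hD : DD p (Set.range γ.1) Q L
  i : Fin (d + 2)
  hi : γ.1 i = Q ⊔ L

def Idx : Type := Σ d : ℕ, {x : (XX C).obj (op (SimplexCategory.mk (d + 1))) // Nonempty (BD p C d x)}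

variable {p C}

noncomputable def Idx.bd (s : Idx p C) : BD p C s.1 s.2.1 := s.2.2.some

lemma BD.hM {d : ℕ} {x} (b : BD p C d x) : b.Q ⊔ b.L ∈ Set.range b.γ.1 := ⟨b.i, b.hi⟩

def BD.face {d : ℕ} {x} (b : BD p C d x) : Ch C d := b.γ.comp (Fin.succAboveOrderEmb b.i).toOrderHom

lemma BD.face_strict {d : ℕ} {x} (b : BD p C d x) : StrictMono b.face.1 :=
  b.strict.comp (Fin.succAboveOrderEmb b.i).strictMono

lemma BD.face_range {d : ℕ} {x} (b : BD p C d x) :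
    Set.range b.face.1 = Set.range b.γ.1 \ {b.Q ⊔ b.L} := by
  rw [← b.hi]; exact range_face _ b.strict _

lemma BD.face_eq {d : ℕ} {x} (b : BD p C d x) : (XX C).δ b.i x = mkX b.face := by
  have h : (XX C).δ b.i (mkX b.γ) = mkX b.face := rfl
  rw [b.eq] at h
  exact h

lemma Idx.ext_of {s t : Idx p C} (h : SSet.S.mk s.2.1 = SSet.S.mk t.2.1) : s = t := by
  obtain ⟨d, x, hx⟩ := s
  obtain ⟨d', x', hx'⟩ := t
  obtain rfl : d = d' := by
    have := SSet.S.dim_eq_of_mk_eq h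
    dsimp only at this
    omega
  rw [SSet.S.ext_iff] at h
  dsimp only at h
  subst h
  rfl

lemma Idx.ext_range {s t : Idx p C} (h : ∃ g : G, conjSub g '' Set.range s.bd.γ.1 = Set.range t.bd.γ.1) :
    s = t := by
  apply Idx.ext_of
  rw [← s.bd.eq, ← t.bd.eq]
  exact (smk_eq s.bd.strict t.bd.strict).2 h

lemma ch_chain {n : ℕ} (γ : Ch C n) : ∀ P ∈ Set.range γ.1, ∀ P' ∈ Set.range γ.1, P ≤ P' ∨ P' ≤ P := by
  rintro _ ⟨i, rfl⟩ _ ⟨j, rfl⟩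
  rcases le_total i j with h | h
  · exact Or.inl (γ.2.1 h)
  · exact Or.inr (γ.2.1 h)

lemma not_mem_AA_of {S : Subgroup G} {hSC : S ∈ C} (hS : MaxP p S ⊤) {n : ℕ} {γ : Ch C n}
    {L M : Subgroup G} (hL : L ∈ Set.range γ.1) (hLM : L < M) (hM : IsPGroup p M) :
    mkX γ ∉ (AA S hSC).obj _ := by
  rw [mem_AA]
  rintro ⟨g, hg⟩
  obtain ⟨i, rfl⟩ := hL
  have h1 := hg i
  have h2 : Nat.card (γ.1 i) = Nat.card S := by rw [← h1, conjSub_card]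
  have h3 := card_lt_of_lt' hLM
  have h4 := card_le_of_maxP hS hM
  omega

lemma face_unique (s : Idx p C) (i j : Fin (s.1 + 2)) (h : (XX C).δ i s.2.1 = (XX C).δ j s.2.1) :
    i = j := by
  rw [← s.bd.eq, δ_mkX, δ_mkX, mkX_eq] at h
  obtain ⟨g, hg⟩ := h
  have hc : StrictMono fun k => Nat.card (s.bd.γ.1 k) := fun a b hab => card_lt_of_lt' (s.bd.strict hab)
  apply Fin.succAbove_left_injective
  funext k
  apply hc.injective
  have := hg k
  change conjSub g (s.bd.γ.1 (i.succAbove k)) = s.bd.γ.1 (j.succAbove k) at this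
  dsimp only
  rw [← this, conjSub_card]

lemma rank_idx (s t : Idx p C) (hne : s ≠ t) (hd : s.1 = t.1)
    (f : SimplexCategory.mk s.1 ⟶ SimplexCategory.mk (t.1 + 1))
    (hf : (XX C).map f.op t.2.1 = (XX C).δ s.bd.i s.2.1) :
    (toLex (Nat.card G - Nat.card s.bd.Q, Nat.card s.bd.L) : ℕ ×ₗ ℕ) <
      toLex (Nat.card G - Nat.card t.bd.Q, Nat.card t.bd.L) := by
  rw [s.bd.face_eq, ← t.bd.eq, map_mkX] at hf
  obtain ⟨g, hg⟩ := mkX_eq.1 hf.symm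
  have hsub : conjSub g '' Set.range s.bd.face.1 ⊆ Set.range t.bd.γ.1 := by
    rintro _ ⟨_, ⟨i, rfl⟩, rfl⟩
    rw [hg i]
    exact ⟨_, rfl⟩
  have hDF := s.bd.hD.diff s.bd.hM
  have hnb := s.bd.hD.diff_not_big s.bd.hM
  rw [← s.bd.face_range] at hDF hnb
  have hcard : ∀ u : Idx p C, (Set.range u.bd.face.1).ncard = u.1 + 1 := by
    intro u
    rw [← Nat.card_coe_set_eq, Nat.card_range_of_injective u.bd.face_strict.injective]
    simp
  have h1 := rank_aux (hDF.conj g) (fun hb => hnb (by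
      have := hb.conj g⁻¹
      rwa [← image_conj_mul, mul_inv_cancel, image_NS (one_mem (NS _))] at this)) t.bd.hD hsub
    (by
      rw [← t.bd.face_range, hcard, Set.ncard_image_of_injective _ (conjSub_inj g), hcard, hd])
    (by
      intro he
      rw [s.bd.face_range] at he
      exact hne (Idx.ext_range (face_inj s.bd.hD s.bd.hM t.bd.hD t.bd.hM he)))
  rw [conjSub_card, conjSub_card] at h1
  have h2 : Nat.card s.bd.Q ≤ Nat.card G := Subgroup.card_le_card_group _
  rw [Prod.Lex.toLex_lt_toLex]
  dsimp only
  omega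

section
variable (hpg : ∀ P ∈ C, IsPGroup p P)
    (hover : ∀ P ∈ C, ∀ Q : Subgroup G, P ≤ Q → IsPGroup p Q → Q ∈ C)
    {S : Subgroup G} (hSC : S ∈ C) (hS : MaxP p S ⊤)
include hpg hover hS

lemma exists_idx {n : ℕ} (γ : Ch C n) (hs : StrictMono γ.1) (hA : mkX γ ∉ (AA S hSC).obj _) :
    ∃ s : Idx p C, SSet.S.mk (mkX γ) = SSet.S.mk s.2.1 ∨
      SSet.S.mk (mkX γ) = SSet.S.mk ((XX C).δ s.bd.i s.2.1) := by
  have hT : ∀ P ∈ Set.range γ.1, P ∈ C := by rintro _ ⟨i, rfl⟩; exact γ.2.2 i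
  obtain ⟨Q, hQ⟩ := exists_maxP (p := p) (NS (Set.range γ.1))
  by_cases hall : ∀ P ∈ Set.range γ.1, Q ≤ P
  · exfalso
    obtain ⟨h1, h2⟩ := all_ge (fun P hP => hpg P (hT P hP)) hQ hall (P0 := γ.1 0) ⟨0, rfl⟩
      (by rintro _ ⟨i, rfl⟩; exact γ.2.1 (Fin.zero_le i)) (ch_chain γ)
    rw [h2, ← h1] at hQ
    obtain ⟨g, _, hg⟩ := maxP_conj_exists (maxP_top_of_NS_self hQ) hS
    apply hA
    rw [mem_AA]
    refine ⟨g, fun i => ?_⟩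
    have : γ.1 i ∈ Set.range γ.1 := ⟨i, rfl⟩
    rw [h2] at this
    rw [show γ.1 i = γ.1 0 from this, ← h1, hg]
  · obtain ⟨L, hD⟩ := exists_DD hQ (ch_chain γ) hall
    by_cases hM : Q ⊔ L ∈ Set.range γ.1
    · obtain ⟨i, hi⟩ := hM
      obtain ⟨j, hj⟩ := hD.2.1
      obtain _ | d := n
      · exfalso
        have h1 : i = j := by omega
        have := hD.lt_sup
        rw [← hi, ← hj, h1] at this
        exact lt_irrefl _ this
      · exact ⟨⟨d, mkX γ, ⟨⟨γ, hs, rfl, Q, L, hD, i, hi⟩⟩⟩, Or.inl rfl⟩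
    · have hLC : L ∈ C := hT L hD.2.1
      have hMC : Q ⊔ L ∈ C := hover L hLC _ le_sup_right (hD.sup_pg (hpg L hLC))
      have hcmp : ∀ P ∈ Set.range γ.1, P ≤ Q ⊔ L ∨ Q ⊔ L ≤ P := by
        intro P hP
        by_cases hQP : Q ≤ P
        · right
          refine sup_le hQP ?_
          rcases ch_chain γ L hD.2.1 P hP with h | h
          · exact h
          · exact absurd (hQP.trans h) hD.2.2.1
        · exact Or.inl ((hD.2.2.2 P hP hQP).trans le_sup_right)
      have hch' : ∀ P ∈ insert (Q ⊔ L) (Set.range γ.1), ∀ P' ∈ insert (Q ⊔ L) (Set.range γ.1),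
          P ≤ P' ∨ P' ≤ P := by
        rintro P (rfl | hP) P' (rfl | hP')
        · exact Or.inl le_rfl
        · exact (hcmp P' hP').symm
        · exact hcmp P hP
        · exact ch_chain γ P hP P' hP'
      obtain ⟨γ', hs', hr'⟩ := chain_enum (m := n + 1) hch' (by
        rw [Set.ncard_insert_of_notMem hM (Set.toFinite _), ← Nat.card_coe_set_eq,
          Nat.card_range_of_injective hs.injective]
        simp)
      let γ2 : Ch C (n + 1) := ⟨γ', hs'.monotone, fun i => by
        have : γ' i ∈ Set.range γ' := ⟨i, rfl⟩
        rw [hr'] at this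
        rcases this with h | h
        · rw [h]; exact hMC
        · exact hT _ h⟩
      have hD' := hD.insert
      rw [← hr'] at hD'
      have hM' : Q ⊔ L ∈ Set.range γ' := by rw [hr']; exact Set.mem_insert _ _
      obtain ⟨i, hi⟩ := hM'
      let s : Idx p C := ⟨n, mkX γ2, ⟨⟨γ2, hs', rfl, Q, L, hD', i, hi⟩⟩⟩
      refine ⟨s, Or.inr ?_⟩
      rw [s.bd.face_eq]
      refine (smk_eq hs s.bd.face_strict).2 ?_
      obtain ⟨g, hg⟩ := (smk_eq (γ := γ2) hs' s.bd.strict).1 (by rw [s.bd.eq])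
      refine ⟨g, ?_⟩
      have h1 := hD'.conj g
      change conjSub g '' Set.range γ' = _ at hg
      rw [hg] at h1
      obtain ⟨_, m, hm, _, h2⟩ := h1.uniq s.bd.hD
      have h3 : conjSub g (Q ⊔ L) ∈ Set.range s.bd.γ.1 := by
        rw [← hg]; exact ⟨_, ⟨i, hi⟩, rfl⟩
      rw [← conjSub_sup, hm _ h3] at h2
      rw [s.bd.face_range, ← h2, ← hg, hr', ← Set.image_singleton, ← Set.image_sdiff (conjSub_inj g)]
      congr 1
      rw [Set.insert_sdiff_of_mem _ (Set.mem_singleton _), Set.sdiff_singleton_eq_self hM]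

noncomputable def pc : (AA S hSC).PairingCore where
  ι := Idx p C
  dim s := s.1
  simplex s := s.2.1
  index s := s.bd.i
  nonDegenerate₁ s := by
    have := (nondeg_iff s.bd.γ).2 s.bd.strict
    rwa [s.bd.eq] at this
  nonDegenerate₂ s := by
    rw [s.bd.face_eq]
    exact (nondeg_iff _).2 s.bd.face_strict
  notMem₁ s := by
    have := not_mem_AA_of (hSC := hSC) hS s.bd.hD.2.1 s.bd.hD.lt_sup
      (s.bd.hD.sup_pg (hpg _ (by obtain ⟨i, hi⟩ := s.bd.hD.2.1; rw [← hi]; exact s.bd.γ.2.2 i)))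
    rwa [s.bd.eq] at this
  notMem₂ s := by
    rw [s.bd.face_eq]
    refine not_mem_AA_of (hSC := hSC) hS (L := s.bd.L) ?_ s.bd.hD.lt_sup
      (s.bd.hD.sup_pg (hpg _ (by obtain ⟨i, hi⟩ := s.bd.hD.2.1; rw [← hi]; exact s.bd.γ.2.2 i)))
    rw [s.bd.face_range]
    exact (s.bd.hD.diff s.bd.hM).2.1
  injective_type₁' h := Idx.ext_of h
  injective_type₂' {s t} h := by
    rw [s.bd.face_eq, t.bd.face_eq, smk_eq s.bd.face_strict t.bd.face_strict] at h
    obtain ⟨g, hg⟩ := h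
    rw [s.bd.face_range, t.bd.face_range] at hg
    exact Idx.ext_range (face_inj s.bd.hD s.bd.hM t.bd.hD t.bd.hM hg)
  type₁_ne_type₂' s t h := by
    rw [t.bd.face_eq, ← s.bd.eq, smk_eq s.bd.strict t.bd.face_strict] at h
    obtain ⟨g, hg⟩ := h
    have h1 : Big p (Set.range s.bd.γ.1) := ⟨_, _, s.bd.hD, s.bd.hM⟩
    have h2 := h1.conj g
    rw [hg, t.bd.face_range] at h2
    exact t.bd.hD.diff_not_big t.bd.hM h2
  surjective' x := by
    obtain ⟨n, y, hy, hA, rfl⟩ := x.mk_surjective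
    obtain ⟨γ, rfl⟩ := mkX_surj y
    exact exists_idx hpg hover hSC hS γ ((nondeg_iff γ).1 hy) hA

lemma pc_proper : (pc hpg hover hSC hS).IsProper where
  isUniquelyCodimOneFace s := by
    refine (SSet.S.IsUniquelyCodimOneFace.iff _ _).2 (existsUnique_of_exists_of_unique ⟨_, rfl⟩ ?_)
    intro i j hi hj
    exact face_unique s i j (hi.trans hj.symm)

noncomputable def pc_rank : (pc hpg hover hSC hS).WeakRankFunction (ℕ ×ₗ ℕ) where
  rank s := toLex (Nat.card G - Nat.card (Idx.bd s).Q, Nat.card (Idx.bd s).L)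
  lt {s t} h hd := by
    obtain ⟨hne, hlt⟩ := h
    have hle := hlt.le
    rw [SSet.Subcomplex.N.le_iff, SSet.N.le_iff] at hle
    obtain ⟨f, hf⟩ := SSet.S.le_iff.1 hle
    exact rank_idx s t hne hd f hf

theorem AA_anodyne : SSet.anodyneExtensions (AA S hSC).ι := by
  have := pc_proper hpg hover hSC hS
  have := (pc_rank hpg hover hSC hS).isRegular
  exact (pc hpg hover hSC hS).pairing.anodyneExtensions
end
end Pr
end OSC

namespace OSC
open CategoryTheory Opposite
section Z
variable {G : Type} [Group G] (C : Set (Subgroup G))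

abbrev NC : SSet.{0} := nerveFunctor.obj (Cat.of C)

def asF {n : SimplexCategoryᵒᵖ} (F : (NC C).obj n) : Fin (n.unop.len + 1) ⥤ C := F

def toCh {n : SimplexCategoryᵒᵖ} (F : (NC C).obj n) : Ch C n.unop.len :=
  ⟨fun i => ((asF C F).obj i).1, fun _ _ h => leOfHom ((asF C F).map (homOfLE h)),
    fun i => ((asF C F).obj i).2⟩

def ofCh {n : ℕ} (γ : Ch C n) : (NC C).obj (op (SimplexCategory.mk n)) :=
  (show Monotone (fun i => (⟨γ.1 i, γ.2.2 i⟩ : C)) from fun _ _ h => γ.2.1 h).functor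

lemma toCh_ofCh {n : ℕ} (γ : Ch C n) : toCh C (ofCh C γ) = γ := rfl

lemma toCh_inj {n : ℕ} {F F' : (NC C).obj (op (SimplexCategory.mk n))} (h : toCh C F = toCh C F') : F = F' := by
  have : asF C F = asF C F' := by
    refine CategoryTheory.Functor.ext (fun i => ?_) (fun _ _ _ => Subsingleton.elim _ _)
    exact Subtype.ext (congrFun (congrArg Subtype.val h) i)
  exact this

def piX : NC C ⟶ XX C where
  app n := TypeCat.ofHom fun F => mkX (toCh C F)
  naturality n m f := by
    ext F
    rfl

lemma piX_app {n : ℕ} (F : (NC C).obj (op (SimplexCategory.mk n))) : (piX C).app _ F = mkX (toCh C F) := rfl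

variable (hconj : ∀ P ∈ C, ∀ g : G, conjSub g P ∈ C)

abbrev cg (g : G) : NC C ⟶ NC C := nerveFunctor.map (conjFun_monotone C hconj g).functor.toCatHom

lemma toCh_cg (g : G) {n : ℕ} (F : (NC C).obj (op (SimplexCategory.mk n))) (i : Fin (n + 1)) :
    (toCh C ((cg C hconj g).app _ F)).1 i = conjSub g ((toCh C F).1 i) := rfl

lemma cg_piX (g : G) : cg C hconj g ≫ piX C = piX C := by
  ext ⟨⟨n⟩⟩ F
  change mkX (toCh C ((cg C hconj g).app _ F)) = mkX (toCh C F)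
  exact (mkX_eq.2 ⟨g, fun i => (toCh_cg C hconj g F i).symm⟩).symm

lemma piX_factor {Z : SSet.{0}} (v : NC C ⟶ Z) (hv : ∀ g, cg C hconj g ≫ v = v) :
    ∃ u : XX C ⟶ Z, piX C ≫ u = v := by
  have hw : ∀ (n : ℕ) (γ γ' : Ch C n), (chSetoid C n).r γ γ' →
      v.app (op (SimplexCategory.mk n)) (ofCh C γ) = v.app (op (SimplexCategory.mk n)) (ofCh C γ') := by
    rintro n γ γ' ⟨g, hg⟩
    have h1 : (cg C hconj g).app _ (ofCh C γ) = ofCh C γ' := by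
      apply toCh_inj
      rw [toCh_ofCh]
      apply Subtype.ext
      funext i
      rw [toCh_cg, toCh_ofCh, hg]
    have h2 := ConcreteCategory.congr_hom (NatTrans.congr_app (hv g) (op (SimplexCategory.mk n))) (ofCh C γ)
    rw [← h1]
    exact h2.symm
  refine ⟨{ app := fun n => TypeCat.ofHom (Quotient.lift (s := chSetoid C n.unop.len)
              (fun γ => v.app (op (SimplexCategory.mk n.unop.len)) (ofCh C γ)) (hw n.unop.len))
            naturality := ?_ }, ?_⟩
  · rintro ⟨⟨n⟩⟩ ⟨⟨m⟩⟩ f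
    ext x
    obtain ⟨γ, rfl⟩ := mkX_surj x
    exact ConcreteCategory.congr_hom (v.naturality f) (ofCh C γ)
  · ext ⟨⟨n⟩⟩ F
    change v.app _ (ofCh C (toCh C F)) = v.app _ F
    congr 1

theorem main_aux [Finite G] {p : ℕ} [Fact p.Prime] (hne : C.Nonempty) (hpg : ∀ P ∈ C, IsPGroup p P)
    (hover : ∀ P ∈ C, ∀ Q : Subgroup G, P ≤ Q → IsPGroup p Q → Q ∈ C) :
    ContractibleSpace
      (Quot (fun x y : (SSet.toTop.obj (NC C)) => ∃ g : G, (SSet.toTop.map (cg C hconj g)) x = y)) := by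
  obtain ⟨P, hP⟩ := hne
  obtain ⟨S, hS, hPS⟩ := exists_maxP_ge (p := p) ⊤ P (hpg P hP) le_top
  have hSC : S ∈ C := hover P hP S hPS hS.1
  have hA := AA_anodyne hpg hover hSC hS
  set r := (fun x y : (SSet.toTop.obj (NC C)) => ∃ g : G, (SSet.toTop.map (cg C hconj g)) x = y) with hr
  let q : SSet.toTop.obj (NC C) ⟶ TopCat.of (Quot r) := TopCat.ofHom ⟨Quot.mk r, continuous_quot_mk⟩
  have hq : ∀ g, SSet.toTop.map (cg C hconj g) ≫ q = q := by
    intro g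
    ext x
    exact (Quot.sound ⟨g, rfl⟩).symm
  let v := (sSetTopAdj.homEquiv _ _) q
  obtain ⟨u, hu⟩ := piX_factor C hconj v (fun g => by
    rw [← Adjunction.homEquiv_naturality_left, hq g])
  let y0 : Quot r := TopCat.toSSetObj₀Equiv (u.app _ (mkX (constCh S hSC 0)))
  obtain ⟨H, hH⟩ := exists_lift_of_anodyne hA (Quot r) y0 u (by
    ext ⟨⟨n⟩⟩ ⟨x, hx⟩
    obtain rfl : x = mkX (constCh S hSC n) := hx
    have h1 := ConcreteCategory.congr_hom
      (u.naturality ((SimplexCategory.mk n).const (SimplexCategory.mk 0) 0).op) (mkX (constCh S hSC 0))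
    refine Eq.trans h1 ?_
    change (TopCat.toSSet.obj _).map _ _ = (TopCat.toSSet.obj _).map _ _
    rw [Equiv.symm_apply_apply]
    rfl)
  let w := (sSetTopAdj.homEquiv _ _).symm (piX C ≫ H)
  have hw : ∀ g, SSet.toTop.map (cg C hconj g) ≫ w = w := by
    intro g
    rw [← Adjunction.homEquiv_naturality_left_symm, ← Category.assoc, cg_piX]
  have hwe : w ≫ evPP (Quot r) y0 = q := by
    rw [← Adjunction.homEquiv_naturality_right_symm, Category.assoc, hH, hu, Equiv.symm_apply_apply]
  let W : Quot r → PPath (Quot r) y0 := Quot.lift w (by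
    rintro x y ⟨g, rfl⟩
    exact (ConcreteCategory.congr_hom (hw g) x).symm)
  have hWc : Continuous W := continuous_quot_lift _ w.hom.continuous
  have hW1 : ∀ y, (W y).1 1 = y := by
    intro y
    induction y using Quot.ind with | _ x => exact ConcreteCategory.congr_hom hwe x
  rw [contractible_iff_id_nullhomotopic]
  refine ⟨y0, ⟨ContinuousMap.Homotopy.symm
    { toFun := fun z => (W z.2).1 z.1
      continuous_toFun := ?_
      map_zero_left := fun y => (W y).2
      map_one_left := hW1 }⟩⟩
  exact (continuous_subtype_val.comp (hWc.comp continuous_snd)).eval continuous_fst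
end Z
end OSC


/-- Let `G` be a finite group, `p` a prime, and `C` a nonempty collection of
nontrivial `p`-subgroups of `G` closed under `G`-conjugation and under passage
to overgroups that are `p`-groups.  Then the quotient of the geometric
realization of the order complex (nerve) of the poset `C` by the conjugation
action of `G` is contractible.  Here the quotient is the quotient space of the
realization by the relation identifying each point with its image under the
self-map induced (functorially, via the nerve and geometric realization) by
conjugation by each `g ∈ G`. -/
theorem orbit_space_contractible_of_finite (p : ℕ) (hp : p.Prime)
    {G : Type} [Group G] [Finite G]
    (C : Set (Subgroup G)) (hne : C.Nonempty)
    (hnt : ∀ P ∈ C, P ≠ ⊥)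
    (hpg : ∀ P ∈ C, IsPGroup p P)
    (hconj : ∀ P ∈ C, ∀ g : G, conjSub g P ∈ C)
    (hover : ∀ P ∈ C, ∀ Q : Subgroup G, P ≤ Q → IsPGroup p Q → Q ∈ C) :
    ContractibleSpace
      (Quot (fun x y : (SSet.toTop.obj (nerveFunctor.obj (Cat.of ↥C))) =>
        ∃ g : G,
          (SSet.toTop.map (nerveFunctor.map (conjFun_monotone C hconj g).functor.toCatHom)) x = y)) := by
  haveI := Fact.mk hp
  exact OSC.main_aux C hconj hne hpg hover
end

section
/- Let p be a prime and let G be a group that is pseudo finite at p. For a finite p-subgroup P of G, P is a Sylow p-subgroup of its normalizer N_G(P) if and only if P is a Sylow p-subgroup of G. -/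
open scoped Pointwise

theorem conjSub_le_iff_aux {G : Type*} [Group G] (g : G) (Q S : Subgroup G) :
    conjSub g Q ≤ S ↔ ∀ x ∈ Q, g⁻¹ * x * g ∈ S := by
  unfold conjSub
  rw [Subgroup.map_le_iff_le_comap]
  constructor
  · intro h x hx
    simpa using h hx
  · intro h x hx
    simpa using h x hx

theorem card_conjSub_aux {G : Type*} [Group G] (g : G) (Q : Subgroup G) :
    Nat.card (conjSub g Q) = Nat.card Q :=
  Nat.card_congr (Q.equivMapOfInjective _ (MulAut.conj g⁻¹).injective).symm.toEquiv

theorem eq_of_conj_le_aux {G : Type*} [Group G] {g : G} {P Q : Subgroup G} [Finite P] [Finite Q]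
    (hPQ : P ≤ Q) (h : conjSub g Q ≤ P) : P = Q := by
  apply Subgroup.eq_of_le_of_card_ge hPQ
  rw [← card_conjSub_aux g Q]
  exact Subgroup.card_le_of_le h

/-- In a group pseudo finite at `p`, a finite `p`-subgroup `P` is a Sylow
`p`-subgroup of its normalizer `N_G(P)` if and only if it is a Sylow
`p`-subgroup of `G`. -/
theorem isSylowIn_normalizer_iff_isSylow (p : ℕ) (hp : p.Prime) {G : Type*} [Group G]
    (hG : PseudoFiniteAt p G) {P : Subgroup G} (hPfin : Finite P) (hP : IsPGroup p P) :
    IsSylowIn p (Subgroup.normalizer (P : Set G)) P ↔ IsSylow p P := by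
  have : Fact p.Prime := ⟨hp⟩
  constructor
  · rintro ⟨-, -, -, hS⟩
    obtain ⟨S, -, hSf, hSp, hSS⟩ := hG 0 (fun _ => ⊥) (fun _ _ _ => le_rfl)
      (fun _ => inferInstance) (fun _ => IsPGroup.of_bot)
    have htop : chainNorm (fun _ : Fin (0 + 1) => (⊥ : Subgroup G)) = ⊤ := by
      simp only [chainNorm, Subgroup.normalizer_eq_top, iInf_top]
    rw [htop] at hSS
    obtain ⟨g, -, hg⟩ := hSS P le_top hPfin hP
    set T := conjSub g⁻¹ S with hT
    have hTf : Finite T := Finite.of_equiv _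
      (S.equivMapOfInjective _ (MulAut.conj g⁻¹⁻¹).injective).toEquiv
    have hTp : IsPGroup p T := hSp.map _
    have memT : ∀ x, g⁻¹ * x * g ∈ S → x ∈ T := by
      intro x hx
      have := (conjSub_le_iff_aux g⁻¹ S T).1 le_rfl _ hx
      simpa [mul_assoc] using this
    have hPT : P ≤ T := fun x hx => memT x ((conjSub_le_iff_aux _ _ _).1 hg x hx)
    have hN : P = T ⊓ Subgroup.normalizer (P : Set G) := by
      have hf : Finite (T ⊓ Subgroup.normalizer (P : Set G) : Subgroup G) :=
        Finite.of_injective _ (Subgroup.inclusion_injective inf_le_left)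
      obtain ⟨n, -, hn⟩ := hS (T ⊓ Subgroup.normalizer (P : Set G)) inf_le_right hf
        (hTp.to_le inf_le_left)
      exact eq_of_conj_le_aux (le_inf hPT Subgroup.le_normalizer) hn
    have hTP : T ≤ P := by
      have hnil := hTp.isNilpotent
      have hc := normalizerCondition_iff_only_full_group_self_normalizing.1
        (Group.normalizerCondition_of_isNilpotent (G := T)) (P.subgroupOf T) ?_
      · exact Subgroup.subgroupOf_eq_top.1 hc
      · refine le_antisymm ?_ Subgroup.le_normalizer
        intro x hx
        rw [Subgroup.mem_subgroupOf, hN]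
        refine ⟨x.2, ?_⟩
        have : Finite (P : Set G) := hPfin
        apply Subgroup.mem_normalizer_fintype
        intro n hn
        have := (Subgroup.mem_normalizer_iff.1 hx ⟨n, hPT hn⟩).1 (Subgroup.mem_subgroupOf.2 hn)
        simpa [Subgroup.mem_subgroupOf] using this
    refine ⟨hPfin, hP, fun Q hQf hQ => ?_⟩
    obtain ⟨k, -, hk⟩ := hSS Q le_top hQf hQ
    refine ⟨k * g⁻¹, (conjSub_le_iff_aux _ _ _).2 fun x hx => hTP (memT _ ?_)⟩
    simpa [mul_assoc] using (conjSub_le_iff_aux _ _ _).1 hk x hx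
  · rintro ⟨-, -, hS⟩
    refine ⟨Subgroup.le_normalizer, hPfin, hP, fun Q hQN hQf hQ => ⟨1, one_mem _, ?_⟩⟩
    have hf : Finite (P ⊔ Q : Subgroup G) := by
      have h1 : ((P ⊔ Q : Subgroup G) : Set G).Finite := by
        rw [Subgroup.coe_mul_of_right_le_normalizer_left _ _ hQN]
        exact Set.Finite.mul (Set.toFinite _) (Set.toFinite _)
      exact h1
    obtain ⟨g, hg⟩ := hS (P ⊔ Q) hf (hP.to_sup_of_normal_left' hQ hQN)
    have := eq_of_conj_le_aux le_sup_left hg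
    rw [conjSub_le_iff_aux]
    intro x hx
    rw [this]
    simpa using (le_sup_right : Q ≤ P ⊔ Q) hx
end

section
/- Let p be a prime, G a group, and γ = (P_0 < P_1 < ... < P_n) a strictly increasing chain of nontrivial finite p-subgroups of G that is redundant. Let Q be a Sylow p-subgroup of N_G(γ). Then: (a) Q is not contained in P_0 (so there is a maximal index i with 0 ≤ i ≤ n such that Q is not contained in P_i); (b) for this maximal index i, the product QP_i is a subgroup satisfying P_i < QP_i properly, and if i < n then also QP_i < P_{i+1} properly. In particular, inserting QP_i into the chain immediately after P_i yields a strictly increasing chain of nontrivial finite p-subgroups. -/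
open scoped Pointwise

/-- For a redundant chain `γ = (P_0 < ⋯ < P_n)` of nontrivial finite
`p`-subgroups and a Sylow `p`-subgroup `Q` of `N_G(γ)`:
(a) `Q` is not contained in `P_0`; (b) for the maximal index `i` with `Q` not
contained in `P_i`, the product `Q·P_i` is a subgroup (namely `Q ⊔ P_i`) with
`P_i < Q·P_i` properly, and if `i < n` then `Q·P_i < P_{i+1}` properly; in
particular inserting `Q·P_i` after position `i` yields a strictly increasing
chain of nontrivial finite `p`-subgroups. -/
theorem redundant_insert (p : ℕ) (hp : p.Prime) {G : Type*} [Group G] {n : ℕ}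
    (γ : Fin (n + 1) → Subgroup G) (hmono : StrictMono γ)
    (hnt : ∀ i, γ i ≠ ⊥) (hfin : ∀ i, Finite (γ i)) (hpg : ∀ i, IsPGroup p (γ i))
    (hred : IsRedundant p γ)
    (Q : Subgroup G) (hQ : IsSylowIn p (chainNorm γ) Q) :
    ¬ Q ≤ γ 0 ∧
    ∀ i : Fin (n + 1), ¬ Q ≤ γ i → (∀ j : Fin (n + 1), i < j → Q ≤ γ j) →
      ((Q : Set G) * (γ i : Set G) = ((Q ⊔ γ i : Subgroup G) : Set G)) ∧
      γ i < Q ⊔ γ i ∧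
      (∀ hi : (i : ℕ) < n, Q ⊔ γ i < γ ⟨(i : ℕ) + 1, by omega⟩) ∧
      StrictMono (insertChain γ i (Q ⊔ γ i)) ∧
      (∀ j, insertChain γ i (Q ⊔ γ i) j ≠ ⊥) ∧
      (∀ j, Finite (insertChain γ i (Q ⊔ γ i) j)) ∧
      (∀ j, IsPGroup p (insertChain γ i (Q ⊔ γ i) j)) := by
  obtain ⟨hQN, hQf, hQp, hQs⟩ := id hQ
  have hN : ∀ i, chainNorm γ ≤ Subgroup.normalizer (γ i : Set G) := fun i => iInf_le _ i
  constructor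
  · intro h0
    have hP : γ 0 ≤ chainNorm γ := le_iInf fun i =>
      (hmono.monotone (Fin.zero_le i)).trans Subgroup.le_normalizer
    obtain ⟨g, hg, hle⟩ := hQs (γ 0) hP (hfin 0) (hpg 0)
    apply hred Q hQ 0
    have h1 : γ 0 ≤ Q := by
      intro x hx
      have h2 : g * x * g⁻¹ ∈ γ 0 := (Subgroup.mem_normalizer_iff.1 (hN 0 hg) x).1 hx
      have h3 : x ∈ conjSub g (γ 0) := ⟨g * x * g⁻¹, h2, by simp [mul_assoc]⟩
      exact hle h3
    have h4 : γ 0 = Q := le_antisymm h1 h0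
    have h5 : chainPrev γ 0 = ⊥ := rfl
    rw [h5, h4]; simp
  · intro i hi hmax
    have hQi : Q ≤ Subgroup.normalizer (γ i : Set G) := hQN.trans (hN i)
    have hprod : (Q : Set G) * (γ i : Set G) = ((Q ⊔ γ i : Subgroup G) : Set G) :=
      (Subgroup.coe_mul_of_left_le_normalizer_right Q (γ i) hQi).symm
    have hlt : γ i < Q ⊔ γ i := right_lt_sup.2 hi
    have hlt2 : ∀ hi : (i : ℕ) < n, Q ⊔ γ i < γ ⟨(i : ℕ) + 1, by omega⟩ := by
      intro hin
      have hii : i < (⟨(i : ℕ) + 1, by omega⟩ : Fin (n + 1)) := by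
        rw [Fin.lt_def]; simp
      refine lt_of_le_of_ne (sup_le (hmax _ hii) (hmono hii).le) ?_
      intro he
      apply hred Q hQ ⟨(i : ℕ) + 1, by omega⟩
      have h5 : chainPrev γ ⟨(i : ℕ) + 1, by omega⟩ = γ i := rfl
      rw [h5, hprod, he]
    have hf : Finite (Q ⊔ γ i : Subgroup G) := by
      have := hfin i
      have h : ((Q : Set G) * (γ i : Set G)).Finite :=
        Set.Finite.mul (Set.toFinite _) (Set.toFinite _)
      rw [hprod] at h
      exact h.to_subtype
    have hpp : IsPGroup p (Q ⊔ γ i : Subgroup G) :=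
      IsPGroup.to_sup_of_normal_right' hQp (hpg i) hQi
    have key : ∀ (C : Subgroup G → Prop), (∀ j, C (γ j)) → C (Q ⊔ γ i) →
        ∀ j, C (insertChain γ i (Q ⊔ γ i) j) := by
      intro C h1 h2 j
      unfold insertChain
      split_ifs
      · exact h1 _
      · exact h2
      · exact h1 _
    refine ⟨hprod, hlt, hlt2, ?_, key (· ≠ ⊥) hnt (fun h => ?_),
      key (fun H => Finite H) hfin hf, key (fun H => IsPGroup p H) hpg hpp⟩
    · rw [Fin.strictMono_iff_lt_succ]
      intro j
      have hj := j.isLt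
      have hi' := i.isLt
      unfold insertChain
      simp only [Fin.val_castSucc, Fin.val_succ]
      rcases lt_trichotomy (j : ℕ) (i : ℕ) with h | h | h
      · rw [dif_pos (by omega), dif_pos (by omega)]
        apply hmono
        rw [Fin.lt_def]; simp
      · rw [dif_pos (by omega), dif_neg (by omega), dif_pos (by omega)]
        have : (⟨(j : ℕ), by omega⟩ : Fin (n + 1)) = i := Fin.ext h
        rw [this]; exact hlt
      · by_cases h' : (j : ℕ) = i + 1
        · rw [dif_neg (by omega), dif_pos h', dif_neg (by omega), dif_neg (by omega)]
          convert hlt2 (by omega) using 3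
          omega
        · rw [dif_neg (by omega), dif_neg h', dif_neg (by omega), dif_neg (by omega)]
          apply hmono
          rw [Fin.lt_def]
          simp only
          omega
    · rw [h] at hlt
      exact not_lt_bot hlt
end

section
/- Let p be a prime, G a group, and γ = (P_0 < P_1 < ... < P_n) a redundant chain of nontrivial finite p-subgroups of G. Let Q and R be Sylow p-subgroups of N_G(γ). Then: (a) for every index 0 ≤ i ≤ n, Q ≤ P_i if and only if R ≤ P_i; in particular the maximal index i with Q not contained in P_i equals the maximal index i' with R not contained in P_{i'}; (b) there exists g ∈ N_G(γ) such that g⁻¹Qg = R and g⁻¹(QP_j)g = RP_j for every 0 ≤ j ≤ n; in particular the chain obtained from γ by inserting QP_i after position i and the chain obtained by inserting RP_i after position i are conjugate in G. -/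
open scoped Pointwise

theorem conjSub_eq_of_mem_chainNorm {G : Type*} [Group G] {n : ℕ}
    (γ : Fin (n + 1) → Subgroup G) {g : G} (hg : g ∈ chainNorm γ) (i : Fin (n + 1)) :
    conjSub g (γ i) = γ i := by
  have h : g⁻¹ ∈ Subgroup.normalizer (γ i : Set G) :=
    inv_mem ((Subgroup.mem_iInf.mp hg) i)
  ext x
  have h2 := (Subgroup.mem_normalizer_iff.mp (inv_mem h)) x
  simp only [conjSub, Subgroup.mem_map]
  constructor
  · rintro ⟨y, hy, rfl⟩
    have := (Subgroup.mem_normalizer_iff.mp h y).mp hy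
    simpa using this
  · intro hx
    refine ⟨g * x * g⁻¹, by simpa using h2.mp hx, ?_⟩
    simp [mul_assoc]

theorem card_conjSub {G : Type*} [Group G] (g : G) (P : Subgroup G) :
    Nat.card (conjSub g P) = Nat.card P :=
  (Nat.card_congr (P.equivMapOfInjective _ (MulAut.conj g⁻¹).injective).toEquiv).symm

/-- For a redundant chain `γ` of nontrivial finite `p`-subgroups and two Sylow
`p`-subgroups `Q`, `R` of `N_G(γ)`: (a) `Q ≤ P_i` iff `R ≤ P_i` for every `i`
(so the maximal indices at which `Q` resp. `R` are not contained agree); and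
(b) there is `g ∈ N_G(γ)` with `g⁻¹Qg = R` and `g⁻¹(Q·P_j)g = R·P_j` for all
`j`; in particular the chains obtained by inserting `Q·P_i`, resp. `R·P_i`,
after the maximal position `i` are conjugate in `G`. -/
theorem redundant_sylow_independence (p : ℕ) (hp : p.Prime) {G : Type*} [Group G] {n : ℕ}
    (γ : Fin (n + 1) → Subgroup G) (hmono : StrictMono γ)
    (hnt : ∀ i, γ i ≠ ⊥) (hfin : ∀ i, Finite (γ i)) (hpg : ∀ i, IsPGroup p (γ i))
    (hred : IsRedundant p γ)
    (Q R : Subgroup G) (hQ : IsSylowIn p (chainNorm γ) Q)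
    (hR : IsSylowIn p (chainNorm γ) R) :
    (∀ i : Fin (n + 1), Q ≤ γ i ↔ R ≤ γ i) ∧
    ∃ g ∈ chainNorm γ, conjSub g Q = R ∧
      (∀ j : Fin (n + 1), conjSub g (Q ⊔ γ j) = R ⊔ γ j) ∧
      (∀ i : Fin (n + 1), ¬ Q ≤ γ i → (∀ j : Fin (n + 1), i < j → Q ≤ γ j) →
        ∀ j : Fin (n + 2),
          conjSub g (insertChain γ i (Q ⊔ γ i) j) = insertChain γ i (R ⊔ γ i) j) := by
  obtain ⟨hQN, hQf, hQp, hQc⟩ := hQ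
  obtain ⟨hRN, hRf, hRp, hRc⟩ := hR
  obtain ⟨g, hg, hgQ⟩ := hRc Q hQN hQf hQp
  obtain ⟨k, hk, hkR⟩ := hQc R hRN hRf hRp
  have hc : Nat.card R ≤ Nat.card (conjSub g Q) := by
    rw [card_conjSub, ← card_conjSub k R]
    exact Subgroup.card_le_of_le hkR
  have hQR : conjSub g Q = R := Subgroup.eq_of_le_of_card_ge hgQ hc
  have hγ := conjSub_eq_of_mem_chainNorm γ hg
  have hsup : ∀ j, conjSub g (Q ⊔ γ j) = R ⊔ γ j := fun j => by
    rw [← hQR]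
    nth_rewrite 2 [← hγ j]
    exact Subgroup.map_sup _ _ _
  refine ⟨fun i => ?_, g, hg, hQR, hsup, fun i _ _ j => ?_⟩
  · rw [← hQR]
    nth_rewrite 2 [← hγ i]
    exact (Subgroup.map_le_map_iff_of_injective (MulAut.conj g⁻¹).injective).symm
  · unfold insertChain
    split_ifs
    · exact hγ _
    · exact hsup _
    · exact hγ _
end

section
/- Let p be a prime and G a group that is pseudo finite at p. Let τ = (P_0 < P_1 < ... < P_n) be a redundant chain of nontrivial finite p-subgroups of G, let Q be a Sylow p-subgroup of N_G(τ), let i be the maximal index with Q not contained in P_i, and let σ be the strictly increasing chain obtained from τ by inserting QP_i immediately after P_i (appending QP_n at the end if i = n). Then Q is a Sylow p-subgroup of N_G(σ), and consequently σ is a collapsible chain. -/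
open scoped Pointwise

theorem finite_sup_aux {G : Type*} [Group G] (A B : Subgroup G) (hA : Finite A) (hB : Finite B)
    (h : A ≤ Subgroup.normalizer (B : Set G)) : Finite (A ⊔ B : Subgroup G) := by
  have e : ((A ⊔ B : Subgroup G) : Set G) = (A : Set G) * (B : Set G) :=
    Subgroup.coe_mul_of_left_le_normalizer_right A B h
  have hf : (((A ⊔ B : Subgroup G) : Set G)).Finite := by
    rw [e]
    exact Set.Finite.mul (Set.toFinite _) (Set.toFinite _)
  exact hf.to_subtype

/-- In a group pseudo finite at `p`, if `τ` is a redundant chain of nontrivial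
finite `p`-subgroups, `Q` is a Sylow `p`-subgroup of `N_G(τ)`, `i` is the
maximal index with `Q` not contained in `P_i`, and `σ` is obtained from `τ` by
inserting `Q·P_i` immediately after position `i`, then `Q` is a Sylow
`p`-subgroup of `N_G(σ)`; consequently `σ` is collapsible (not redundant, of
dimension at least `1`). -/
theorem insert_of_redundant_is_collapsible (p : ℕ) (hp : p.Prime) {G : Type*} [Group G]
    (hG : PseudoFiniteAt p G) {n : ℕ}
    (τ : Fin (n + 1) → Subgroup G) (hmono : StrictMono τ)
    (hnt : ∀ i, τ i ≠ ⊥) (hfin : ∀ i, Finite (τ i)) (hpg : ∀ i, IsPGroup p (τ i))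
    (hred : IsRedundant p τ)
    (Q : Subgroup G) (hQ : IsSylowIn p (chainNorm τ) Q)
    (i : Fin (n + 1)) (hi : ¬ Q ≤ τ i) (himax : ∀ j : Fin (n + 1), i < j → Q ≤ τ j) :
    IsSylowIn p (chainNorm (insertChain τ i (Q ⊔ τ i))) Q ∧
    ¬ IsRedundant p (insertChain τ i (Q ⊔ τ i)) := by
  haveI : Fact p.Prime := ⟨hp⟩
  obtain ⟨hQN, hQf, hQp, hQS⟩ := hQ
  have hQi : Q ≤ Subgroup.normalizer (τ i : Set G) := hQN.trans (iInf_le _ i)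
  have hKf : Finite (Q ⊔ τ i : Subgroup G) := finite_sup_aux _ _ hQf (hfin i) hQi
  have hKp : IsPGroup p (Q ⊔ τ i : Subgroup G) := hQp.to_sup_of_normal_right' (hpg i) hQi
  have hσi : insertChain τ i (Q ⊔ τ i) ⟨i + 1, by omega⟩ = Q ⊔ τ i := by
    simp [insertChain]
  have hNK : chainNorm (insertChain τ i (Q ⊔ τ i)) ≤
      Subgroup.normalizer ((Q ⊔ τ i : Subgroup G) : Set G) := by
    have := iInf_le (fun j => Subgroup.normalizer
      (insertChain τ i (Q ⊔ τ i) j : Set G)) ⟨i + 1, by omega⟩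
    simp only [hσi] at this
    exact this
  have hNτ : chainNorm (insertChain τ i (Q ⊔ τ i)) ≤ chainNorm τ := by
    refine le_iInf fun j => ?_
    by_cases hj : (j : ℕ) ≤ i
    · have e : insertChain τ i (Q ⊔ τ i) ⟨j, by omega⟩ = τ j := by
        simp [insertChain, hj]
      have := iInf_le (fun j => Subgroup.normalizer
        (insertChain τ i (Q ⊔ τ i) j : Set G)) ⟨j, by omega⟩
      simp only [e] at this
      exact this
    · have e : insertChain τ i (Q ⊔ τ i) ⟨j + 1, by omega⟩ = τ j := by
        have h1 : ¬ ((j : ℕ) + 1 ≤ i) := by omega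
        have h2 : ¬ ((j : ℕ) + 1 = i + 1) := by omega
        simp only [insertChain, h1, h2, dif_neg, not_false_eq_true]
        rfl
      have := iInf_le (fun j => Subgroup.normalizer
        (insertChain τ i (Q ⊔ τ i) j : Set G)) ⟨j + 1, by omega⟩
      simp only [e] at this
      exact this
  have hQσ : Q ≤ chainNorm (insertChain τ i (Q ⊔ τ i)) := by
    refine le_iInf fun j => ?_
    unfold insertChain
    split_ifs
    · exact hQN.trans (iInf_le _ _)
    · exact le_sup_left.trans Subgroup.le_normalizer
    · exact hQN.trans (iInf_le _ _)
  have hSyl : IsSylowIn p (chainNorm (insertChain τ i (Q ⊔ τ i))) Q := by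
    refine ⟨hQσ, hQf, hQp, fun R hR hRf hRp => ⟨1, one_mem _, ?_⟩⟩
    have hRK := hR.trans hNK
    have hf := finite_sup_aux _ _ hRf hKf hRK
    have hpp : IsPGroup p (R ⊔ (Q ⊔ τ i) : Subgroup G) := hRp.to_sup_of_normal_right' hKp hRK
    obtain ⟨H, hH⟩ : ∃ H : Subgroup G, H = (R ⊔ (Q ⊔ τ i)) ⊓ chainNorm τ := ⟨_, rfl⟩
    have hHf : Finite H := by
      subst hH
      exact Set.Finite.subset (Set.toFinite ((R ⊔ (Q ⊔ τ i) : Subgroup G) : Set G))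
        (fun x hx => hx.1)
    have hHp : IsPGroup p H := by
      subst hH
      exact hpp.to_le inf_le_left
    have hQH : Q ≤ H := by
      subst hH
      exact le_inf (le_sup_left.trans le_sup_right) hQN
    have hRH : R ≤ H := by
      subst hH
      exact le_inf le_sup_left (hR.trans hNτ)
    obtain ⟨g, -, hg⟩ := hQS H (hH ▸ inf_le_right) hHf hHp
    have hc : Nat.card H ≤ Nat.card Q := by
      have h1 : Nat.card (conjSub g H) = Nat.card H :=
        Subgroup.card_map_of_injective (MulAut.conj g⁻¹).injective
      rw [← h1]
      exact Subgroup.card_le_of_le hg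
    have hEq : Q = H := Subgroup.eq_of_le_of_card_ge hQH hc
    have h1 : conjSub 1 R = R := by
      ext x
      simp [conjSub]
    rw [h1, hEq]
    exact hRH
  refine ⟨hSyl, fun hr => hr Q hSyl ⟨i + 1, by omega⟩ ?_⟩
  have hprev : chainPrev (insertChain τ i (Q ⊔ τ i)) ⟨i + 1, by omega⟩ = τ i := by
    simp [chainPrev, insertChain]
  rw [hσi, hprev]
  exact Subgroup.coe_mul_of_left_le_normalizer_right Q (τ i) hQi
end
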